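/- arXiv:1405.6105 — 5 statements merged into one kernel-verified Lean document; each statement's English description precedes it below -/
import Mathlib

section
/- Let k be a field and let R be an affine k-domain (an integral domain that is a finitely generated k-algebra). Suppose there exists a field K containing k such that R is (isomorphic as a k-algebra to) a k-subalgebra of the polynomial ring K[s] in one variable over K, with R ⊄ K. Then there exist a field F and an injective k-algebra homomorphism φ : R → F[t] into a polynomial ring in one variable over F such that F[t] is algebraic over φ(R), i.e., every element of F[t] satisfies a nonzero polynomial with coefficients in φ(R). -/
open Polynomial

universe u v w

/-!
Let `A` be a finitely generated `k`-domain with `R ⊆ A[X]`; for instance, `A ⊆ K` generated by the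
coefficients of generators of `R`. If `f ∈ R` is not constant, then `X` is a root of `f(T) - f(X)`,
so `A[X]` is algebraic over `R[A]` and has a transcendence basis `c` over `R` consisting of
constants. After inverting some `d ≠ 0` in `R[c]`, the ring `A[X]` is integral over `R[c]`. Let `Ω`
be an algebraically closed field containing `R`. Since `R[c]` is a polynomial ring over `R`, we can
send `c` to elements of `Ω` that are algebraic over `k` without killing `d`, and this specialization
extends to an `R`-algebra homomorphism `h : A[X] → Ω`. Applying `h` to the coefficients only gives
`Φ : A[X] → F[X]`, where `F` is the field generated over `k` by `h(A)`. It is injective on `R`, as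
substituting `h(X)` for `X` turns `Φ` into `h`, which fixes `R`. It sends `c` to constants that are
algebraic over `k`, so `Φ(A[X])` is algebraic over `Φ(R)`, and hence so is `F[X]`.
-/

/-- The localization `B[1/d]` is integral over `D[1/d]`, phrased without localizations: some
multiple `d ^ n • b` of each `b : B` is integral over `D`. Homomorphisms from `D` to algebraically
closed fields then extend to `B` as soon as they do not vanish at `d`. -/
def IsIntegralAway {D : Type*} (B : Type*) [CommRing D] [CommRing B] [Algebra D B] (d : D) : Prop :=
  ∀ b : B, ∃ n : ℕ, IsIntegral D (d ^ n • b)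

open Pointwise in
theorem exists_isIntegralAway (D B : Type*) [CommRing D] [IsDomain D] [CommRing B] [Algebra D B]
    [Algebra.FiniteType D B] [Algebra.IsAlgebraic D B] :
    ∃ d : D, d ≠ 0 ∧ IsIntegralAway B d := by
  obtain ⟨s, hs⟩ := (Algebra.FiniteType.out : (⊤ : Subalgebra D B).FG)
  obtain ⟨d, hd, hds⟩ := Algebra.IsAlgebraic.exists_integral_multiples D s
  refine ⟨d, hd, fun b ↦ ?_⟩
  have hsub : d • (s : Set B) ⊆ (integralClosure D B : Set B) := by
    rintro _ ⟨z, hz, rfl⟩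
    exact hds z hz
  obtain ⟨n, hn⟩ := Algebra.pow_smul_mem_of_smul_subset_of_mem_adjoin d s (integralClosure D B)
    hsub (hs ▸ Algebra.mem_top : b ∈ Algebra.adjoin D s) (Subalgebra.algebraMap_mem _ d)
  exact ⟨n, hn n le_rfl⟩

theorem exists_ringHom_comp_algebraMap_eq_of_isIntegral {D B Ω : Type*} [CommRing D] [CommRing B]
    [Algebra D B] [FaithfulSMul D B] [Algebra.IsIntegral D B] [Field Ω] [IsAlgClosed Ω]
    (f : D →+* Ω) : ∃ g : B →+* Ω, g.comp (algebraMap D B) = f := by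
  let P := RingHom.ker f
  have : P.IsPrime := RingHom.ker_isPrime f
  obtain ⟨Q, _, _⟩ := Ideal.nonempty_primesOver (S := B) P
  let _ : Algebra (D ⧸ P) Ω := (RingHom.kerLift f).toAlgebra
  have : FaithfulSMul (D ⧸ P) Ω :=
    (faithfulSMul_iff_algebraMap_injective _ _).2 (RingHom.kerLift_injective f)
  have : Module.IsTorsionFree (D ⧸ P) (B ⧸ Q) :=
    Module.isTorsionFree_iff_faithfulSMul.2 inferInstance
  have : Algebra.IsAlgebraic (D ⧸ P) (B ⧸ Q) := inferInstance
  let g : B ⧸ Q →ₐ[D ⧸ P] Ω := IsAlgClosed.lift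
  refine ⟨(g : B ⧸ Q →+* Ω).comp (Ideal.Quotient.mk Q), RingHom.ext fun x ↦ ?_⟩
  exact g.commutes (Ideal.Quotient.mk P x)

section IntegralAway

variable {D B : Type*} [CommRing D] [CommRing B] [Algebra D B]

theorem awayMap_comp_algebraMap (d : D) :
    (Localization.awayMap (algebraMap D B) d).comp (algebraMap D (Localization.Away d)) =
      (algebraMap B (Localization.Away (algebraMap D B d))).comp (algebraMap D B) :=
  IsLocalization.map_comp _

theorem IsIntegralAway.isIntegral_awayMap {d : D} (hd : IsIntegralAway B d) :
    (Localization.awayMap (algebraMap D B) d).IsIntegral := by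
  let Dd := Localization.Away d
  let Bd := Localization.Away (algebraMap D B d)
  let _ : Algebra Dd Bd := (Localization.awayMap (algebraMap D B) d).toAlgebra
  have hcomp :
      (algebraMap Dd Bd).comp (algebraMap D Dd) = (algebraMap B Bd).comp (algebraMap D B) :=
    awayMap_comp_algebraMap d
  have hd' : algebraMap Dd Bd (algebraMap D Dd d) = algebraMap B Bd (algebraMap D B d) :=
    congr($hcomp d)
  intro x
  obtain ⟨m, b, hb⟩ := IsLocalization.Away.surj (S := Bd) (algebraMap D B d) x
  obtain ⟨n, hn⟩ := hd b
  have hmul : IsIntegral Dd (algebraMap D Dd d ^ (n + m) • x) := by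
    convert hn.map_of_comp_eq (algebraMap D Dd) (algebraMap B Bd) hcomp using 1
    rw [Algebra.smul_def, Algebra.smul_def, map_mul, ← hb, map_pow, map_pow, map_pow, hd', pow_add]
    ring
  have := hmul.smul (IsLocalization.Away.invSelf (S := Dd) d ^ (n + m))
  rwa [smul_smul, ← mul_pow, mul_comm, IsLocalization.Away.mul_invSelf, one_pow, one_smul] at this

theorem IsIntegralAway.exists_ringHom_comp_algebraMap_eq {Ω : Type*} [FaithfulSMul D B] [Field Ω]
    [IsAlgClosed Ω] {d : D} (hd : IsIntegralAway B d) (f : D →+* Ω) (hfd : f d ≠ 0) :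
    ∃ g : B →+* Ω, g.comp (algebraMap D B) = f := by
  let Dd := Localization.Away d
  let Bd := Localization.Away (algebraMap D B d)
  let _ : Algebra Dd Bd := (Localization.awayMap (algebraMap D B) d).toAlgebra
  have : FaithfulSMul Dd Bd := (faithfulSMul_iff_algebraMap_injective _ _).2
    (IsLocalization.map_injective_of_injective _ _ _ (FaithfulSMul.algebraMap_injective D B))
  have : Algebra.IsIntegral Dd Bd := ⟨hd.isIntegral_awayMap⟩
  obtain ⟨g, hg⟩ := exists_ringHom_comp_algebraMap_eq_of_isIntegral (B := Bd)
    (IsLocalization.Away.lift (S := Dd) d (isUnit_iff_ne_zero.2 hfd))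
  refine ⟨g.comp (algebraMap B Bd), ?_⟩
  calc (g.comp (algebraMap B Bd)).comp (algebraMap D B)
      = (g.comp (algebraMap Dd Bd)).comp (algebraMap D Dd) := by
        rw [RingHom.comp_assoc, RingHom.comp_assoc]
        exact congrArg g.comp (awayMap_comp_algebraMap d).symm
    _ = f := by rw [hg]; exact IsLocalization.Away.lift_comp ..

theorem IsIntegralAway.isAlgebraic_map {R T : Type*} [CommRing R] [IsDomain R] [CommRing T]
    [IsDomain T] [Algebra R T] {d : D} (hd : IsIntegralAway B d) (Φ : B →+* T)
    (hΦd : Φ (algebraMap D B d) ≠ 0) (hΦ : ∀ x : D, IsAlgebraic R (Φ (algebraMap D B x))) (b : B) :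
    IsAlgebraic R (Φ b) := by
  let M := Subalgebra.algebraicClosure R T
  let j : D →+* M := (Φ.comp (algebraMap D B)).codRestrict M hΦ
  obtain ⟨n, hn⟩ := hd b
  have hint : IsIntegral M (j d ^ n • Φ b) := by
    have := hn.map_of_comp_eq j Φ rfl
    rwa [Algebra.smul_def, map_mul, map_pow, map_pow] at this
  have hjd : j d ^ n ∈ nonZeroDivisors M :=
    pow_mem (mem_nonZeroDivisors_of_ne_zero fun h ↦ hΦd (congrArg Subtype.val h)) n
  exact (hint.isAlgebraic.of_smul hjd).restrictScalars R

end IntegralAway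

theorem exists_eval_ne_zero_of_infinite {σ Ω : Type*} [CommRing Ω] [IsDomain Ω] {Z : Set Ω}
    (hZ : Z.Infinite) {p : MvPolynomial σ Ω} (hp : p ≠ 0) :
    ∃ x : σ → Ω, (∀ i, x i ∈ Z) ∧ MvPolynomial.eval x p ≠ 0 := by
  by_contra! h
  exact hp (MvPolynomial.funext_set (fun _ ↦ Z) (fun _ ↦ hZ) fun x hx ↦ by
    rw [h x fun i ↦ hx i trivial, map_zero])

theorem infinite_setOf_isAlgebraic (k Ω : Type*) [Field k] [Field Ω] [IsAlgClosed Ω]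
    [Algebra k Ω] : {z : Ω | IsAlgebraic k z}.Infinite := by
  have : IsAlgClosed (algebraicClosure k Ω) := IsAlgClosure.isAlgClosed k
  have : (algebraicClosure k Ω : Set Ω).Infinite := Set.infinite_coe_iff.1 inferInstance
  exact this.mono fun z hz ↦ mem_algebraicClosure_iff.1 hz

theorem mem_of_forall_C_mem_of_X_mem {A σ : Type*} [CommSemiring A] [SetLike σ A[X]]
    [SubsemiringClass σ A[X]] {M : σ} (hC : ∀ a : A, C a ∈ M) (hX : X ∈ M) (q : A[X]) : q ∈ M := by
  induction q using Polynomial.induction_on' with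
  | add p q hp hq => exact add_mem hp hq
  | monomial n a =>
    rw [← C_mul_X_pow_eq_monomial]
    exact mul_mem (hC a) (pow_mem hX n)

theorem isAlgebraic_adjoin_range_C {R A : Type*} [CommRing R] [CommRing A] [IsDomain A]
    [Algebra R A[X]] {r : R} (hr : (algebraMap R A[X] r).natDegree ≠ 0) :
    Algebra.IsAlgebraic (Algebra.adjoin R (Set.range (C : A → A[X]))) A[X] := by
  let W := Algebra.adjoin R (Set.range (C : A → A[X]))
  have hCW (a : A) : C a ∈ W := Algebra.subset_adjoin ⟨a, rfl⟩
  let j : A →+* W := C.codRestrict W hCW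
  have hj : Function.Injective j := fun a b hab ↦ C_injective (congrArg Subtype.val hab)
  have hX : IsAlgebraic W (X : A[X]) := by
    -- `X` is a root of `f(T) - f(X)`, where `f` is the image of `r`.
    refine ⟨(algebraMap R A[X] r).map j - C (algebraMap R W r), fun h ↦ hr ?_, ?_⟩
    · rw [← natDegree_map_eq_of_injective hj, sub_eq_zero.1 h, natDegree_C]
    · rw [map_sub, aeval_C, aeval_def, eval₂_map, sub_eq_zero]
      exact eval₂_C_X
  exact ⟨mem_of_forall_C_mem_of_X_mem (M := Subalgebra.algebraicClosure W A[X])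
    (fun a ↦ isAlgebraic_algebraMap (⟨C a, hCW a⟩ : W)) hX⟩

theorem exists_algHom_mem_of_isTranscendenceBasis {R B Ω ι : Type*} [CommRing R] [IsDomain R]
    [CommRing B] [IsDomain B] [Algebra R B] [Algebra.FiniteType R B] [Field Ω] [IsAlgClosed Ω]
    [Algebra R Ω] [FaithfulSMul R Ω] {x : ι → B} (hx : IsTranscendenceBasis R x) {Z : Set Ω}
    (hZ : Z.Infinite) :
    ∃ (d : Algebra.adjoin R (Set.range x)) (h : B →ₐ[R] Ω), IsIntegralAway B d ∧ h d ≠ 0 ∧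
      ∀ i, h (x i) ∈ Z := by
  let D := Algebra.adjoin R (Set.range x)
  have : Algebra.IsAlgebraic D B := hx.isAlgebraic
  have : Algebra.FiniteType D B := .of_restrictScalars_finiteType R D B
  obtain ⟨d, hd0, hd⟩ := exists_isIntegralAway D B
  let e : MvPolynomial ι R ≃ₐ[R] D := hx.1.aevalEquiv
  have he (i : ι) : e (MvPolynomial.X i) = ⟨x i, Algebra.subset_adjoin ⟨i, rfl⟩⟩ :=
    Subtype.ext ((hx.1.algebraMap_aevalEquiv _).trans (MvPolynomial.aeval_X x i))
  have hd' : MvPolynomial.map (algebraMap R Ω) (e.symm d) ≠ 0 := by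
    rwa [Ne, map_eq_zero_iff _
      (MvPolynomial.map_injective _ (FaithfulSMul.algebraMap_injective R Ω)),
      EmbeddingLike.map_eq_zero_iff]
  obtain ⟨z, hzZ, hz⟩ := exists_eval_ne_zero_of_infinite hZ hd'
  let f : D →ₐ[R] Ω := (MvPolynomial.aeval z).comp e.symm
  have hfd : f d ≠ 0 := by rwa [MvPolynomial.eval_map] at hz
  obtain ⟨h, hh⟩ := hd.exists_ringHom_comp_algebraMap_eq (f : D →+* Ω) hfd
  have hhD (y : D) : h y = f y := congr($hh y)
  refine ⟨d, { h with commutes' := fun r ↦ ?_ }, hd, ?_, fun i ↦ ?_⟩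
  · exact (hhD (algebraMap R D r)).trans (f.commutes r)
  · exact (hhD d).trans_ne hfd
  · have hi : h (x i) = z i := by
      rw [hhD ⟨x i, Algebra.subset_adjoin ⟨i, rfl⟩⟩, ← he]
      simp [f]
    exact hi ▸ hzZ i

theorem isAlgebraic_of_isAlgebraic_map {R A F : Type*} [CommRing R] [IsDomain R] [CommRing A]
    [Field F] [Algebra R F[X]] (π : A →+* F) (hπ : ∀ u : F, ∃ a b, π b ≠ 0 ∧ u = π a / π b)
    (h : ∀ q : A[X], IsAlgebraic R (q.map π)) : Algebra.IsAlgebraic R F[X] := by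
  refine ⟨mem_of_forall_C_mem_of_X_mem (M := Subalgebra.algebraicClosure R F[X]) (fun u ↦ ?_) ?_⟩
  · obtain ⟨a, b, hb, rfl⟩ := hπ u
    have hmul : C (π b) * C (π a / π b) = C (π a) := by rw [← C_mul, mul_div_cancel₀ _ hb]
    refine IsAlgebraic.of_mul (mem_nonZeroDivisors_of_ne_zero (C_ne_zero.2 hb)) ?_ ?_
    · simpa using h (C b)
    · rw [hmul]
      simpa using h (C a)
  · exact map_X π ▸ h X

theorem IsIntegralAway.isAlgebraic_algHom {R B T : Type*} [CommRing R] [IsDomain R] [CommRing B]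
    [CommRing T] [IsDomain T] [Algebra R B] [Algebra R T] {s : Set B} {d : Algebra.adjoin R s}
    (hd : IsIntegralAway B d) (Φ : B →ₐ[R] T) (hΦd : Φ d ≠ 0)
    (hs : ∀ x ∈ s, IsAlgebraic R (Φ x)) (b : B) : IsAlgebraic R (Φ b) := by
  have hle : Algebra.adjoin R s ≤ (Subalgebra.algebraicClosure R T).comap Φ :=
    Algebra.adjoin_le hs
  exact hd.isAlgebraic_map (Φ : B →+* T) hΦd (fun x ↦ hle x.2) b

theorem exists_specialization_of_natDegree_ne_zero {k R A Ω : Type*} [Field k] [CommRing R]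
    [IsDomain R] [CommRing A] [IsDomain A] [Field Ω] [IsAlgClosed Ω] [Algebra k R] [Algebra k A]
    [Algebra.FiniteType k A] [Algebra R A[X]] [IsScalarTower k R A[X]] [FaithfulSMul R A[X]]
    [Algebra k Ω] [Algebra R Ω] [FaithfulSMul R Ω] {r : R}
    (hr : (algebraMap R A[X] r).natDegree ≠ 0) :
    ∃ s ⊆ Set.range (C : A → A[X]), ∃ (d : Algebra.adjoin R s) (h : A[X] →ₐ[R] Ω),
      IsIntegralAway A[X] d ∧ h d ≠ 0 ∧ ∀ x ∈ s, IsAlgebraic k (h x) := by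
  have : Algebra.IsAlgebraic (Algebra.adjoin R (Set.range (C : A → A[X]))) A[X] :=
    isAlgebraic_adjoin_range_C hr
  obtain ⟨s, hsC, hs⟩ := exists_isTranscendenceBasis_subset (R := R) (Set.range (C : A → A[X]))
  have : Algebra.FiniteType R A[X] := .of_restrictScalars_finiteType k R A[X]
  have hss := exists_algHom_mem_of_isTranscendenceBasis hs (infinite_setOf_isAlgebraic k Ω)
  rw [Subtype.range_coe] at hss
  obtain ⟨d, h, hd, hhd, hx⟩ := hss
  exact ⟨s, hsC, d, h, hd, hhd, fun x hxs ↦ hx ⟨x, hxs⟩⟩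

theorem exists_eq_div_of_mem_adjoin_range {k A Ω : Type*} [Field k] [CommRing A] [Field Ω]
    [Algebra k A] [Algebra k Ω] (π : A →ₐ[k] Ω) {u : Ω}
    (hu : u ∈ IntermediateField.adjoin k (Set.range π)) : ∃ a b, π b ≠ 0 ∧ u = π a / π b := by
  rw [← AlgHom.coe_range, IntermediateField.mem_adjoin_iff_div, Algebra.adjoin_eq] at hu
  obtain ⟨_, ⟨a, rfl⟩, _, ⟨b, rfl⟩, rfl⟩ := hu
  by_cases hb : π b = 0
  · exact ⟨0, 1, by simp, by simp [hb]⟩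
  · exact ⟨a, b, hb, rfl⟩

theorem exists_algHom_isAlgebraic_of_specialization {k R A Ω : Type*} [Field k] [CommRing R]
    [IsDomain R] [CommRing A] [Field Ω] [Algebra k R] [Algebra k A] [Algebra R A[X]]
    [IsScalarTower k R A[X]] [Algebra k Ω] [Algebra R Ω] [IsScalarTower k R Ω]
    [FaithfulSMul R Ω] {s : Set A[X]} (hsC : s ⊆ Set.range C) {d : Algebra.adjoin R s}
    (hd : IsIntegralAway A[X] d) (h : A[X] →ₐ[R] Ω) (hhd : h d ≠ 0)
    (hs : ∀ x ∈ s, IsAlgebraic k (h x)) :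
    ∃ (F : IntermediateField k Ω) (φ : R →ₐ[k] F[X]), Function.Injective φ ∧
      ∀ y : F[X], ∃ p : R[X], p ≠ 0 ∧ eval₂ (φ : R →+* F[X]) y p = 0 := by
  let π : A →ₐ[k] Ω := (h.restrictScalars k).comp CAlgHom
  let F := IntermediateField.adjoin k (Set.range π)
  let π₀ : A →ₐ[k] F := π.codRestrict F.toSubalgebra
    fun a ↦ IntermediateField.subset_adjoin k _ ⟨a, rfl⟩
  let φ : R →ₐ[k] F[X] := (mapAlgHom π₀).comp (IsScalarTower.toAlgHom k R A[X])
  let _ : Algebra R F[X] := φ.toRingHom.toAlgebra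
  have : IsScalarTower k R F[X] := .of_algebraMap_eq' φ.comp_algebraMap.symm
  let Φ : A[X] →ₐ[R] F[X] := { mapRingHom (π₀ : A →+* F) with commutes' := fun _ ↦ rfl }
  let ε : F[X] →+* Ω := eval₂RingHom (algebraMap F Ω) (h X)
  have hΦC (a : A) : Φ (C a) = C (π₀ a) := map_C _
  have hε (q : A[X]) : ε (Φ q) = h q := by
    have : ε.comp (Φ : A[X] →+* F[X]) = h := ringHom_ext
      (fun a ↦ (congrArg ε (hΦC a)).trans (eval₂_C ..))
      ((congrArg ε (map_X _)).trans (eval₂_X ..))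
    exact congr($this q)
  have hφ : Function.Injective φ := .of_comp (f := ε) <| by
    convert FaithfulSMul.algebraMap_injective R Ω using 1
    exact funext fun r ↦ (hε (algebraMap R A[X] r)).trans (h.commutes r)
  have hΦs : ∀ x ∈ s, IsAlgebraic R (Φ x) := by
    intro x hx
    obtain ⟨a, rfl⟩ := hsC hx
    have hπ₀a : IsAlgebraic k (π₀ a) :=
      (isAlgebraic_algebraMap_iff (algebraMap F Ω).injective).1 (hs _ hx)
    rw [hΦC]
    exact (hπ₀a.algHom (CAlgHom (R := k) (A := F))).extendScalars (algebraMap k R).injective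
  have hΦd : Φ d ≠ 0 := fun h0 ↦ hhd (by rw [← hε, h0, map_zero])
  have hfrac (u : F) : ∃ a b, π₀ b ≠ 0 ∧ u = π₀ a / π₀ b := by
    obtain ⟨a, b, hb, hu⟩ := exists_eq_div_of_mem_adjoin_range π u.2
    exact ⟨a, b, fun h0 ↦ hb congr(($h0 : Ω)), Subtype.ext hu⟩
  have := isAlgebraic_of_isAlgebraic_map (π₀ : A →+* F) hfrac (hd.isAlgebraic_algHom Φ hΦd hΦs)
  exact ⟨F, φ, hφ, this.isAlgebraic⟩

theorem exists_algHom_isAlgebraic_of_finiteType {k R : Type*} {A : Type v} [Field k]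
    [CommRing R] [CommRing A] [IsDomain A] [Algebra k R] [Algebra k A] [Algebra.FiniteType k A]
    (ψ : R →ₐ[k] A[X]) (hψ : Function.Injective ψ) {r : R} (hr : (ψ r).natDegree ≠ 0) :
    ∃ (F : Type v) (_ : Field F) (_ : Algebra k F) (φ : R →ₐ[k] F[X]), Function.Injective φ ∧
      ∀ y : F[X], ∃ p : R[X], p ≠ 0 ∧ eval₂ (φ : R →+* F[X]) y p = 0 := by
  have : IsDomain R := hψ.isDomain ψ.toRingHom
  let Ω := AlgebraicClosure (FractionRing A[X])
  let _ : Algebra R A[X] := ψ.toRingHom.toAlgebra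
  have : IsScalarTower k R A[X] := .of_algebraMap_eq' ψ.comp_algebraMap.symm
  have : FaithfulSMul R A[X] := (faithfulSMul_iff_algebraMap_injective _ _).2 hψ
  have : FaithfulSMul R (FractionRing A[X]) := .trans R A[X] _
  have : FaithfulSMul R Ω := .trans R (FractionRing A[X]) Ω
  obtain ⟨s, hsC, d, h, hd, hhd, hs⟩ :=
    exists_specialization_of_natDegree_ne_zero (k := k) (Ω := Ω) hr
  obtain ⟨F, φ, hφ⟩ := exists_algHom_isAlgebraic_of_specialization hsC hd h hhd hs
  exact ⟨F, inferInstance, inferInstance, φ, hφ⟩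

theorem exists_subalgebra_fg_mapAlgHom_comp_eq {k R K : Type*} [CommRing k] [CommRing R]
    [CommRing K] [Algebra k R] [Algebra k K] [Algebra.FiniteType k R] (ψ : R →ₐ[k] K[X]) :
    ∃ A : Subalgebra k K, A.FG ∧ ∃ ψ' : R →ₐ[k] A[X], (mapAlgHom A.val).comp ψ' = ψ := by
  classical
  obtain ⟨s, hs⟩ := (Algebra.FiniteType.out : (⊤ : Subalgebra k R).FG)
  let S : Finset K := s.biUnion fun r ↦ (ψ r).coeffs
  let A : Subalgebra k K := Algebra.adjoin k (S : Set K)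
  let ι : A[X] →ₐ[k] K[X] := mapAlgHom A.val
  have hι : Function.Injective ι := map_injective _ Subtype.val_injective
  have hcoeff {r : R} (hr : r ∈ s) (n : ℕ) : (ψ r).coeff n ∈ A := by
    by_cases h0 : (ψ r).coeff n = 0
    · exact h0 ▸ zero_mem A
    · exact Algebra.subset_adjoin (Finset.mem_biUnion.2 ⟨r, hr, coeff_mem_coeffs h0⟩)
  have hrange : (⊤ : Subalgebra k R) ≤ ι.range.comap ψ := by
    rw [← hs, Algebra.adjoin_le_iff]
    intro r hr
    exact (lifts_iff_coeff_lifts (f := (A.val : A →+* K)) _).2 fun n ↦ ⟨⟨_, hcoeff hr n⟩, rfl⟩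
  let e := AlgEquiv.ofInjective ι hι
  let ψr : R →ₐ[k] ι.range := ψ.codRestrict ι.range fun r ↦ hrange Algebra.mem_top
  refine ⟨A, ⟨S, rfl⟩, (e.symm : ι.range →ₐ[k] A[X]).comp ψr, AlgHom.ext fun r ↦ ?_⟩
  exact congrArg Subtype.val (e.apply_symm_apply (ψr r))

theorem affine_nagata_general {k R : Type*} {K : Type v} [Field k] [CommRing R] [CommRing K]
    [IsDomain K] [Algebra k R] [Algebra.FiniteType k R] [Algebra k K] (ψ : R →ₐ[k] K[X])
    (hinj : Function.Injective ψ) (hnc : ∃ r : R, ψ r ∉ Set.range (C : K → K[X])) :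
    ∃ (F : Type v) (_ : Field F) (_ : Algebra k F) (φ : R →ₐ[k] F[X]), Function.Injective φ ∧
      ∀ y : F[X], ∃ p : R[X], p ≠ 0 ∧ eval₂ (φ : R →+* F[X]) y p = 0 := by
  obtain ⟨A, hA, ψ', rfl⟩ := exists_subalgebra_fg_mapAlgHom_comp_eq ψ
  have : Algebra.FiniteType k A := A.fg_iff_finiteType.1 hA
  obtain ⟨r, hr⟩ := hnc
  have hdeg : (ψ' r).natDegree ≠ 0 := fun h0 ↦ hr <| by
    refine ⟨(ψ' r).coeff 0, ?_⟩
    rw [AlgHom.comp_apply, eq_C_of_natDegree_eq_zero h0]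
    simp
  have hψ' : Function.Injective ψ' := .of_comp (f := mapAlgHom A.val) hinj
  exact exists_algHom_isAlgebraic_of_finiteType ψ' hψ' hdeg

/-- (Main Theorem)  Let `k` be a field and `R` an affine `k`-domain.  Suppose there is a
field `K ⊇ k` such that `R` embeds as a `k`-subalgebra of `K[s]` with `R ⊄ K`.  Then there
are a field `F` and an injective `k`-algebra homomorphism `φ : R → F[t]` such that `F[t]`
is algebraic over `φ(R)`: every element of `F[t]` is a root of a nonzero polynomial with
coefficients in `φ(R)`. -/
theorem affine_nagata (k : Type u) [Field k] (R : Type w) [CommRing R] [IsDomain R]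
    [Algebra k R] [Algebra.FiniteType k R]
    (K : Type v) [Field K] [Algebra k K]
    (ψ : R →ₐ[k] Polynomial K) (hinj : Function.Injective ψ)
    (hnc : ∃ r : R, ψ r ∉ Set.range (Polynomial.C : K → Polynomial K)) :
    ∃ (F : Type v) (_ : Field F) (_ : Algebra k F) (φ : R →ₐ[k] Polynomial F),
      Function.Injective φ ∧
      ∀ y : Polynomial F, ∃ p : Polynomial R, p ≠ 0 ∧
        Polynomial.eval₂ (φ : R →+* Polynomial F) y p = 0 :=
  affine_nagata_general ψ hinj hnc
end

section
/- Let k be an algebraically closed field of characteristic zero and let B be a commutative integral domain containing k. Let r ∈ B and suppose r ∉ ML(B), i.e., there exists a locally nilpotent k-derivation D of B with Dr ≠ 0. Let Alg_{k[r]}B = { b ∈ B : b is algebraic over the subring k[r] }. Then there exists t ∈ frac(Alg_{k[r]}B) such that Alg_{k[r]}B ⊆ k[t] inside frac(Alg_{k[r]}B). -/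
/-!
The exponential of a locally nilpotent derivation `D` with `D r ≠ 0` maps `B` into `B[X]` and sends
`r` to a polynomial of positive degree, so the degree in `X` is a valuation trivial on `k` for which
`r` has a pole. An element without a pole that is algebraic over `k[r]` has a residue algebraic over
`k`, so it is a constant up to terms of smaller degree. Hence the graded pieces of
`R = Alg_{k[r]} B` for the degree filtration are at most one-dimensional, and `R` is finitely
generated because submonoids of `ℕ` are. The coefficients occurring in `R` then lie in a finitely
generated `k`-algebra, and specialising them at a suitable point (Nullstellensatz) embeds `R` into
`k[X]`. By Lüroth's theorem the image of `Frac R` in `k(X)` is `k` or `k(t)`, where `t` may be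
chosen with a pole at infinity. Then `X`, and with it `R`, is integral over the integrally closed
ring `k[t]`, so `R ⊆ k[t]`.
-/

namespace MakarLimanov

open Polynomial

section Valuation

variable {k F Γ₀ : Type*} [Field k] [IsAlgClosed k] [Field F] [Algebra k F]
  [LinearOrderedCommGroupWithZero Γ₀] {v : Valuation F Γ₀} [v.IsTrivialOn k]

lemma isTrivialOn_adjoin_singleton {y : F} (hv : ∀ c : k, v (y - algebraMap k F c) = 1) :
    v.IsTrivialOn (Algebra.adjoin k {y}) := by
  refine ⟨fun ⟨x, hx⟩ hx0 ↦ ?_⟩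
  rw [Algebra.adjoin_singleton_eq_range_aeval] at hx
  obtain ⟨p, rfl⟩ := hx
  have hp : p ≠ 0 := by rintro rfl; exact hx0 (Subtype.ext (map_zero (aeval y)))
  change v (aeval y p) = 1
  have hsplit := IsAlgClosed.splits p
  rw [(hsplit.map (algebraMap k F)).aeval_eq_prod_aroots, aroots, hsplit.roots_map, map_mul,
    Valuation.IsTrivialOn.eq_one _ (leadingCoeff_ne_zero.mpr hp), one_mul, map_multiset_prod]
  refine Multiset.prod_eq_one fun γ hγ ↦ ?_
  simp only [Multiset.map_map, Multiset.mem_map] at hγ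
  obtain ⟨c, -, rfl⟩ := hγ
  exact hv c

theorem exists_valuation_sub_algebraMap_lt_one {r y : F} (hr : 1 < v r) (hvy : v y ≤ 1)
    (hy : IsAlgebraic (Algebra.adjoin k {r}) y) :
    ∃ c : k, v (y - algebraMap k F c) < 1 := by
  by_contra! h
  have hv (c : k) : v (y - algebraMap k F c) = 1 :=
    le_antisymm (v.map_sub_le hvy (Valuation.IsTrivialOn.valuation_algebraMap_le_one v c)) (h c)
  -- By exchange `r` is algebraic over `k[y]`, on which `v` is trivial; this forces `v r = 1`.
  have := isTrivialOn_adjoin_singleton hv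
  have hr0 : r ≠ 0 := v.ne_zero_iff.mp (zero_lt_one.trans hr).ne'
  have hy_trans : Transcendental k y := by
    intro hy_alg
    obtain ⟨c, rfl⟩ := minpoly.mem_range_of_degree_eq_one k y <|
      IsAlgClosed.degree_eq_one_of_irreducible k (minpoly.irreducible hy_alg.isIntegral)
    simpa using hv c
  have hr_trans : Transcendental k r := Valuation.transcendental_of_ne_one k r hr0 hr.ne'
  exact Valuation.transcendental_of_ne_one (Algebra.adjoin k {y}) r hr0 hr.ne'
    (.adjoin_singleton hr_trans hy_trans hy)

end Valuation

section Algebraic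

variable {k R S : Type*} [CommRing k] [CommRing R] [Algebra k R] [CommRing S] [Algebra k S]

lemma isAlgebraic_adjoin_singleton_map_iff {φ : R →ₐ[k] S} (hφ : Function.Injective φ) {r x : R} :
    IsAlgebraic (Algebra.adjoin k {φ r}) (φ x) ↔ IsAlgebraic (Algebra.adjoin k {r}) x := by
  have e : (Algebra.adjoin k {r}).map φ = Algebra.adjoin k {φ r} := by
    rw [AlgHom.map_adjoin, Set.image_singleton]
  exact isAlgebraic_ringHom_iff_of_comp_eq
    (((Algebra.adjoin k {r}).equivMapOfInjective φ hφ).trans (Subalgebra.equivOfEq _ _ e)) φ hφ rfl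

lemma injective_of_transcendental [IsDomain R] {r : R}
    [Algebra.IsAlgebraic (Algebra.adjoin k {r}) R] {ψ : R →ₐ[k] S} (hψ : Transcendental k (ψ r)) :
    Function.Injective ψ := by
  rw [injective_iff_map_eq_zero]
  intro x hx
  by_contra hx0
  refine Ideal.comap_ne_bot_of_algebraic_mem (I := RingHom.ker ψ) hx0 hx
    (Algebra.IsAlgebraic.isAlgebraic (R := Algebra.adjoin k {r}) x) ?_
  rw [eq_bot_iff]
  rintro ⟨a, ha⟩ hψa
  rw [Algebra.adjoin_singleton_eq_range_aeval] at ha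
  obtain ⟨f, rfl⟩ := ha
  have hf : aeval (ψ r) f = 0 := by rw [aeval_algHom_apply]; exact hψa
  obtain rfl : f = 0 := transcendental_iff.mp hψ f hf
  exact Subtype.ext (map_zero (aeval r))

lemma transcendental_of_natDegree_pos {k C : Type*} [CommRing k] [CommRing C] [IsDomain C]
    [Algebra k C] [FaithfulSMul k C] {p : C[X]} (hp : 0 < p.natDegree) : Transcendental k p := by
  refine Transcendental.restrictScalars (S := C) (FaithfulSMul.algebraMap_injective k C)
    (p.transcendental hp.ne' ?_)
  rw [mem_nonZeroDivisors_iff_ne_zero, leadingCoeff_ne_zero]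
  exact ne_zero_of_natDegree_gt hp

end Algebraic

section Degree

open scoped Classical in
lemma inftyValuation_algebraMap_le_iff {K : Type*} [Field K] {p q : K[X]} :
    RatFunc.inftyValuation K (algebraMap K[X] (RatFunc K) p) ≤
      RatFunc.inftyValuation K (algebraMap K[X] (RatFunc K) q) ↔ p.degree ≤ q.degree := by
  rcases eq_or_ne p 0 with rfl | hp
  · simp
  rcases eq_or_ne q 0 with rfl | hq
  · simp [hp]
  simp only [RatFunc.inftyValuation_apply, RatFunc.inftyValuation.polynomial, hp, hq, ne_eq,
    not_false_eq_true, degree_eq_natDegree, WithZero.exp_le_exp, Nat.cast_le]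

variable {k C : Type*} [Field k] [IsAlgClosed k] [CommRing C] [IsDomain C] [Algebra k C]

theorem exists_degree_sub_smul_lt {r p q : C[X]} (hr : 0 < r.natDegree)
    (hp : IsAlgebraic (Algebra.adjoin k {r}) p) (hq : IsAlgebraic (Algebra.adjoin k {r}) q)
    (hq0 : q ≠ 0) (hpq : p.degree ≤ q.degree) : ∃ c : k, (p - c • q).degree < q.degree := by
  classical
  let K := FractionRing C
  let m : C[X] →ₐ[k] K[X] := mapAlgHom (IsScalarTower.toAlgHom k C K)
  let j : C[X] →ₐ[k] RatFunc K := (IsScalarTower.toAlgHom k K[X] (RatFunc K)).comp m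
  have hCK : Function.Injective (algebraMap C K) := IsFractionRing.injective C K
  have hm_degree (f : C[X]) : (m f).degree = f.degree := degree_map_eq_of_injective hCK f
  have hj : Function.Injective j :=
    (IsFractionRing.injective K[X] (RatFunc K)).comp (map_injective _ hCK)
  let v := RatFunc.inftyValuation K
  have hle (f g : C[X]) : v (j f) ≤ v (j g) ↔ f.degree ≤ g.degree := by
    rw [← hm_degree, ← hm_degree, ← inftyValuation_algebraMap_le_iff]; rfl
  have hlt (f g : C[X]) : v (j f) < v (j g) ↔ f.degree < g.degree := by
    rw [← not_le, hle, not_le]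
  have : v.IsTrivialOn k := ⟨fun c hc ↦ by
    rw [IsScalarTower.algebraMap_apply k K]
    exact Valuation.IsTrivialOn.eq_one _ ((_root_.map_ne_zero _).mpr hc)⟩
  have hr' : 1 < v (j r) := by
    rw [← map_one v, ← map_one j, hlt, degree_one]
    exact natDegree_pos_iff_degree_pos.mp hr
  have hjq : j q ≠ 0 := (map_ne_zero_iff j hj).mpr hq0
  have hvq : 0 < v (j q) := zero_lt_iff.mpr (v.ne_zero_iff.mpr hjq)
  have halg : IsAlgebraic (Algebra.adjoin k {j r}) (j p / j q) := by
    rw [div_eq_mul_inv]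
    exact ((isAlgebraic_adjoin_singleton_map_iff hj).mpr hp).mul
      ((isAlgebraic_adjoin_singleton_map_iff hj).mpr hq).inv
  obtain ⟨c, hc⟩ := exists_valuation_sub_algebraMap_lt_one hr'
    (by rw [map_div₀, div_le_one₀ hvq, hle]; exact hpq) halg
  refine ⟨c, (hlt _ _).mp ?_⟩
  rw [show j (p - c • q) = (j p / j q - algebraMap k _ c) * j q by
    rw [map_sub, map_smul, sub_mul, div_mul_cancel₀ _ hjq, Algebra.smul_def], map_mul]
  exact mul_lt_of_lt_one_left hvq hc

end Degree

section FiniteGeneration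

/-- The degree semigroup of an algebra `S` of polynomials: the degrees of its nonzero elements. -/
def degreeSubmonoid {k C : Type*} [CommSemiring k] [CommSemiring C] [IsDomain C] [Algebra k C]
    (S : Subalgebra k C[X]) : AddSubmonoid ℕ where
  carrier := {n | ∃ p ∈ S, p ≠ 0 ∧ p.natDegree = n}
  zero_mem' := ⟨1, one_mem S, one_ne_zero, natDegree_one⟩
  add_mem' := by
    rintro _ _ ⟨p, hp, hp0, rfl⟩ ⟨q, hq, hq0, rfl⟩
    exact ⟨p * q, mul_mem hp hq, mul_ne_zero hp0 hq0, natDegree_mul hp0 hq0⟩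

variable {k C : Type*} [CommRing k] [CommRing C] [IsDomain C] [Algebra k C]
  {S T : Subalgebra k C[X]}

lemma le_of_degreeSubmonoid_le (hTS : T ≤ S)
    (hS : ∀ p ∈ S, ∀ q ∈ S, q ≠ 0 → p.degree = q.degree → ∃ c : k, (p - c • q).degree < q.degree)
    (hdeg : degreeSubmonoid S ≤ degreeSubmonoid T) : S ≤ T := by
  intro p hp
  induction hd : p.degree using WellFoundedLT.induction generalizing p with
  | ind d ih =>
    rcases eq_or_ne p 0 with rfl | hp0
    · exact zero_mem T
    obtain ⟨q, hq, hq0, hqp⟩ := hdeg ⟨p, hp, hp0, rfl⟩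
    have hpq : p.degree = q.degree := by
      rw [degree_eq_natDegree hp0, degree_eq_natDegree hq0, hqp]
    obtain ⟨c, hc⟩ := hS p hp q (hTS hq) hq0 hpq
    have hcq : c • q ∈ T := T.smul_mem hq c
    simpa using add_mem (ih _ (hd ▸ hpq ▸ hc) (sub_mem hp (hTS hcq)) rfl) hcq

theorem fg_of_exists_degree_sub_smul_lt
    (hS : ∀ p ∈ S, ∀ q ∈ S, q ≠ 0 → p.degree = q.degree → ∃ c : k, (p - c • q).degree < q.degree) :
    S.FG := by
  classical
  obtain ⟨s, hs⟩ := Nat.addSubmonoid_fg (degreeSubmonoid S)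
  have hsS : ∀ n ∈ s, n ∈ degreeSubmonoid S := fun n hn ↦ hs ▸ AddSubmonoid.subset_closure hn
  choose! f hfS hf0 hfdeg using hsS
  have hTS : Algebra.adjoin k (f '' s) ≤ S := Algebra.adjoin_le (Set.image_subset_iff.mpr hfS)
  refine ⟨s.image f, Finset.coe_image (f := f) ▸ hTS.antisymm (le_of_degreeSubmonoid_le hTS hS ?_)⟩
  rw [← hs, AddSubmonoid.closure_le]
  exact fun n hn ↦ ⟨f n, Algebra.subset_adjoin ⟨n, hn, rfl⟩, hf0 n hn, hfdeg n hn⟩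

end FiniteGeneration

section Specialisation

theorem exists_algHom_apply_ne_zero {k A : Type*} [Field k] [IsAlgClosed k] [CommRing A]
    [Algebra k A] [Algebra.FiniteType k A] {a : A} (ha : ¬IsNilpotent a) :
    ∃ φ : A →ₐ[k] k, φ a ≠ 0 := by
  let L := Localization.Away a
  have : Nontrivial L := by
    rwa [← not_subsingleton_iff_nontrivial, IsLocalization.subsingleton_iff (M := .powers a)]
  obtain ⟨m, hm⟩ := Ideal.exists_maximal L
  let := Ideal.Quotient.field m
  have := finite_of_finite_type_of_isJacobsonRing k (L ⧸ m)
  let φ : L →ₐ[k] k := (IsAlgClosed.lift : (L ⧸ m) →ₐ[k] k).comp (Ideal.Quotient.mkₐ k m)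
  exact ⟨φ.comp (IsScalarTower.toAlgHom k A L),
    ((IsLocalization.Away.algebraMap_isUnit a).map φ).ne_zero⟩

variable {k C : Type*}

variable (k) in
/-- The `k`-algebra generated by all coefficients of the polynomials in `s`. -/
def coeffSubalgebra [CommSemiring k] [CommSemiring C] [Algebra k C] (s : Set C[X]) :
    Subalgebra k C :=
  Algebra.adjoin k (⋃ p ∈ s, p.coeffs)

lemma adjoin_le_range_mapAlgHom [CommRing k] [CommRing C] [Algebra k C] (s : Set C[X]) :
    Algebra.adjoin k s ≤ (mapAlgHom (coeffSubalgebra k s).val).range := by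
  refine Algebra.adjoin_le fun p hp ↦
    (mem_map_range (coeffSubalgebra k s).val.toRingHom).mpr fun n ↦ ?_
  rcases eq_or_ne (p.coeff n) 0 with h0 | h0
  · exact h0 ▸ zero_mem _
  · exact ⟨⟨_, Algebra.subset_adjoin (Set.mem_biUnion hp (coeff_mem_coeffs h0))⟩, rfl⟩

lemma exists_algHom_of_le_range {A B : Type*} [CommSemiring k] [Semiring A] [Semiring B]
    [Algebra k A] [Algebra k B] {g : A →ₐ[k] B} (hg : Function.Injective g) {S : Subalgebra k B}
    (hS : S ≤ g.range) : ∃ f : S →ₐ[k] A, ∀ x, g (f x) = x :=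
  ⟨((AlgEquiv.ofInjective g hg).symm : g.range →ₐ[k] A).comp (Subalgebra.inclusion hS), fun x ↦
    congrArg Subtype.val ((AlgEquiv.ofInjective g hg).apply_symm_apply (Subalgebra.inclusion hS x))⟩

theorem exists_algHom_coeff_ne_zero [Field k] [IsAlgClosed k] [CommRing C] [IsDomain C]
    [Algebra k C] {S : Subalgebra k C[X]} (hS : S.FG) {p : S} {n : ℕ}
    (hp : (p : C[X]).coeff n ≠ 0) :
    ∃ ψ : S →ₐ[k] k[X], (ψ p).coeff n ≠ 0 := by
  obtain ⟨s, rfl⟩ := hS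
  let A := coeffSubalgebra k (s : Set C[X])
  have : Algebra.FiniteType k A :=
    .adjoin_of_finite (s.finite_toSet.biUnion fun p _ ↦ p.coeffs.finite_toSet)
  have hA : Function.Injective (mapAlgHom A.val) := map_injective _ Subtype.val_injective
  obtain ⟨f, hf⟩ := exists_algHom_of_le_range hA (adjoin_le_range_mapAlgHom (s : Set C[X]))
  have hfp : ((f p).coeff n : C) = (p : C[X]).coeff n := by
    simp [← hf p]
  obtain ⟨φ, hφ⟩ := exists_algHom_apply_ne_zero (k := k) (a := (f p).coeff n)
    (by rw [isNilpotent_iff_eq_zero]; exact fun h ↦ hp (by simp [← hfp, h]))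
  exact ⟨(mapAlgHom φ).comp f, by simpa using hφ⟩

end Specialisation

section Embedding

variable {k R C : Type*} [Field k] [IsAlgClosed k] [CommRing R] [IsDomain R] [Algebra k R]
  [CommRing C] [IsDomain C] [Algebra k C]

lemma fg_range_of_natDegree_pos {r : R} [Algebra.IsAlgebraic (Algebra.adjoin k {r}) R]
    {φ : R →ₐ[k] C[X]} (hφ : 0 < (φ r).natDegree) : φ.range.FG := by
  have hinj := injective_of_transcendental (transcendental_of_natDegree_pos (k := k) hφ)
  have halg (x : R) : IsAlgebraic (Algebra.adjoin k {φ r}) (φ x) :=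
    (isAlgebraic_adjoin_singleton_map_iff hinj).mpr (Algebra.IsAlgebraic.isAlgebraic x)
  refine fg_of_exists_degree_sub_smul_lt ?_
  rintro _ ⟨x, rfl⟩ _ ⟨y, rfl⟩ hy hxy
  exact exists_degree_sub_smul_lt hφ (halg x) (halg y) hy hxy.le

theorem exists_injective_algHom_polynomial {r : R} [Algebra.IsAlgebraic (Algebra.adjoin k {r}) R]
    {φ : R →ₐ[k] C[X]} (hφ : 0 < (φ r).natDegree) :
    ∃ ψ : R →ₐ[k] k[X], Function.Injective ψ := by
  have hlead : (φ.rangeRestrict r : C[X]).coeff (φ r).natDegree ≠ 0 :=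
    leadingCoeff_ne_zero.mpr (ne_zero_of_natDegree_gt hφ)
  obtain ⟨ψ, hψ⟩ := exists_algHom_coeff_ne_zero (fg_range_of_natDegree_pos hφ) hlead
  refine ⟨ψ.comp φ.rangeRestrict, injective_of_transcendental (r := r) ?_⟩
  exact transcendental_of_natDegree_pos (hφ.trans_le (le_natDegree_of_ne_zero hψ))

end Embedding

section Luroth

open IntermediateField

variable {k : Type*} [Field k]

lemma transcendental_of_intDegree_pos {g : RatFunc k} (hg : 0 < g.intDegree) :
    Transcendental k g :=
  g.transcendental_of_ne_C (by rintro ⟨c, rfl⟩; simp at hg)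

open scoped IntermediateField.algebraAdjoinAdjoin in
lemma isIntegral_X_of_intDegree_pos {g : RatFunc k} (hg : 0 < g.intDegree) :
    IsIntegral (Algebra.adjoin k {g}) (RatFunc.X : RatFunc k) := by
  have hlt : g.denom.natDegree < g.num.natDegree := by simpa [RatFunc.intDegree] using hg
  let P := g.minpolyX (Algebra.adjoin k {g})
  have hP : aeval (RatFunc.X : RatFunc k) P = 0 := by
    have := g.minpolyX_aeval_X
    rwa [← g.minpolyX_map (Algebra.adjoin k {g}), aeval_map_algebraMap] at this
  have hinj : Function.Injective (algebraMap k (Algebra.adjoin k {g})) :=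
    FaithfulSMul.algebraMap_injective _ _
  have hlead : P.leadingCoeff = algebraMap k _ g.num.leadingCoeff := by
    rw [leadingCoeff_sub_of_degree_lt, leadingCoeff_map_of_injective hinj]
    refine degree_lt_degree ((natDegree_C_mul_le _ _).trans_lt ?_)
    rwa [natDegree_map_eq_of_injective hinj, natDegree_map_eq_of_injective hinj]
  have hlc : g.num.leadingCoeff ≠ 0 := leadingCoeff_ne_zero.mpr (ne_zero_of_natDegree_gt hlt)
  have := (isIntegral_leadingCoeff_smul P RatFunc.X hP).smul (g.num.leadingCoeff⁻¹ : k)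
  rwa [hlead, algebraMap_smul, smul_smul, inv_mul_cancel₀ hlc, one_smul] at this

lemma isIntegral_algebraMap_of_intDegree_pos {g : RatFunc k} (hg : 0 < g.intDegree) (p : k[X]) :
    IsIntegral (Algebra.adjoin k {g}) (algebraMap k[X] (RatFunc k) p) := by
  have hX : Algebra.adjoin k {RatFunc.X} ≤
      (integralClosure (Algebra.adjoin k {g}) (RatFunc k)).restrictScalars k :=
    Algebra.adjoin_le (Set.singleton_subset_iff.mpr (isIntegral_X_of_intDegree_pos hg))
  rw [← RatFunc.aeval_X_left_eq_algebraMap]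
  exact hX (aeval_mem_adjoin_singleton k _)

lemma isIntegrallyClosed_adjoin_singleton {F : Type*} [CommRing F] [Algebra k F] {g : F}
    (hg : Transcendental k g) : IsIntegrallyClosed (Algebra.adjoin k {g}) :=
  .of_equiv (algEquivOfTranscendental k g hg).toRingEquiv

open scoped IntermediateField.algebraAdjoinAdjoin in
lemma mem_adjoin_of_isIntegral_of_mem_adjoin_simple {F : Type*} [Field F] [Algebra k F] {g x : F}
    (hg : Transcendental k g)
    (hx : IsIntegral (Algebra.adjoin k {g}) x) (hxg : x ∈ k⟮g⟯) : x ∈ Algebra.adjoin k {g} := by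
  have := isIntegrallyClosed_adjoin_singleton hg
  obtain ⟨y, hy⟩ := (IsIntegrallyClosed.isIntegral_iff (R := Algebra.adjoin k {g}) (K := k⟮g⟯)
    (x := ⟨x, hxg⟩)).mp <|
      (isIntegral_algHom_iff (IsScalarTower.toAlgHom (Algebra.adjoin k {g}) k⟮g⟯ F)
        (algebraMap k⟮g⟯ F).injective).mp hx
  have hyx : (y : F) = x := congrArg Subtype.val hy
  exact hyx ▸ y.2

lemma one_lt_inftyValuation_iff [DecidableEq (RatFunc k)] {g : RatFunc k} :
    1 < RatFunc.inftyValuation k g ↔ 0 < g.intDegree := by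
  rcases eq_or_ne g 0 with rfl | hg
  · simp
  · rw [RatFunc.inftyValuation_apply, RatFunc.inftyValuation_of_nonzero k hg, ← WithZero.exp_zero,
      WithZero.exp_lt_exp]

lemma isAlgebraic_adjoin_X (g : RatFunc k) :
    IsAlgebraic (Algebra.adjoin k {(RatFunc.X : RatFunc k)}) g := by
  have h (p : k[X]) :
      IsAlgebraic (Algebra.adjoin k {(RatFunc.X : RatFunc k)}) (algebraMap k[X] (RatFunc k) p) := by
    rw [← RatFunc.aeval_X_left_eq_algebraMap]
    exact isAlgebraic_algebraMap
      (⟨_, aeval_mem_adjoin_singleton k _⟩ : Algebra.adjoin k {(RatFunc.X : RatFunc k)})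
  rw [← g.num_div_denom, div_eq_mul_inv]
  exact (h _).mul (h _).inv

lemma exists_intDegree_pos_adjoin_simple_eq [IsAlgClosed k] {g : RatFunc k}
    (hg : g ∉ (algebraMap k (RatFunc k)).range) :
    ∃ g' : RatFunc k, 0 < g'.intDegree ∧ k⟮g⟯ = k⟮g'⟯ := by
  classical
  by_cases hpos : 0 < g.intDegree
  · exact ⟨g, hpos, rfl⟩
  let v := RatFunc.inftyValuation k
  have hX : 1 < v RatFunc.X := one_lt_inftyValuation_iff.mpr (by simp)
  obtain ⟨c, hc⟩ := exists_valuation_sub_algebraMap_lt_one (k := k) hX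
    (not_lt.mp (mt one_lt_inftyValuation_iff.mp hpos)) (isAlgebraic_adjoin_X g)
  have hgc : g - algebraMap k _ c ≠ 0 := fun h ↦ hg ⟨c, (sub_eq_zero.mp h).symm⟩
  refine ⟨(g - algebraMap k _ c)⁻¹, one_lt_inftyValuation_iff.mp ?_, le_antisymm ?_ ?_⟩
  · rw [map_inv₀]
    exact (one_lt_inv₀ (zero_lt_iff.mpr ((Valuation.ne_zero_iff _).mpr hgc))).mpr hc
  · rw [adjoin_simple_le_iff]
    simpa using add_mem (inv_mem (mem_adjoin_simple_self k (g - algebraMap k _ c)⁻¹))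
      (IntermediateField.algebraMap_mem _ c)
  · rw [adjoin_simple_le_iff]
    exact inv_mem (sub_mem (mem_adjoin_simple_self k g) (IntermediateField.algebraMap_mem _ c))

theorem exists_intDegree_pos_eq_adjoin_simple [IsAlgClosed k] {E : IntermediateField k (RatFunc k)}
    (hE : E ≠ ⊥) : ∃ g : RatFunc k, 0 < g.intDegree ∧ E = k⟮g⟯ := by
  obtain ⟨g, hg, hEg⟩ :=
    exists_intDegree_pos_adjoin_simple_eq (RatFunc.Luroth.generator_spec hE)
  exact ⟨g, hg, RatFunc.Luroth.eq_adjoin_generator.trans hEg⟩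

theorem exists_forall_mem_adjoin_singleton [IsAlgClosed k] {R F : Type*} [CommRing R]
    [Algebra k R] [Field F] [Algebra R F] [IsFractionRing R F] [Algebra k F] [IsScalarTower k R F]
    {ψ : R →ₐ[k] k[X]} (hψ : Function.Injective ψ) :
    ∃ t : F, ∀ x : R, algebraMap R F x ∈ Algebra.adjoin k {t} := by
  let j : R →ₐ[k] RatFunc k := (IsScalarTower.toAlgHom k k[X] (RatFunc k)).comp ψ
  have hj : Function.Injective j := (IsFractionRing.injective k[X] (RatFunc k)).comp hψ
  let Ψ : F →ₐ[k] RatFunc k := IsFractionRing.liftAlgHom hj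
  have hΨ (x : R) : Ψ (algebraMap R F x) = algebraMap k[X] (RatFunc k) (ψ x) :=
    IsFractionRing.lift_algebraMap hj x
  suffices ∃ t : F, ∀ x : R, Ψ (algebraMap R F x) ∈ Algebra.adjoin k {Ψ t} by
    obtain ⟨t, ht⟩ := this
    refine ⟨t, fun x ↦ ?_⟩
    obtain ⟨y, hy, hyx⟩ : Ψ (algebraMap R F x) ∈ (Algebra.adjoin k {t}).map Ψ := by
      rw [AlgHom.map_adjoin, Set.image_singleton]
      exact ht x
    exact Ψ.injective hyx ▸ hy
  by_cases hE : Ψ.fieldRange = ⊥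
  · refine ⟨0, fun x ↦ ?_⟩
    have hx : Ψ (algebraMap R F x) ∈ Ψ.fieldRange := ⟨_, rfl⟩
    obtain ⟨c, hc⟩ := IntermediateField.mem_bot.mp (hE ▸ hx)
    exact hc ▸ algebraMap_mem _ c
  · obtain ⟨g, hg, hEg⟩ := exists_intDegree_pos_eq_adjoin_simple hE
    obtain ⟨t, rfl⟩ : g ∈ Ψ.fieldRange := hEg ▸ mem_adjoin_simple_self k g
    refine ⟨t, fun x ↦ mem_adjoin_of_isIntegral_of_mem_adjoin_simple
      (transcendental_of_intDegree_pos hg) ?_ (hEg ▸ ⟨_, rfl⟩)⟩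
    exact hΨ x ▸ isIntegral_algebraMap_of_intDegree_pos hg (ψ x)

end Luroth

section Exponential

open scoped Nat
open Finset.HasAntidiagonal (antidiagonal mem_antidiagonal)

variable {k B : Type*} [Field k] [CommRing B] [Algebra k B]

/-- The divided power `Dⁿ / n!` of a derivation `D`, the `n`-th coefficient of its
exponential `exp (X D)`. It is `0` by convention when `n!` vanishes in `k`. -/
def dividedPower (D : Derivation k B B) (n : ℕ) : B →ₗ[k] B :=
  (n ! : k)⁻¹ • (D : B →ₗ[k] B) ^ n

lemma dividedPower_apply (D : Derivation k B B) (n : ℕ) (b : B) :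
    dividedPower D n b = (n ! : k)⁻¹ • (⇑D)^[n] b := by
  rw [dividedPower, LinearMap.smul_apply, Module.End.pow_apply]; rfl

lemma dividedPower_one_apply (D : Derivation k B B) (b : B) : dividedPower D 1 b = D b := by
  simp [dividedPower_apply]

lemma dividedPower_apply_one (D : Derivation k B B) (n : ℕ) :
    dividedPower D n 1 = if n = 0 then 1 else 0 := by
  cases n <;> simp [dividedPower, pow_succ]

lemma dividedPower_eq_zero_of_le {D : Derivation k B B} {m n : ℕ} {b : B} (hb : (⇑D)^[m] b = 0)
    (hmn : m ≤ n) : dividedPower D n b = 0 := by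
  rw [dividedPower_apply, ← Nat.sub_add_cancel hmn, Function.iterate_add_apply, hb,
    iterate_map_zero, smul_zero]

variable [CharZero k] (D : Derivation k B B)

lemma succ_smul_dividedPower_succ (n : ℕ) (b : B) :
    ((n + 1 : ℕ) : k) • dividedPower D (n + 1) b = D (dividedPower D n b) := by
  have hn : ((n + 1 : ℕ) : k) ≠ 0 := Nat.cast_ne_zero.mpr n.succ_ne_zero
  rw [dividedPower_apply, dividedPower_apply, D.map_smul, Function.iterate_succ_apply', smul_smul,
    Nat.factorial_succ, Nat.cast_mul, mul_inv, mul_inv_cancel_left₀ hn]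

theorem dividedPower_mul (n : ℕ) (a b : B) :
    dividedPower D n (a * b) =
      ∑ x ∈ antidiagonal n, dividedPower D x.1 a * dividedPower D x.2 b := by
  induction n with
  | zero => simp [dividedPower]
  | succ n ih =>
    have hn : ((n + 1 : ℕ) : k) ≠ 0 := Nat.cast_ne_zero.mpr n.succ_ne_zero
    refine smul_right_injective B hn ?_
    calc ((n + 1 : ℕ) : k) • dividedPower D (n + 1) (a * b)
      _ = ∑ x ∈ antidiagonal n, D (dividedPower D x.1 a * dividedPower D x.2 b) := by
        rw [succ_smul_dividedPower_succ, ih, map_sum]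
      _ = ∑ x ∈ antidiagonal n,
            ((((x.1 + 1 : ℕ) : k) • dividedPower D (x.1 + 1) a) * dividedPower D x.2 b +
              dividedPower D x.1 a * (((x.2 + 1 : ℕ) : k) • dividedPower D (x.2 + 1) b)) := by
        simp only [succ_smul_dividedPower_succ, D.leibniz, smul_eq_mul]
        exact Finset.sum_congr rfl fun x _ ↦ by ring
      _ = ∑ x ∈ antidiagonal (n + 1),
            (((x.1 : k) • dividedPower D x.1 a) * dividedPower D x.2 b +
              dividedPower D x.1 a * ((x.2 : k) • dividedPower D x.2 b)) := by
        rw [Finset.sum_add_distrib, Finset.sum_add_distrib, Finset.Nat.sum_antidiagonal_succ,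
          Finset.Nat.sum_antidiagonal_succ']
        simp
      _ = ((n + 1 : ℕ) : k) •
            ∑ x ∈ antidiagonal (n + 1), dividedPower D x.1 a * dividedPower D x.2 b := by
        rw [Finset.smul_sum]
        refine Finset.sum_congr rfl fun x hx ↦ ?_
        rw [← mem_antidiagonal.mp hx, Nat.cast_add, add_smul, smul_mul_assoc,
          mul_smul_comm]

theorem exists_algHom_coeff_eq_dividedPower (hD : ∀ b : B, ∃ n : ℕ, (⇑D)^[n] b = 0) :
    ∃ E : B →ₐ[k] B[X], ∀ b n, (E b).coeff n = dividedPower D n b := by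
  choose N hN using hD
  let e (b : B) : B[X] := ∑ i ∈ Finset.range (N b), monomial i (dividedPower D i b)
  have he (b : B) (n : ℕ) : (e b).coeff n = dividedPower D n b := by
    simp only [e, finsetSum_coeff, coeff_monomial, Finset.sum_ite_eq', Finset.mem_range]
    split_ifs with hn
    · rfl
    · exact (dividedPower_eq_zero_of_le (hN b) (not_lt.mp hn)).symm
  let L : B →ₗ[k] B[X] :=
    { toFun := e
      map_add' a b := by ext n; simp only [coeff_add, he, map_add]
      map_smul' c b := by ext n; simp only [coeff_smul, he, map_smul, RingHom.id_apply] }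
  have hL (b : B) (n : ℕ) : (L b).coeff n = dividedPower D n b := he b n
  refine ⟨AlgHom.ofLinearMap L ?_ ?_, hL⟩
  · ext n
    rw [hL, dividedPower_apply_one, coeff_one]
  · intro a b
    ext n
    simp only [hL, dividedPower_mul, coeff_mul]

theorem exists_algHom_natDegree_pos (hD : ∀ b : B, ∃ n : ℕ, (⇑D)^[n] b = 0) {r : B}
    (hr : D r ≠ 0) : ∃ E : B →ₐ[k] B[X], 0 < (E r).natDegree := by
  obtain ⟨E, hE⟩ := exists_algHom_coeff_eq_dividedPower D hD
  refine ⟨E, Nat.zero_lt_of_lt (le_natDegree_of_ne_zero (n := 1) ?_)⟩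
  rwa [hE, dividedPower_one_apply]

end Exponential

end MakarLimanov

open MakarLimanov Polynomial in
theorem algClosure_of_adjoin_in_polynomial_ring_general {k B C : Type*} [Field k] [IsAlgClosed k]
    [CommRing B] [IsDomain B] [Algebra k B] [CommRing C] [IsDomain C] [Algebra k C] {r : B}
    (E : B →ₐ[k] C[X]) (hE : 0 < (E r).natDegree) :
    ∃ t : FractionRing B,
      (∃ b₁ b₂ : B, IsAlgebraic ↥(Algebra.adjoin k {r}) b₁ ∧
        IsAlgebraic ↥(Algebra.adjoin k {r}) b₂ ∧ b₂ ≠ 0 ∧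
        t = algebraMap B (FractionRing B) b₁ / algebraMap B (FractionRing B) b₂) ∧
      ∀ b : B, IsAlgebraic ↥(Algebra.adjoin k {r}) b →
        algebraMap B (FractionRing B) b ∈ Algebra.adjoin k {t} := by
  let R := (Subalgebra.algebraicClosure (Algebra.adjoin k {r}) B).restrictScalars k
  let r' : R := ⟨r, isAlgebraic_algebraMap
    (⟨r, Algebra.self_mem_adjoin_singleton k r⟩ : Algebra.adjoin k {r})⟩
  have : Algebra.IsAlgebraic (Algebra.adjoin k {r'}) R :=
    ⟨fun x ↦ (isAlgebraic_adjoin_singleton_map_iff (φ := R.val) Subtype.val_injective).mp x.2⟩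
  obtain ⟨ψ, hψ⟩ := exists_injective_algHom_polynomial (r := r') (φ := E.comp R.val) hE
  obtain ⟨t, ht⟩ := exists_forall_mem_adjoin_singleton (F := FractionRing R) hψ
  have hRB : Function.Injective ((IsScalarTower.toAlgHom k B (FractionRing B)).comp R.val) :=
    (IsFractionRing.injective B (FractionRing B)).comp Subtype.val_injective
  let j : FractionRing R →ₐ[k] FractionRing B := IsFractionRing.liftAlgHom hRB
  have hj (x : R) : j (algebraMap R (FractionRing R) x) = algebraMap B (FractionRing B) x :=
    IsFractionRing.lift_algebraMap hRB x
  obtain ⟨b₁, b₂, hb₂, ht_eq⟩ := IsFractionRing.div_surjective (A := R) t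
  refine ⟨j t, ⟨b₁, b₂, b₁.2, b₂.2, by simpa using nonZeroDivisors.ne_zero hb₂, ?_⟩, fun b hb ↦ ?_⟩
  · rw [← ht_eq, map_div₀, hj, hj]
  · rw [← hj ⟨b, hb⟩, ← Set.image_singleton, ← AlgHom.map_adjoin]
    exact ⟨_, ht ⟨b, hb⟩, rfl⟩

/-- (Cf. Makar-Limanov)  Let `k` be an algebraically closed field of characteristic zero and
`B` a commutative `k`-domain.  Given `r ∈ B`, if `r ∉ ML(B)` — i.e. there is a locally
nilpotent `k`-derivation `D` of `B` with `Dr ≠ 0` — then there is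
`t ∈ frac(Alg_{k[r]} B)` with `Alg_{k[r]} B ⊆ k[t]`, where `Alg_{k[r]} B` is the set of
elements of `B` algebraic over `k[r]`.  (Everything is viewed inside `frac(B)`.) -/
theorem algClosure_of_adjoin_in_polynomial_ring (k B : Type*) [Field k] [CharZero k]
    [IsAlgClosed k] [CommRing B] [IsDomain B] [Algebra k B]
    (r : B) (D : Derivation k B B) (hln : ∀ b : B, ∃ n : ℕ, (⇑D)^[n] b = 0)
    (hr : D r ≠ 0) :
    ∃ t : FractionRing B,
      (∃ b₁ b₂ : B, IsAlgebraic ↥(Algebra.adjoin k {r}) b₁ ∧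
        IsAlgebraic ↥(Algebra.adjoin k {r}) b₂ ∧ b₂ ≠ 0 ∧
        t = algebraMap B (FractionRing B) b₁ / algebraMap B (FractionRing B) b₂) ∧
      ∀ b : B, IsAlgebraic ↥(Algebra.adjoin k {r}) b →
        algebraMap B (FractionRing B) b ∈ Algebra.adjoin k {t} := by
  obtain ⟨E, hE⟩ := MakarLimanov.exists_algHom_natDegree_pos D hln hr
  exact algClosure_of_adjoin_in_polynomial_ring_general E hE
end

section
/- Let k be a field and let A be an integral domain containing k that is finitely generated as a k-algebra. Let 𝒪 be the integral closure of A in frac(A). Then the conductor ideal 𝒞_A(𝒪) = { a ∈ A : a·𝒪 ⊆ A } is nonzero; equivalently, there exists a nonzero a ∈ A with a·𝒪 ⊆ A. -/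
/-!
By Noether normalization it suffices to treat `R = k[x₁, …, xₙ]` and a finite field extension `L`
of `k(x₁, …, xₙ)`. If `L / k(x)` is separable, the trace form shows that the integral closure of
`R` in `L` is finite over `R`. In general, let `p` be the exponential characteristic and work in
an algebraic closure of `L`. The elements with some `pⁿ`-th power in `k` or among the `xᵢ` generate
a perfect field over `k`, so the generators of `L` are separable over it; only finitely many
coefficients are involved, so they are already separable over `k(C, y₁, …, yₙ)` with `yᵢ` a `pᴺ`-th
root of `xᵢ` and `C` a finite set of `pᴺ`-th roots of constants. This field is the fraction field of
`k(C)[y₁, …, yₙ]`, which is again a polynomial ring over a field, hence normal, and is finite over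
`R`. The separable case over it bounds the integral closure of `R` in `L`, because `R` is
Noetherian. Finally, a common denominator of finitely many module generators of the integral closure
lies in the conductor.
-/

section Separable

open IntermediateField Polynomial

variable {k Ω : Type*} [Field k] [Field Ω] [Algebra k Ω]

lemma isSeparable_of_intermediateField_le {F F' : IntermediateField k Ω} (hF : F ≤ F') {t : Ω}
    (ht : IsSeparable F t) : IsSeparable F' t := by
  let : Algebra F F' := (inclusion hF).toAlgebra
  have : IsScalarTower F F' Ω := .of_algebraMap_eq fun _ ↦ rfl
  exact ht.tower_top F'

lemma isSeparable_of_algebraMap_coeff_minpoly_mem {K : Type*} [Field K] [Algebra K Ω]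
    {F : IntermediateField k Ω} {t : Ω} (ht : IsSeparable K t)
    (hF : ∀ i, algebraMap K Ω ((minpoly K t).coeff i) ∈ F) : IsSeparable F t := by
  have hlift : (minpoly K t).map (algebraMap K Ω) ∈ lifts (algebraMap F Ω) := by
    refine (lifts_iff_coeff_lifts _).2 fun i ↦ ?_
    rw [coeff_map]
    exact ⟨⟨_, hF i⟩, rfl⟩
  obtain ⟨g, hg⟩ := (mem_lifts _).1 hlift
  have hg_sep : g.Separable := by
    rwa [← separable_map (algebraMap F Ω), hg, separable_map]
  have hg_root : aeval t g = 0 := by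
    rw [← eval_map_algebraMap, hg, eval_map_algebraMap, minpoly.aeval]
  exact hg_sep.of_dvd (minpoly.dvd F t hg_root)

lemma exists_finite_subset_isSeparable_adjoin {S : Set Ω} {t : Ω}
    (ht : IsSeparable (adjoin k S) t) :
    ∃ S' ⊆ S, S'.Finite ∧ IsSeparable (adjoin k S') t := by
  set f := minpoly (adjoin k S) t
  choose S' hS'S hcoeff using fun i ↦ exists_finset_of_mem_adjoin (f.coeff i).2
  refine ⟨⋃ i ∈ f.support, S' i, Set.iUnion₂_subset fun i _ ↦ hS'S i,
    f.support.finite_toSet.biUnion fun i _ ↦ (S' i).finite_toSet,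
    isSeparable_of_algebraMap_coeff_minpoly_mem ht fun i ↦ ?_⟩
  by_cases hi : f.coeff i = 0
  · rw [hi, map_zero]
    exact zero_mem _
  · exact adjoin.mono k _ _ (Set.subset_biUnion_of_mem (u := fun i ↦ (S' i : Set Ω))
      (mem_support_iff.2 hi)) (hcoeff i)

lemma exists_finite_subset_forall_isSeparable_adjoin {S T : Set Ω} (hT : T.Finite)
    (hS : ∀ t ∈ T, IsSeparable (adjoin k S) t) :
    ∃ S' ⊆ S, S'.Finite ∧ ∀ t ∈ T, IsSeparable (adjoin k S') t := by
  choose! S' hS'S hS' hsep using fun t ht ↦ exists_finite_subset_isSeparable_adjoin (hS t ht)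
  exact ⟨⋃ t ∈ T, S' t, Set.iUnion₂_subset hS'S, hT.biUnion hS', fun t ht ↦
    isSeparable_of_intermediateField_le (adjoin.mono k _ _ (Set.subset_biUnion_of_mem ht))
      (hsep t ht)⟩

end Separable

section PerfectField

open IntermediateField

variable {k Ω : Type*} [Field k] [Field Ω] [Algebra k Ω]

lemma perfectField_adjoin_of_exists_pow_eq (p : ℕ) [ExpChar k p] {S : Set Ω}
    (hk : ∀ c : k, ∃ w ∈ adjoin k S, w ^ p = algebraMap k Ω c)
    (hS : ∀ s ∈ S, ∃ w ∈ adjoin k S, w ^ p = s) : PerfectField (adjoin k S) := by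
  have : ExpChar Ω p := expChar_of_injective_algebraMap (algebraMap k Ω).injective p
  have : ExpChar (adjoin k S) p := expChar_of_injective_algebraMap (algebraMap k _).injective p
  have hroot : ∀ z ∈ adjoin k S, ∃ w ∈ adjoin k S, w ^ p = z := fun z hz ↦ by
    induction hz using adjoin_induction with
    | mem s hs => exact hS s hs
    | algebraMap c => exact hk c
    | add _ _ _ _ h₁ h₂ =>
      obtain ⟨⟨w₁, hw₁, rfl⟩, w₂, hw₂, rfl⟩ := And.intro h₁ h₂
      exact ⟨w₁ + w₂, add_mem hw₁ hw₂, add_pow_expChar w₁ w₂ p⟩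
    | inv _ _ h =>
      obtain ⟨w, hw, rfl⟩ := h
      exact ⟨w⁻¹, inv_mem hw, inv_pow w p⟩
    | mul _ _ _ _ h₁ h₂ =>
      obtain ⟨⟨w₁, hw₁, rfl⟩, w₂, hw₂, rfl⟩ := And.intro h₁ h₂
      exact ⟨w₁ * w₂, mul_mem hw₁ hw₂, mul_pow w₁ w₂ p⟩
  have : PerfectRing (adjoin k S) p := .ofSurjective _ p fun z ↦ by
    obtain ⟨w, hw, hwz⟩ := hroot z z.2
    exact ⟨⟨w, hw⟩, Subtype.ext hwz⟩
  exact PerfectRing.toPerfectField _ p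

/-- The elements of `Ω` having some `p ^ n`-th power in `k` or in `X`. For `p` the exponential
characteristic of a perfect field `Ω`, they generate a perfect extension of `k`. -/
def powRoots (k : Type*) {Ω : Type*} [Field k] [Field Ω] [Algebra k Ω] (p : ℕ) (X : Set Ω) :
    Set Ω :=
  {s | ∃ n, s ^ p ^ n ∈ Set.range (algebraMap k Ω) ∪ X}

lemma subset_powRoots (p : ℕ) (X : Set Ω) : X ⊆ powRoots k p X :=
  fun s hs ↦ ⟨0, by simpa using Or.inr hs⟩

lemma perfectField_adjoin_powRoots (p : ℕ) [ExpChar k p] [ExpChar Ω p] [PerfectRing Ω p]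
    (X : Set Ω) : PerfectField (adjoin k (powRoots k p X)) := by
  have hroot : ∀ s ∈ powRoots k p X, ∃ w ∈ adjoin k (powRoots k p X), w ^ p = s := by
    rintro s ⟨n, hn⟩
    obtain ⟨w, rfl⟩ := surjective_frobenius Ω p s
    refine ⟨w, subset_adjoin k _ ⟨n + 1, ?_⟩, rfl⟩
    rwa [pow_succ', pow_mul]
  exact perfectField_adjoin_of_exists_pow_eq p (fun c ↦ hroot _ ⟨0, by simp⟩) hroot

lemma isSeparable_adjoin_powRoots (p : ℕ) [ExpChar k p] [ExpChar Ω p] [PerfectRing Ω p]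
    (X : Set Ω) [Algebra.IsAlgebraic (adjoin k X) Ω] (t : Ω) :
    IsSeparable (adjoin k (powRoots k p X)) t := by
  have : PerfectField (adjoin k (powRoots k p X)) := perfectField_adjoin_powRoots p X
  have hle : adjoin k X ≤ adjoin k (powRoots k p X) := adjoin.mono k _ _ (subset_powRoots p X)
  let : Algebra (adjoin k X) (adjoin k (powRoots k p X)) := (inclusion hle).toAlgebra
  have : IsScalarTower (adjoin k X) (adjoin k (powRoots k p X)) Ω := .of_algebraMap_eq fun _ ↦ rfl
  have : Algebra.IsAlgebraic (adjoin k (powRoots k p X)) Ω := .tower_top (K := adjoin k X) _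
  exact Algebra.IsSeparable.isSeparable _ t

lemma exists_pow_expChar_pow_roots_isSeparable (p : ℕ) [ExpChar k p] [ExpChar Ω p]
    [PerfectRing Ω p] {ι : Type*} (x : ι → Ω) [Algebra.IsAlgebraic (adjoin k (Set.range x)) Ω]
    {T : Set Ω} (hT : T.Finite) :
    ∃ (N : ℕ) (C : Set Ω) (y : ι → Ω), C.Finite ∧
      (∀ c ∈ C, c ^ p ^ N ∈ Set.range (algebraMap k Ω)) ∧ (∀ i, y i ^ p ^ N = x i) ∧
      ∀ t ∈ T, IsSeparable (adjoin k (C ∪ Set.range y)) t := by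
  obtain ⟨S, hS_roots, hS_fin, hsep⟩ := exists_finite_subset_forall_isSeparable_adjoin hT
    fun t _ ↦ isSeparable_adjoin_powRoots (k := k) p (Set.range x) t
  have hS_pow : ∀ s ∈ S, ∃ n, s ^ p ^ n ∈ Set.range (algebraMap k Ω) ∪ Set.range x := hS_roots
  choose! n hn using hS_pow
  obtain ⟨N, hN⟩ := (hS_fin.image n).bddAbove
  choose y hy using fun i ↦ (bijective_iterateFrobenius Ω p N).surjective (x i)
  refine ⟨N, {s ∈ S | s ^ p ^ N ∈ Set.range (algebraMap k Ω)}, y,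
    hS_fin.subset (Set.sep_subset _ _), fun _ hc ↦ hc.2, hy, fun t ht ↦
    isSeparable_of_intermediateField_le (adjoin_le_iff.2 fun s hs ↦ ?_) (hsep t ht)⟩
  obtain ⟨m, rfl⟩ := Nat.exists_eq_add_of_le (hN ⟨s, hs, rfl⟩)
  obtain ⟨c, hc⟩ | ⟨i, hi⟩ := hn s hs
  · refine subset_adjoin k _ (Or.inl ⟨hs, c ^ p ^ m, ?_⟩)
    rw [map_pow, hc, ← pow_mul, ← pow_add]
  · have hys : y i ^ p ^ m = s := iterateFrobenius_inj Ω p (n s) <| by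
      rw [iterateFrobenius_def, iterateFrobenius_def, ← hi, ← hy, iterateFrobenius_def, ← pow_mul,
        ← pow_add, add_comm]
    exact hys ▸ pow_mem (subset_adjoin k (_ ∪ Set.range y) (Or.inr ⟨i, rfl⟩)) _

end PerfectField

lemma algebraicIndependent_of_pow_expChar_pow {R A ι : Type*} [CommRing R] [IsReduced R]
    [CommRing A] [Algebra R A] (p N : ℕ) [ExpChar R p] [ExpChar A p] {x y : ι → A}
    (hx : AlgebraicIndependent R x) (hy : ∀ i, y i ^ p ^ N = x i) : AlgebraicIndependent R y := by
  obtain rfl : iterateFrobenius A p N ∘ y = x := funext hy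
  refine hx.of_ringHom_of_comp_eq (iterateFrobenius R p N) (iterateFrobenius A p N)
    (iterateFrobenius_inj R p N) (RingHom.ext fun c ↦ ?_)
  simp [iterateFrobenius_def]

lemma isIntegrallyClosed_adjoin_union_range {k A ι : Type*} [Field k] [CommRing A] [IsDomain A]
    [Algebra k A] {C : Set A} (hC : ∀ c ∈ C, IsIntegral k c) {y : ι → A}
    (hy : AlgebraicIndependent k y) :
    IsIntegrallyClosed (Algebra.adjoin k (C ∪ Set.range y)) := by
  have : Algebra.IsIntegral k (Algebra.adjoin k C) := .adjoin hC
  have hfield : IsField (Algebra.adjoin k C) :=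
    isField_of_isIntegral_of_isField' (Field.toIsField k)
  have := hfield.isPrincipalIdealRing
  have hy' := hy.extendScalars (Algebra.adjoin k C)
  rw [Algebra.adjoin_union_eq_adjoin_adjoin]
  exact .of_equiv hy'.aevalEquiv.toRingEquiv

lemma finite_adjoin_of_forall_isIntegral {k R A : Type*} [CommRing k] [CommRing R] [CommRing A]
    [Algebra k R] [Algebra k A] [Algebra R A] [IsScalarTower k R A] {S : Set A} (hS : S.Finite)
    (hint : ∀ s ∈ S, IsIntegral R s) [Algebra R (Algebra.adjoin k S)]
    [IsScalarTower R (Algebra.adjoin k S) A] : Module.Finite R (Algebra.adjoin k S) := by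
  have : IsScalarTower k R (Algebra.adjoin k S) := .of_algebraMap_eq fun c ↦ Subtype.ext <| by
    change algebraMap k A c = algebraMap (Algebra.adjoin k S) A _
    rw [← IsScalarTower.algebraMap_apply, ← IsScalarTower.algebraMap_apply]
  have hle : Algebra.adjoin k S ≤ (integralClosure R A).restrictScalars k :=
    Algebra.adjoin_le hint
  have : Algebra.IsIntegral R (Algebra.adjoin k S) :=
    ⟨fun z ↦ (isIntegral_algebraMap_iff Subtype.val_injective).1 (hle z.2)⟩
  have := Algebra.FiniteType.adjoin_of_finite (R := k) hS
  have := Algebra.FiniteType.of_restrictScalars_finiteType k R (Algebra.adjoin k S)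
  exact Algebra.IsIntegral.finite

lemma exists_fg_forall_isIntegral_mem_of_isSeparable (A F : Type*) {Ω : Type*} [CommRing A]
    [IsDomain A] [IsNoetherianRing A] [IsIntegrallyClosed A] [Field F] [Algebra A F]
    [IsFractionRing A F] [Field Ω] [Algebra A Ω] [Algebra F Ω] [IsScalarTower A F Ω] {T : Set Ω}
    (hT : T.Finite) (hsep : ∀ t ∈ T, IsSeparable F t) :
    ∃ M : Submodule A Ω, M.FG ∧ ∀ z ∈ IntermediateField.adjoin F T, IsIntegral A z → z ∈ M := by
  set E := IntermediateField.adjoin F T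
  have : Finite T := hT
  have : FiniteDimensional F E :=
    IntermediateField.finiteDimensional_adjoin fun t ht ↦ (hsep t ht).isIntegral
  have : Algebra.IsSeparable F E :=
    (IntermediateField.isSeparable_adjoin_iff_isSeparable F Ω).2 hsep
  have : Module.Finite A (integralClosure A E) := IsIntegralClosure.finite A F E _
  let i := E.val.restrictScalars A
  have hfg : (integralClosure A E).toSubmodule.FG := (Submodule.fg_top _).1 Module.Finite.fg_top
  exact ⟨(integralClosure A E).toSubmodule.map i.toLinearMap, hfg.map _, fun z hzE hz ↦
    ⟨⟨z, hzE⟩, (isIntegral_algHom_iff i i.injective).1 hz, rfl⟩⟩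

section Finiteness

variable (k : Type*) [Field k]

open MvPolynomial in
open scoped IntermediateField.algebraAdjoinAdjoin in
lemma exists_fg_forall_isIntegral_mvPolynomial_mem {ι Ω : Type*} [Finite ι] [Field Ω]
    [PerfectField Ω] [Algebra k Ω] [Algebra (MvPolynomial ι k) Ω]
    [IsScalarTower k (MvPolynomial ι k) Ω] [FaithfulSMul (MvPolynomial ι k) Ω]
    [Algebra.IsAlgebraic (MvPolynomial ι k) Ω] {T : Set Ω} (hT : T.Finite) :
    ∃ M : Submodule (MvPolynomial ι k) Ω, M.FG ∧
      ∀ z ∈ IntermediateField.adjoin k T, IsIntegral (MvPolynomial ι k) z → z ∈ M := by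
  obtain ⟨p, _⟩ := ExpChar.exists k
  have : ExpChar Ω p := expChar_of_injective_algebraMap (algebraMap k Ω).injective p
  have hx : IsTranscendenceBasis k (algebraMap (MvPolynomial ι k) Ω ∘ X) :=
    (IsTranscendenceBasis.mvPolynomial ι k).algebraMap_comp
  have := hx.isAlgebraic_field
  obtain ⟨N, C, y, hC_fin, hC, hy, hsep⟩ :=
    exists_pow_expChar_pow_roots_isSeparable (k := k) p (algebraMap (MvPolynomial ι k) Ω ∘ X) hT
  have hpos : 0 < p ^ N := expChar_pow_pos k p N
  have hC_int : ∀ c ∈ C, IsIntegral k c := fun c hc ↦ by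
    obtain ⟨a, ha⟩ := hC c hc
    exact .of_pow hpos (ha ▸ isIntegral_algebraMap)
  have := isIntegrallyClosed_adjoin_union_range hC_int
    (algebraicIndependent_of_pow_expChar_pow p N hx.1 hy)
  set B := Algebra.adjoin k (C ∪ Set.range y)
  let φ : MvPolynomial ι k →ₐ[k] B :=
    aeval fun i ↦ ⟨y i, Algebra.subset_adjoin (Or.inr ⟨i, rfl⟩)⟩ ^ p ^ N
  let := φ.toAlgebra
  have hφ : B.val.comp φ = IsScalarTower.toAlgHom k (MvPolynomial ι k) Ω := by
    ext i
    simp [φ, hy]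
  have : IsScalarTower (MvPolynomial ι k) B Ω := .of_algebraMap_eq fun f ↦ congr($hφ f).symm
  have : Module.Finite (MvPolynomial ι k) B := by
    refine finite_adjoin_of_forall_isIntegral (hC_fin.union (Set.finite_range y)) ?_
    rintro s (hs | ⟨i, rfl⟩)
    · exact (hC_int s hs).tower_top
    · exact .of_pow hpos (hy i ▸ isIntegral_algebraMap)
  have : IsNoetherianRing B := .of_finite (MvPolynomial ι k) B
  let F := IntermediateField.adjoin k (C ∪ Set.range y)
  have hT_le : IntermediateField.adjoin k T ≤ (IntermediateField.adjoin F T).restrictScalars k :=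
    IntermediateField.adjoin_le_iff.2 (IntermediateField.subset_adjoin F T)
  obtain ⟨M, hM, hM_mem⟩ := exists_fg_forall_isIntegral_mem_of_isSeparable B F hT hsep
  exact ⟨M.restrictScalars _, hM.restrictScalars, fun z hz hz_int ↦
    hM_mem z (hT_le hz) hz_int.tower_top⟩

lemma finite_integralClosure_mvPolynomial (ι L : Type*) [Finite ι] [Field L]
    [Algebra k L] [Algebra (MvPolynomial ι k) L] [IsScalarTower k (MvPolynomial ι k) L]
    [FaithfulSMul (MvPolynomial ι k) L] [Algebra.IsAlgebraic (MvPolynomial ι k) L]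
    [Algebra.EssFiniteType k L] :
    Module.Finite (MvPolynomial ι k) (integralClosure (MvPolynomial ι k) L) := by
  obtain ⟨T, hT⟩ := IntermediateField.fg_top k L
  let i := IsScalarTower.toAlgHom (MvPolynomial ι k) L (AlgebraicClosure L)
  have : Algebra.IsAlgebraic (MvPolynomial ι k) (AlgebraicClosure L) := .trans _ L _
  have : FaithfulSMul (MvPolynomial ι k) (AlgebraicClosure L) := .trans _ L _
  obtain ⟨M, hM, hM_mem⟩ :=
    exists_fg_forall_isIntegral_mvPolynomial_mem k (ι := ι) (T.finite_toSet.image i)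
  have hi : ∀ z, i z ∈ IntermediateField.adjoin k (i '' T) := fun z ↦ by
    have hmap := IntermediateField.adjoin_map k (T : Set L) (i.restrictScalars k)
    rw [hT] at hmap
    exact hmap ▸ ⟨z, trivial, rfl⟩
  have := isNoetherian_of_fg_of_noetherian M hM
  let j := i.toLinearMap.restrict (p := (integralClosure _ L).toSubmodule) (q := M)
    fun z hz ↦ hM_mem _ (hi z) (hz.map i)
  exact .of_injective j fun a b hab ↦ Subtype.ext (i.injective congr(($hab).1))

theorem finite_integralClosure_of_finiteType (A L : Type*) [CommRing A] [Algebra k A]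
    [Algebra.FiniteType k A] [Field L] [Algebra A L] [FaithfulSMul A L] [Algebra.IsAlgebraic A L]
    [Algebra.EssFiniteType A L] : Module.Finite A (integralClosure A L) := by
  have : IsDomain A := (FaithfulSMul.algebraMap_injective A L).isDomain
  obtain ⟨n, g, hg_inj, hg_fin⟩ := exists_finite_inj_algHom_of_fg k A
  let R := MvPolynomial (Fin n) k
  let : Algebra R A := g.toAlgebra
  let : Algebra R L := .compHom L (algebraMap R A)
  let : Algebra k L := .compHom L (algebraMap k A)
  have : IsScalarTower R A L := .of_algebraMap_eq fun _ ↦ rfl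
  have : IsScalarTower k A L := .of_algebraMap_eq fun _ ↦ rfl
  have : IsScalarTower k R L := .of_algebraMap_eq fun c ↦ congr(algebraMap A L $(g.commutes c)).symm
  have : Module.Finite R A := hg_fin
  have : FaithfulSMul R A := (faithfulSMul_iff_algebraMap_injective R A).2 hg_inj
  have : FaithfulSMul R L := .trans R A L
  have : Algebra.IsAlgebraic R L := .trans R A L
  have : Algebra.EssFiniteType k L := .comp k A L
  have := finite_integralClosure_mvPolynomial k (Fin n) L
  let i : integralClosure A L →ₗ[R] integralClosure R L :=
    (LinearMap.id (R := R) (M := L)).restrict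
      (p := (integralClosure A L).toSubmodule.restrictScalars R)
      (q := (integralClosure R L).toSubmodule) fun z hz ↦ isIntegral_trans z hz
  have : Module.Finite R (integralClosure A L) :=
    .of_injective i fun a b hab ↦ Subtype.ext congr(($hab).1)
  exact .of_restrictScalars_finite R A _

end Finiteness

/-- Let `k` be a field and `A` an integral domain containing `k` that is finitely generated
as a `k`-algebra.  Let `𝒪` be the integral closure of `A` in `frac(A)`.  Then the conductor
ideal `𝒞_A(𝒪)` is nonzero: there is a nonzero `a ∈ A` with `a·𝒪 ⊆ A`. -/
theorem conductor_of_affine_domain_ne_zero (k A : Type*) [Field k] [CommRing A] [IsDomain A]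
    [Algebra k A] [Algebra.FiniteType k A] :
    ∃ a : A, a ≠ 0 ∧ ∀ x ∈ integralClosure A (FractionRing A),
      ∃ b : A, algebraMap A (FractionRing A) a * x = algebraMap A (FractionRing A) b := by
  have : Algebra.EssFiniteType A (FractionRing A) := .of_isLocalization _ (nonZeroDivisors A)
  have := IsLocalization.isAlgebraic (R := A) (FractionRing A) (nonZeroDivisors A)
  have := finite_integralClosure_of_finiteType k A (FractionRing A)
  have hfg : (integralClosure A (FractionRing A)).toSubmodule.FG :=
    (Submodule.fg_top _).1 Module.Finite.fg_top
  obtain ⟨a, ha, h⟩ := FractionalIdeal.isFractional_of_fg (S := nonZeroDivisors A) hfg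
  refine ⟨a, nonZeroDivisors.ne_zero ha, fun x hx ↦ ?_⟩
  obtain ⟨b, hb⟩ := h x hx
  exact ⟨b, by rw [hb, Algebra.smul_def]⟩
end

section
/- Let k be a field of characteristic zero, and let R and S be integral domains containing k with tr.deg_k R = tr.deg_k S = 1. If for some n ≥ 0 the polynomial rings R[x_1,…,x_n] and S[y_1,…,y_n] are isomorphic as k-algebras, then R and S are isomorphic as k-algebras. -/
/-!
If some element of `R` transcendental over `k` is mapped by `e` into `S`, then `R` and `S` are both
algebraically closed in the polynomial ring, and algebraic over `k` together with that element, so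
`e` maps `R` onto `S`.

Otherwise every unit of `S` is algebraic over `k`, so `S` has enough maximal ideals with residue
field algebraic over `k` to specialize its elements into an algebraic closure `F` of `k` while
keeping a chosen nonconstant coefficient. This embeds `R` into `F[t]`, and Lüroth's theorem followed
by Galois descent from `F` shows that the normalization of `R` is a polynomial ring in one variable
over its field of constants. The same holds for `S`; as `e` extends to the normalizations and
identifies the constants, the normalizations are isomorphic. Finally `R` is already normal: the
normalization `R'` is a principal ideal domain, and for `z` in `R'` the ideal of all `r` in `R` with
`r z` in `R` contains all coefficients of a nonzero element coming from `S`. A generator of the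
extension of this ideal to `R'` divides that element, so it is a coefficient on both sides, hence
algebraic over `k`, hence a unit.
-/

/-- The transcendence degree of an `R`-algebra `A`: the supremum of the cardinalities of
algebraically independent subsets of `A` over `R`. -/
noncomputable def trdeg (R A : Type*) [CommRing R] [CommRing A] [Algebra R A] : Cardinal :=
  ⨆ s : { s : Set A // AlgebraicIndependent R ((↑) : s → A) }, Cardinal.mk s.1

open Polynomial

section TranscendenceDegreeOne

lemma trdeg_eq_one_iff_of_isAlgebraic (k A : Type*) {B : Type*} [CommRing k] [Nontrivial k]
    [CommRing A] [CommRing B] [IsDomain B] [Algebra k A] [Algebra k B] [Algebra A B]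
    [IsScalarTower k A B] [FaithfulSMul k A] [FaithfulSMul A B] [Algebra.IsAlgebraic A B] :
    Algebra.trdeg k A = 1 ↔ Algebra.trdeg k B = 1 := by
  have h := lift_trdeg_add_eq k A B
  rw [trdeg_eq_zero (R := A), Cardinal.lift_zero, add_zero] at h
  rw [← Cardinal.lift_eq_one, h, Cardinal.lift_eq_one]

variable {k A B : Type*} [Field k] [CommRing A] [IsDomain A] [Algebra k A] [CommRing B]
  [Algebra k B]

lemma trdeg_fractionRing_eq_one_iff :
    Algebra.trdeg k (FractionRing A) = 1 ↔ Algebra.trdeg k A = 1 :=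
  have : Algebra.IsAlgebraic A (FractionRing A) := IsLocalization.isAlgebraic _ (nonZeroDivisors A)
  (trdeg_eq_one_iff_of_isAlgebraic k A).symm

lemma isUnit_of_isAlgebraic {x : A} (hx : IsAlgebraic k x) (h0 : x ≠ 0) : IsUnit x :=
  hx.isIntegral.isUnit h0

lemma isAlgebraic_adjoin_singleton_of_trdeg_le_one (hA : Algebra.trdeg k A ≤ 1) {x : A}
    (hx : Transcendental k x) : Algebra.IsAlgebraic (Algebra.adjoin k {x}) A := by
  have hbasis : IsTranscendenceBasis k fun _ : Unit ↦ x :=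
    AlgebraicIndependent.isTranscendenceBasis_of_lift_trdeg_le_of_finite
      (algebraicIndependent_unique_type_iff.2 hx) (by simpa using hA)
  have := hbasis.isAlgebraic
  rwa [Set.range_const] at this

lemma isAlgebraic_apply_of_apply_eq_zero (hA : Algebra.trdeg k A ≤ 1) (θ : A →ₐ[k] B) {p : A}
    (hp : p ≠ 0) (hθ : θ p = 0) (a : A) : IsAlgebraic k (θ a) := by
  by_cases ha : IsAlgebraic k a
  · exact ha.algHom θ
  have := isAlgebraic_adjoin_singleton_of_trdeg_le_one hA ha
  obtain ⟨⟨q, hq⟩, hq0, hdvd⟩ := (Algebra.IsAlgebraic.isAlgebraic (R := Algebra.adjoin k {a})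
    p).exists_nonzero_dvd (mem_nonZeroDivisors_of_ne_zero hp)
  rw [Algebra.adjoin_singleton_eq_range_aeval] at hq
  obtain ⟨f, rfl⟩ := hq
  refine ⟨f, by rintro rfl; exact hq0 (Subtype.ext (map_zero _)), ?_⟩
  rw [aeval_algHom_apply]
  exact zero_dvd_iff.1 (hθ ▸ map_dvd θ hdvd)

end TranscendenceDegreeOne

section Constants

variable {σ τ : Type*}

lemma mem_range_C_of_map_mem_range_C {A B : Type*} [CommRing A] [CommRing B] {f : A →+* B}
    (hf : Function.Injective f) {p : MvPolynomial σ A}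
    (hp : MvPolynomial.map f p ∈ Set.range (MvPolynomial.C (σ := σ))) :
    p ∈ Set.range (MvPolynomial.C (σ := σ)) := by
  obtain ⟨b, hb⟩ := hp
  refine ⟨p.coeff 0, MvPolynomial.map_injective f hf ?_⟩
  rw [← hb, MvPolynomial.map_C, ← MvPolynomial.coeff_map, ← hb, MvPolynomial.coeff_zero_C]

lemma mem_range_C_of_isAlgebraic {S : Type*} [CommRing S] [IsDomain S] {f : MvPolynomial σ S}
    (hf : IsAlgebraic S f) : f ∈ Set.range (MvPolynomial.C (σ := σ)) := by
  rcases eq_or_ne f 0 with rfl | h0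
  · exact ⟨0, map_zero _⟩
  have hinj := IsFractionRing.injective S (FractionRing S)
  refine mem_range_C_of_map_mem_range_C hinj ?_
  have halg : IsAlgebraic (FractionRing S) (MvPolynomial.map (algebraMap S (FractionRing S)) f) :=
    (hf.algHom (MvPolynomial.mapAlgHom (Algebra.ofId S (FractionRing S)))).extendScalars hinj
  obtain ⟨c, -, hc⟩ := MvPolynomial.isUnit_iff_eq_C_of_isReduced.1
    (isUnit_of_isAlgebraic halg ((map_ne_zero_iff _ (MvPolynomial.map_injective _ hinj)).2 h0))
  exact ⟨c, hc.symm⟩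

variable {k R S : Type*} [Field k] [CommRing R] [Algebra k R] [CommRing S] [Algebra k S]

/-- The `k`-algebra of coefficients `R` embeds into `R[σ]`; an isomorphism `e : R[σ] ≃ S[τ]`
*separates coefficients* if only elements algebraic over `k` are coefficients on both sides. -/
def SeparatesCoefficients (e : MvPolynomial σ R ≃ₐ[k] MvPolynomial τ S) : Prop :=
  ∀ ⦃r : R⦄ ⦃s : S⦄, e (MvPolynomial.C r) = MvPolynomial.C s → IsAlgebraic k r

lemma isAlgebraic_C_iff {s : S} :
    IsAlgebraic k (MvPolynomial.C s : MvPolynomial σ S) ↔ IsAlgebraic k s :=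
  isAlgebraic_algebraMap_iff (MvPolynomial.C_injective σ S)

lemma isAlgebraic_iff_of_apply_C_eq_C {e : MvPolynomial σ R ≃ₐ[k] MvPolynomial τ S} {r : R} {s : S}
    (h : e (MvPolynomial.C r) = MvPolynomial.C s) : IsAlgebraic k r ↔ IsAlgebraic k s := by
  rw [← isAlgebraic_C_iff (σ := τ) (s := s), ← h, ← isAlgebraic_C_iff (σ := σ)]
  exact (isAlgebraic_algHom_iff e.toAlgHom e.injective).symm

namespace SeparatesCoefficients

variable {e : MvPolynomial σ R ≃ₐ[k] MvPolynomial τ S}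

lemma symm (he : SeparatesCoefficients e) : SeparatesCoefficients e.symm := fun s r h ↦ by
  have h' : e (MvPolynomial.C r) = MvPolynomial.C s := by rw [← h, e.apply_symm_apply]
  exact (isAlgebraic_iff_of_apply_C_eq_C h').1 (he h')

lemma exists_coeff_ne_zero (he : SeparatesCoefficients e) {r : R} (hr : Transcendental k r) :
    ∃ m ≠ 0, (e (MvPolynomial.C r)).coeff m ≠ 0 := by
  by_contra! h
  refine hr (he (s := (e (MvPolynomial.C r)).coeff 0) (MvPolynomial.ext _ _ fun m ↦ ?_))
  classical
  rw [MvPolynomial.coeff_C]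
  split_ifs with hm
  · rw [hm]
  · exact h m (Ne.symm hm)

variable [IsDomain S]

lemma isAlgebraic_of_isUnit (he : SeparatesCoefficients e) {r : R} (hr : IsUnit r) :
    IsAlgebraic k r := by
  obtain ⟨s, -, hs⟩ := MvPolynomial.isUnit_iff_eq_C_of_isReduced.1
    ((hr.map (MvPolynomial.C (σ := σ))).map e)
  exact he hs

end SeparatesCoefficients

lemma nonempty_algEquiv_of_forall_mem_range_C {e : MvPolynomial σ R ≃ₐ[k] MvPolynomial τ S}
    (h : ∀ r : R, e (MvPolynomial.C r) ∈ Set.range (MvPolynomial.C (σ := τ)))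
    (h' : ∀ s : S, e.symm (MvPolynomial.C s) ∈ Set.range (MvPolynomial.C (σ := σ))) :
    Nonempty (R ≃ₐ[k] S) := by
  let ι : R →ₐ[k] MvPolynomial σ R := IsScalarTower.toAlgHom k R _
  let κ : S →ₐ[k] MvPolynomial τ S := IsScalarTower.toAlgHom k S _
  have hι : Function.Injective ι := MvPolynomial.C_injective σ R
  have hκ : Function.Injective κ := MvPolynomial.C_injective τ S
  have hrange : (e.toAlgHom.comp ι).range = κ.range := by
    refine le_antisymm ?_ ?_
    · rintro _ ⟨r, rfl⟩
      exact h r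
    · rintro _ ⟨s, rfl⟩
      obtain ⟨r, hr⟩ := h' s
      exact ⟨r, (e.symm_apply_eq.1 hr.symm).symm⟩
  exact ⟨(AlgEquiv.ofInjective (e.toAlgHom.comp ι) (e.injective.comp hι)).trans
    ((Subalgebra.equivOfEq _ _ hrange).trans (AlgEquiv.ofInjective κ hκ).symm)⟩

variable [IsDomain R] [IsDomain S]

lemma apply_mem_range_C_of_transcendental (hR : Algebra.trdeg k R ≤ 1)
    {θ : R →ₐ[k] MvPolynomial σ S} (hθ : Function.Injective θ) {x : R} (hx : Transcendental k x)
    (hxC : θ x ∈ Set.range (MvPolynomial.C (σ := σ))) (r : R) :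
    θ r ∈ Set.range (MvPolynomial.C (σ := σ)) := by
  obtain ⟨s, hs⟩ := hxC
  have := isAlgebraic_adjoin_singleton_of_trdeg_le_one hR hx
  let ι : S →ₐ[k] MvPolynomial σ S := IsScalarTower.toAlgHom k S _
  let ε : MvPolynomial σ S →ₐ[k] S :=
    (MvPolynomial.aeval (0 : σ → S) : MvPolynomial σ S →ₐ[S] S).restrictScalars k
  let f : Algebra.adjoin k {x} →ₐ[k] S := ε.comp (θ.comp (Algebra.adjoin k {x}).val)
  have hf : ι.comp f = θ.comp (Algebra.adjoin k {x}).val :=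
    AlgHom.adjoin_ext fun y hy ↦ by
      obtain rfl : y = x := hy
      simp [f, ι, ε, ← hs, MvPolynomial.algebraMap_eq]
  have hf_inj : Function.Injective f := .of_comp (f := ι) <| by
    rw [← AlgHom.coe_comp, hf]
    exact hθ.comp Subtype.val_injective
  exact mem_range_C_of_isAlgebraic <|
    (Algebra.IsAlgebraic.isAlgebraic (R := Algebra.adjoin k {x}) r).ringHom_of_comp_eq f θ hf_inj
      (congrArg AlgHom.toRingHom hf)

lemma nonempty_algEquiv_or_separatesCoefficients (hR : Algebra.trdeg k R ≤ 1)
    (hS : Algebra.trdeg k S ≤ 1) (e : MvPolynomial σ R ≃ₐ[k] MvPolynomial τ S) :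
    Nonempty (R ≃ₐ[k] S) ∨ SeparatesCoefficients e := by
  refine or_iff_not_imp_right.2 fun he ↦ ?_
  simp only [SeparatesCoefficients, not_forall] at he
  obtain ⟨r, s, h, hr⟩ := he
  have hs : Transcendental k s := fun hs ↦ hr ((isAlgebraic_iff_of_apply_C_eq_C h).2 hs)
  let ι : R →ₐ[k] MvPolynomial σ R := IsScalarTower.toAlgHom k R _
  let κ : S →ₐ[k] MvPolynomial τ S := IsScalarTower.toAlgHom k S _
  exact nonempty_algEquiv_of_forall_mem_range_C (e := e)
    (apply_mem_range_C_of_transcendental (θ := e.toAlgHom.comp ι) hR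
      (e.injective.comp (MvPolynomial.C_injective σ R)) hr ⟨s, h.symm⟩)
    (apply_mem_range_C_of_transcendental (θ := e.symm.toAlgHom.comp κ) hS
      (e.symm.injective.comp (MvPolynomial.C_injective τ S)) hs
      ⟨r, (e.symm_apply_eq.2 h.symm).symm⟩)

end Constants

section Luroth

lemma coeff_zero_minpoly_ne_zero {A B : Type*} [CommRing A] [IsDomain A] [IsIntegrallyClosed A]
    [CommRing B] [IsDomain B] [Algebra A B] [FaithfulSMul A B] {x : B} (hx : IsIntegral A x)
    (h0 : x ≠ 0) : (minpoly A x).coeff 0 ≠ 0 := fun h ↦ by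
  obtain ⟨q, hq, hqx⟩ := hx.isAlgebraic.exists_nonzero_coeff_and_aeval_eq_zero
    (mem_nonZeroDivisors_of_ne_zero h0)
  obtain ⟨r, rfl⟩ := minpoly.isIntegrallyClosed_dvd hx hqx
  exact hq (by rw [mul_coeff_zero, h, zero_mul])

lemma transcendental_of_natDegree_ne_zero {F : Type*} [Field F] {p : F[X]} (hp : p.natDegree ≠ 0) :
    Transcendental F p :=
  Polynomial.transcendental p hp <| mem_nonZeroDivisors_of_ne_zero <| leadingCoeff_ne_zero.2 <|
    ne_zero_of_natDegree_gt (Nat.pos_of_ne_zero hp)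

variable {F N : Type*} [Field F] [CommRing N] [Algebra F N] [Algebra N F[X]]
  [IsScalarTower F N F[X]]

lemma algebraMap_C_eq_C (c : F) : algebraMap N F[X] (algebraMap F N c) = C c :=
  (IsScalarTower.algebraMap_apply F N F[X] c).symm

lemma injective_aeval_of_natDegree_ne_zero {v : N} (hv : (algebraMap N F[X] v).natDegree ≠ 0) :
    Function.Injective (aeval v : F[X] →ₐ[F] N) :=
  transcendental_iff_injective.1 fun h ↦
    transcendental_of_natDegree_ne_zero hv (h.algebraMap (A := F[X]))

variable [IsDomain N] [IsIntegrallyClosed N] [FaithfulSMul N F[X]] [Algebra.IsIntegral N F[X]]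

-- The minimal polynomial of `X` divides `f(T) - f` for every `f ∈ N ⊆ F[X]`; set `T = 0`.
lemma coeff_zero_minpoly_X_dvd_sub (a : N) :
    (minpoly N (X : F[X])).coeff 0 ∣ a - algebraMap F N ((algebraMap N F[X] a).coeff 0) := by
  have hX : IsIntegral N (X : F[X]) := Algebra.IsIntegral.isIntegral X
  have hmap : aeval (X : F[X]) ((algebraMap N F[X] a).map (algebraMap F N)) =
      algebraMap N F[X] a := by rw [aeval_map_algebraMap, aeval_X_left_apply]
  have hdvd : minpoly N (X : F[X]) ∣ C a - (algebraMap N F[X] a).map (algebraMap F N) :=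
    minpoly.isIntegrallyClosed_dvd hX (by rw [map_sub, aeval_C, hmap, sub_self])
  obtain ⟨q, hq⟩ := hdvd
  refine ⟨q.coeff 0, ?_⟩
  rw [← mul_coeff_zero, ← hq, coeff_sub, coeff_C_zero, coeff_map]

theorem exists_bijective_aeval_of_isIntegral :
    ∃ v : N, Function.Bijective (aeval v : F[X] →ₐ[F] N) := by
  have hinj := FaithfulSMul.algebraMap_injective N F[X]
  let v : N := (minpoly N (X : F[X])).coeff 0
  have hv0 : algebraMap N F[X] v ≠ 0 := (map_ne_zero_iff _ hinj).2 <|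
    coeff_zero_minpoly_ne_zero (Algebra.IsIntegral.isIntegral X) X_ne_zero
  have hXv : X ∣ algebraMap N F[X] v := by
    have h := map_dvd (aeval (X : F[X])) (X_dvd_sub_C (p := minpoly N (X : F[X])))
    rwa [map_sub, minpoly.aeval, zero_sub, dvd_neg, aeval_X, aeval_C] at h
  have hdeg : (algebraMap N F[X] v).natDegree ≠ 0 := fun h ↦ by
    simpa [h] using natDegree_le_of_dvd hXv hv0
  refine ⟨v, injective_aeval_of_natDegree_ne_zero hdeg, fun a ↦ ?_⟩
  induction hn : (algebraMap N F[X] a).natDegree using Nat.strong_induction_on generalizing a with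
  | _ n ih =>
    obtain ⟨b, hb⟩ := coeff_zero_minpoly_X_dvd_sub (F := F) a
    generalize (algebraMap N F[X] a).coeff 0 = c at hb
    obtain rfl : a = v * b + algebraMap F N c := sub_eq_iff_eq_add.1 hb
    rcases eq_or_ne b 0 with rfl | hb0
    · exact ⟨C c, by rw [aeval_C, mul_zero, zero_add]⟩
    have hlt : (algebraMap N F[X] b).natDegree < n := by
      rw [← hn, map_add, map_mul, algebraMap_C_eq_C, natDegree_add_C,
        natDegree_mul hv0 ((map_ne_zero_iff _ hinj).2 hb0)]
      exact Nat.lt_add_of_pos_left (Nat.pos_of_ne_zero hdeg)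
    obtain ⟨p, hp⟩ := ih _ hlt b rfl
    exact ⟨X * p + C c, by rw [map_add, map_mul, aeval_X, aeval_C, hp]⟩

end Luroth

section GaloisDescent

lemma sum_sub_div_smul_sum {ι F V : Type*} [DecidableEq ι] [Field F] [AddCommGroup V] [Module F V]
    (c d : ι → F) (f : ι → V) {s : Finset ι} {i : ι} (hi : i ∈ s) (hdi : d i ≠ 0) :
    ∑ l ∈ s, c l • f l - (c i / d i) • ∑ l ∈ s, d l • f l =
      ∑ l ∈ s.erase i, (c l - c i / d i * d l) • f l := by
  rw [Finset.smul_sum, ← Finset.sum_sub_distrib, ← Finset.add_sum_erase _ _ hi]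
  simp only [← mul_smul, ← sub_smul, div_mul_cancel₀ _ hdi, sub_self, zero_add]

variable {F K M : Type*} [Field F] [Field K] [Field M] [Algebra F M] [Algebra K M] [IsGalois K M]

-- Artin's argument: `σ x - x` has fewer terms than `x` once some coefficient of `x` is `1`.
lemma sum_mem_span_of_galois_stable
    (hF : ∀ (σ : M ≃ₐ[K] M) (c : F), ∃ d : F, σ (algebraMap F M c) = algebraMap F M d)
    {V : Submodule F M} (hV : ∀ (σ : M ≃ₐ[K] M), ∀ x ∈ V, σ x ∈ V) (s : Finset K) (c : K → F)
    (hx : ∑ i ∈ s, c i • algebraMap K M i ∈ V) :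
    ∑ i ∈ s, c i • algebraMap K M i ∈ Submodule.span F (V ∩ Set.range (algebraMap K M)) := by
  classical
  choose ρ hρ using hF
  induction s using Finset.strongInduction generalizing c with
  | H s ih =>
    by_cases hc : ∀ i ∈ s, c i = 0
    · rw [Finset.sum_eq_zero fun i hi ↦ by rw [hc i hi, zero_smul]]
      exact zero_mem _
    push Not at hc
    obtain ⟨j, hj, hcj⟩ := hc
    wlog hcj1 : c j = 1 generalizing c
    · have h := this (fun i ↦ (c j)⁻¹ * c i)
      simp only [mul_smul, ← Finset.smul_sum] at h
      rw [← Submodule.smul_mem_iff _ (inv_ne_zero hcj)]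
      exact h (V.smul_mem _ hx) (by simp [hcj]) (inv_mul_cancel₀ hcj)
    set x := ∑ i ∈ s, c i • algebraMap K M i with hx_def
    by_cases hfix : ∀ σ : M ≃ₐ[K] M, σ x = x
    · exact Submodule.subset_span ⟨hx, (InfiniteGalois.mem_range_algebraMap_iff_fixed x).2 hfix⟩
    push Not at hfix
    obtain ⟨σ, hσ⟩ := hfix
    have hρ1 : ρ σ 1 = 1 := (algebraMap F M).injective (by rw [← hρ, map_one, map_one])
    let d : K → F := fun i ↦ ρ σ (c i) - c i
    have hy : σ x - x = ∑ i ∈ s, d i • algebraMap K M i := by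
      simp only [hx_def, map_sum, d, sub_smul, Finset.sum_sub_distrib]
      simp only [Algebra.smul_def, map_mul, hρ, AlgEquiv.commutes]
    have hyV : σ x - x ∈ V := V.sub_mem (hV σ x hx) hx
    have hy' : σ x - x = ∑ i ∈ s.erase j, d i • algebraMap K M i := by
      rw [hy, ← Finset.add_sum_erase _ _ hj]
      simp [d, hcj1, hρ1]
    have hyW := ih _ (Finset.erase_ssubset hj) d (hy' ▸ hyV)
    rw [← hy'] at hyW
    obtain ⟨i, hi, hdi⟩ : ∃ i ∈ s, d i ≠ 0 := by
      by_contra! h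
      exact hσ (sub_eq_zero.1 (hy.trans (Finset.sum_eq_zero fun i hi ↦ by rw [h i hi, zero_smul])))
    have hz : x - (c i / d i) • (σ x - x) =
        ∑ l ∈ s.erase i, (c l - c i / d i * d l) • algebraMap K M l :=
      hy ▸ sum_sub_div_smul_sum c d _ hi hdi
    have hzW := ih _ (Finset.erase_ssubset hi) _ (hz ▸ V.sub_mem hx (V.smul_mem _ hyV))
    rw [← hz] at hzW
    exact (Submodule.sub_mem_iff_left _ (Submodule.smul_mem _ _ hyW)).1 hzW

theorem le_span_inter_range_of_galois_stable
    (hspan : Submodule.span F (Set.range (algebraMap K M)) = ⊤)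
    (hF : ∀ (σ : M ≃ₐ[K] M) (c : F), ∃ d : F, σ (algebraMap F M c) = algebraMap F M d)
    {V : Submodule F M} (hV : ∀ (σ : M ≃ₐ[K] M), ∀ x ∈ V, σ x ∈ V) :
    V ≤ Submodule.span F (V ∩ Set.range (algebraMap K M)) := fun x hx ↦ by
  obtain ⟨c, rfl⟩ :=
    Finsupp.mem_span_range_iff_exists_finsupp.1 (hspan ▸ Submodule.mem_top (x := x))
  exact sum_mem_span_of_galois_stable hF hV c.support c hx

end GaloisDescent

section Generator

/-- `u` generates the `k`-algebra `A` as a polynomial ring in one variable over the integral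
closure of `k` in `A`; for a domain `A` over a field `k` that integral closure is the field of
constants of `A`. -/
def IsPolynomialGenerator (k : Type*) {A : Type*} [CommRing k] [CommRing A] [Algebra k A] (u : A) :
    Prop :=
  Function.Bijective (aeval u : (integralClosure k A)[X] →ₐ[integralClosure k A] A)

lemma natDegree_eq_one_of_comp_eq_X {F : Type*} [Field F] {p q : F[X]} (h : p.comp q = X) :
    q.natDegree = 1 := by
  have hdeg := congrArg natDegree h
  rw [natDegree_comp, natDegree_X] at hdeg
  exact Nat.eq_one_of_mul_eq_one_left hdeg

lemma isIntegralClosure_of_isAlgClosed (k F M : Type*) [Field k] [Field F] [IsAlgClosed F]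
    [Algebra k F] [Algebra.IsAlgebraic k F] [CommRing M] [IsDomain M] [Algebra F M] [Algebra k M]
    [IsScalarTower k F M] : IsIntegralClosure F k M where
  algebraMap_injective := FaithfulSMul.algebraMap_injective F M
  isIntegral_iff {x} :=
    ⟨fun hx ↦ minpoly.mem_range_of_degree_eq_one F x <|
      IsAlgClosed.degree_eq_one_of_irreducible F <| minpoly.irreducible hx.tower_top,
    by rintro ⟨c, rfl⟩; exact (Algebra.IsIntegral.isIntegral c).algebraMap⟩

lemma exists_ringHom_algebraMap_apply_eq (k : Type*) {F K M : Type*} [Field k] [Field F]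
    [IsAlgClosed F] [Algebra k F] [Algebra.IsAlgebraic k F] [CommRing K] [Field M] [Algebra k K]
    [Algebra k M] [Algebra F M] [Algebra K M] [IsScalarTower k F M] [IsScalarTower k K M]
    (σ : M ≃ₐ[K] M) : ∃ ρ : F →+* F, ∀ c, σ (algebraMap F M c) = algebraMap F M (ρ c) :=
  have := isIntegralClosure_of_isAlgClosed k F M
  ⟨galRestrict' k F F (σ.restrictScalars k).toAlgHom, fun c ↦
    (algebraMap_galRestrict'_apply k F F (σ.restrictScalars k).toAlgHom c).symm⟩

section GaloisAction

variable {F R K M : Type*} [Field F] [CommRing R] [Field K] [Field M] [Algebra F M] [Algebra R M]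
  [Algebra R K] [Algebra K M] [IsScalarTower R K M]

lemma map_aeval_of_galois {σ : M ≃ₐ[K] M} {ρ : F →+* F}
    (hρ : ∀ c, σ (algebraMap F M c) = algebraMap F M (ρ c)) (p : F[X]) (v : M) :
    σ (aeval v p) = aeval (σ v) (p.map ρ) :=
  map_aeval_eq_aeval_map (ψ := (σ : M →+* M)) (RingHom.ext fun c ↦ (hρ c).symm) p v

variable (hF : ∀ σ : M ≃ₐ[K] M, ∃ ρ : F →+* F, ∀ c, σ (algebraMap F M c) = algebraMap F M (ρ c))
include hF

lemma exists_natDegree_eq_one_of_galois {v : M} (hv : Transcendental F v)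
    (hN : ∀ x : M, IsIntegral R x ↔ ∃ p : F[X], aeval v p = x) (σ : M ≃ₐ[K] M) :
    ∃ p : F[X], p.natDegree = 1 ∧ aeval v p = σ v := by
  have hint (τ : M ≃ₐ[K] M) : ∃ p : F[X], aeval v p = τ v :=
    (hN _).1 (((hN v).2 ⟨X, aeval_X v⟩).map (τ.restrictScalars R))
  obtain ⟨p, hp⟩ := hint σ
  obtain ⟨q, hq⟩ := hint σ⁻¹
  obtain ⟨ρ, hρ⟩ := hF σ
  have hcomp : (q.map ρ).comp p = X := transcendental_iff_injective.1 hv <| by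
    rw [aeval_comp, hp, ← map_aeval_of_galois hρ, hq, aeval_X]
    exact σ.apply_symm_apply v
  exact ⟨p, natDegree_eq_one_of_comp_eq_X hcomp, hp⟩

variable [IsGalois K M]

-- The `F`-space spanned by `1` and `v` is Galois stable, so it is spanned by elements of `K`.
lemma exists_mul_add_mem_range_of_galois
    (hspan : Submodule.span F (Set.range (algebraMap K M)) = ⊤) {v : M} (hv : Transcendental F v)
    (hN : ∀ x : M, IsIntegral R x ↔ ∃ p : F[X], aeval v p = x) :
    ∃ a b : F, a ≠ 0 ∧ aeval v (C a * X + C b) ∈ Set.range (algebraMap K M) := by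
  let V : Submodule F M := (degreeLE F 1).map (aeval v).toLinearMap
  have hV (σ : M ≃ₐ[K] M) : ∀ x ∈ V, σ x ∈ V := by
    rintro _ ⟨p, hp, rfl⟩
    obtain ⟨ρ, hρ⟩ := hF σ
    obtain ⟨q, hq, hqσ⟩ := exists_natDegree_eq_one_of_galois hF hv hN σ
    refine ⟨(p.map ρ).comp q, mem_degreeLE.2 (natDegree_le_iff_degree_le.1 ?_), ?_⟩
    · rw [natDegree_comp, hq, mul_one]
      exact natDegree_map_le.trans (natDegree_le_iff_degree_le.2 (mem_degreeLE.1 hp))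
    · simp only [AlgHom.toLinearMap_apply, aeval_comp, hqσ, map_aeval_of_galois hρ]
  have hle : V ≤ Submodule.span F (V ∩ Set.range (algebraMap K M)) :=
    le_span_inter_range_of_galois_stable hspan (fun σ c ↦ (hF σ).imp' (· c) fun _ h ↦ h c) hV
  by_contra! h
  have hconst : (V ∩ Set.range (algebraMap K M) : Set M) ⊆ (1 : Submodule F M) := by
    rintro _ ⟨⟨p, hp, rfl⟩, hpK⟩
    obtain ⟨a, b, rfl⟩ := exists_eq_X_add_C_of_natDegree_le_one
      (natDegree_le_iff_degree_le.2 (mem_degreeLE.1 hp))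
    rcases eq_or_ne a 0 with rfl | ha
    · exact Submodule.mem_one.2 ⟨b, by simp⟩
    · exact absurd hpK (h a b ha)
  have hvV : v ∈ V := ⟨X, mem_degreeLE.2 degree_X_le, aeval_X v⟩
  obtain ⟨c, rfl⟩ := Submodule.mem_one.1 (hle.trans (Submodule.span_le.2 hconst) hvV)
  exact hv (isAlgebraic_algebraMap c)

theorem exists_generator_of_galois [IsIntegrallyClosed R] [IsFractionRing R K]
    (hspan : Submodule.span F (Set.range (algebraMap K M)) = ⊤) {v : M} (hv : Transcendental F v)
    (hN : ∀ x : M, IsIntegral R x ↔ ∃ p : F[X], aeval v p = x) :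
    ∃ u : R, Transcendental F (algebraMap R M u) ∧
      ∀ x : M, IsIntegral R x ↔ ∃ p : F[X], aeval (algebraMap R M u) p = x := by
  obtain ⟨a, b, ha, w, hw⟩ := exists_mul_add_mem_range_of_galois hF hspan hv hN
  have hwint : IsIntegral R w :=
    (isIntegral_algebraMap_iff (algebraMap K M).injective).1 (hw ▸ (hN _).2 ⟨_, rfl⟩)
  obtain ⟨u, rfl⟩ := IsIntegrallyClosed.isIntegral_iff.1 hwint
  rw [← IsScalarTower.algebraMap_apply] at hw
  let := invertibleOfNonzero ha
  let e := algEquivCMulXAddC a b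
  have he (p : F[X]) : aeval (algebraMap R M u) p = aeval v (e p) := by
    rw [hw, ← aeval_comp]; rfl
  refine ⟨u, transcendental_iff_injective.2 ?_, fun x ↦ (hN x).trans ?_⟩
  · rw [show (aeval (algebraMap R M u) : F[X] →ₐ[F] M) = (aeval v).comp e.toAlgHom from
      AlgHom.ext he]
    exact (transcendental_iff_injective.1 hv).comp e.injective
  · simp only [he]
    exact e.surjective.exists

end GaloisAction

section Descent

variable {k F R K M : Type*} [Field k] [Field F] [Algebra k F] [Algebra.IsAlgebraic k F]
  [CommRing R] [IsIntegrallyClosed R] [Algebra k R] [Field K] [Algebra k K]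
  [Algebra R K] [IsFractionRing R K] [IsScalarTower k R K] [Field M] [Algebra k M] [Algebra F M]
  [Algebra R M] [Algebra K M] [IsScalarTower k F M] [IsScalarTower k K M] [IsScalarTower k R M]
  [IsScalarTower R K M]

lemma exists_algebraMap_integralClosure_eq {y : K} (hy : IsIntegral k y) :
    ∃ c : integralClosure k R, algebraMap R K c = y := by
  obtain ⟨r, rfl⟩ := IsIntegrallyClosed.isIntegral_iff.1 (hy.tower_top (A := R))
  exact ⟨⟨r, (isIntegral_algebraMap_iff (IsFractionRing.injective R K)).1 hy⟩, rfl⟩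

lemma coeff_mem_range_of_galois [IsGalois K M]
    (hF : ∀ σ : M ≃ₐ[K] M, ∃ ρ : F →+* F, ∀ c, σ (algebraMap F M c) = algebraMap F M (ρ c)) {w : K}
    (hw : Transcendental F (algebraMap K M w)) {p : F[X]}
    (hp : aeval (algebraMap K M w) p ∈ Set.range (algebraMap K M)) (i : ℕ) :
    algebraMap F M (p.coeff i) ∈ Set.range (algebraMap K M) := by
  refine (InfiniteGalois.mem_range_algebraMap_iff_fixed _).2 fun σ ↦ ?_
  obtain ⟨ρ, hρ⟩ := hF σ
  have hmap : p.map ρ = p := transcendental_iff_injective.1 hw <| by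
    obtain ⟨y, hy⟩ := hp
    conv_lhs => rw [← σ.commutes w, ← map_aeval_of_galois hρ, ← hy, σ.commutes]
    exact hy
  rw [hρ, ← coeff_map, hmap]

lemma isPolynomialGenerator_of_galois [IsGalois K M]
    (hF : ∀ σ : M ≃ₐ[K] M, ∃ ρ : F →+* F, ∀ c, σ (algebraMap F M c) = algebraMap F M (ρ c)) {u : R}
    (hu : Transcendental F (algebraMap R M u))
    (hR : ∀ a : R, ∃ p : F[X], aeval (algebraMap R M u) p = algebraMap R M a) :
    IsPolynomialGenerator k u := by
  have hinj : Function.Injective (algebraMap R M) := by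
    rw [IsScalarTower.algebraMap_eq R K M]
    exact (algebraMap K M).injective.comp (IsFractionRing.injective R K)
  have := hinj.isDomain
  refine ⟨transcendental_iff_injective.1 fun h ↦ hu
    (((h.restrictScalars k).algebraMap (A := M)).tower_top F), fun a ↦ ?_⟩
  obtain ⟨p, hp⟩ := hR a
  have hcoeff (i : ℕ) :
      ∃ c : integralClosure k R, algebraMap R M c = algebraMap F M (p.coeff i) := by
    rw [IsScalarTower.algebraMap_apply R K M] at hu hp
    obtain ⟨y, hy⟩ := coeff_mem_range_of_galois hF hu
      ⟨algebraMap R K a, by rw [hp, ← IsScalarTower.algebraMap_apply]⟩ i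
    have hyk : IsIntegral k y := (isIntegral_algebraMap_iff (algebraMap K M).injective).1 <|
      hy ▸ (Algebra.IsIntegral.isIntegral (p.coeff i)).algebraMap
    obtain ⟨c, rfl⟩ := exists_algebraMap_integralClosure_eq (R := R) hyk
    exact ⟨c, by rw [IsScalarTower.algebraMap_apply R K M, hy]⟩
  choose c hc using hcoeff
  refine ⟨∑ i ∈ Finset.range (p.natDegree + 1), C (c i) * X ^ i, hinj ?_⟩
  simp only [← hp, aeval_eq_sum_range (p := p), map_sum, map_mul, aeval_C, map_pow, aeval_X,
    Algebra.smul_def, ← hc]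
  rfl

end Descent

end Generator

section Compositum

variable (k F K E : Type*) [Field k] [Field F] [Algebra k F] [Field K] [Algebra k K] [Field E]
  [Algebra k E] [Algebra F E] [Algebra K E] [IsScalarTower k F E] [IsScalarTower k K E]

/-- The compositum inside `E` of `K` and the image of `F`, as an extension of `K`. -/
abbrev compositum (F K E : Type*) [Field F] [Field K] [Field E] [Algebra F E] [Algebra K E] :
    IntermediateField K E :=
  IntermediateField.adjoin K (Set.range (algebraMap F E))

namespace compositum

noncomputable instance (F K E : Type*) [Field F] [Field K] [Field E] [Algebra F E] [Algebra K E] :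
    Algebra F (compositum F K E) :=
  ((algebraMap F E).codRestrict (compositum F K E) fun c ↦
    IntermediateField.subset_adjoin K _ ⟨c, rfl⟩).toAlgebra

instance (F K E : Type*) [Field F] [Field K] [Field E] [Algebra F E] [Algebra K E] :
    IsScalarTower F (compositum F K E) E :=
  .of_algebraMap_eq fun _ ↦ rfl

instance : IsScalarTower k F (compositum F K E) :=
  .of_algebraMap_eq fun x ↦ Subtype.ext <| IsScalarTower.algebraMap_apply k F E x

lemma isSeparable_algebraMap [Algebra.IsSeparable k F] (c : F) : IsSeparable K (algebraMap F E c) :=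
  ((Algebra.IsSeparable.isSeparable k c).map (IsScalarTower.toAlgHom k F E)
    (algebraMap F E).injective).tower_top K

lemma splits_minpoly_algebraMap [IsAlgClosed F] [Algebra.IsAlgebraic k F] (c : F) :
    ((minpoly K (algebraMap F E c)).map (algebraMap K (compositum F K E))).Splits := by
  have hint : IsIntegral k c := Algebra.IsIntegral.isIntegral c
  have hdvd := minpoly.dvd_map_of_isScalarTower k K (algebraMap F E c)
  rw [minpoly.algebraMap_eq (A := k) (algebraMap F E).injective] at hdvd
  have hsplits : ((minpoly k c).map (algebraMap k (compositum F K E))).Splits := by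
    rw [IsScalarTower.algebraMap_eq k F, ← map_map]
    exact (IsAlgClosed.splits _).map _
  rw [IsScalarTower.algebraMap_eq k K, ← map_map] at hsplits
  exact hsplits.of_dvd (((minpoly.monic hint).map _).map _).ne_zero (Polynomial.map_dvd _ hdvd)

theorem isGalois [PerfectField k] [IsAlgClosed F] [Algebra.IsAlgebraic k F] :
    IsGalois K (compositum F K E) := by
  have : Algebra.IsSeparable K (compositum F K E) :=
    (IntermediateField.isSeparable_adjoin_iff_isSeparable K E).2 <|
      Set.forall_mem_range.2 (isSeparable_algebraMap k F K E)
  have : Normal K (compositum F K E) :=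
    { splits' := fun x ↦ by
        rw [← minpoly.algHom_eq (compositum F K E).val (compositum F K E).val.injective]
        exact IntermediateField.splits_of_mem_adjoin K E (Set.forall_mem_range.2 fun c ↦
          ⟨(isSeparable_algebraMap k F K E c).isIntegral,
            splits_minpoly_algebraMap k F K E c⟩) x.2 }
  exact ⟨⟩

theorem span_range_eq_top (F K E : Type*) [Field F] [Field K] [Field E] [Algebra F E] [Algebra K E]
    [Algebra.IsAlgebraic K E] :
    Submodule.span F (Set.range (algebraMap K (compositum F K E))) = ⊤ := by
  have hadjoin : ∀ x ∈ Algebra.adjoin K (Set.range (algebraMap F E)),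
      x ∈ Algebra.adjoin F (Set.range (algebraMap K E)) := fun x hx ↦ by
    induction hx using Algebra.adjoin_induction with
    | mem x hx => obtain ⟨c, rfl⟩ := hx; exact Subalgebra.algebraMap_mem _ c
    | algebraMap a => exact Algebra.subset_adjoin ⟨a, rfl⟩
    | add x y _ _ hx hy => exact add_mem hx hy
    | mul x y _ _ hx hy => exact mul_mem hx hy
  have hclosure : (Submonoid.closure (Set.range (algebraMap K E)) : Set E) ⊆
      Submodule.span F (Set.range (algebraMap K E)) := fun y hy ↦ Submodule.subset_span <|
    (Submonoid.closure_le (S := MonoidHom.mrange (algebraMap K E : K →* E))).2 subset_rfl hy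
  let j : compositum F K E →ₐ[F] E := IsScalarTower.toAlgHom F (compositum F K E) E
  have hspan : Submodule.span F (Set.range (algebraMap K E)) =
      (Submodule.span F (Set.range (algebraMap K (compositum F K E)))).map j.toLinearMap := by
    rw [Submodule.map_span, ← Set.range_comp]
    rfl
  refine eq_top_iff.2 fun x _ ↦ ?_
  have hx : (x : E) ∈ Algebra.adjoin K (Set.range (algebraMap F E)) := by
    rw [← IntermediateField.adjoin_toSubalgebra_of_isAlgebraic
      fun y _ ↦ Algebra.IsAlgebraic.isAlgebraic y]
    exact x.2
  have hmem := hadjoin _ hx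
  rw [← Subalgebra.mem_toSubmodule, Algebra.adjoin_eq_span_of_subset _ hclosure] at hmem
  obtain ⟨y, hy, hyx⟩ := hspan ▸ hmem
  rwa [← Subtype.ext hyx]

end compositum

end Compositum

section Structure

lemma isIntegral_of_natDegree_ne_zero {F R : Type*} [Field F] [CommRing R] [Algebra R F[X]]
    (hC : ∀ c : F, IsIntegral R (C c : F[X])) {r : R} (hr : (algebraMap R F[X] r).natDegree ≠ 0) :
    Algebra.IsIntegral R F[X] := by
  let O := integralClosure R F[X]
  let ι : F →+* O := (C : F →+* F[X]).codRestrict O hC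
  let f := algebraMap R F[X] r
  have hf : f ≠ 0 := ne_zero_of_natDegree_gt (Nat.pos_of_ne_zero hr)
  have hmonic : (f * C f.leadingCoeff⁻¹).Monic := monic_mul_leadingCoeff_inv hf
  have hX : IsIntegral R (X : F[X]) := by
    refine isIntegral_trans (A := O) _ (.of_aeval_monic (hmonic.map ι) ?_ ?_)
    · rwa [natDegree_map, natDegree_mul_C (inv_ne_zero (leadingCoeff_ne_zero.2 hf))]
    · rw [aeval_def, eval₂_map, show (algebraMap O F[X]).comp ι = C from rfl, eval₂_C_X]
      exact (isIntegral_algebraMap.mul (hC _)).tower_top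
  refine ⟨fun p ↦ ?_⟩
  induction p using Polynomial.induction_on' with
  | add p q hp hq => exact hp.add hq
  | monomial n a => rw [← C_mul_X_pow_eq_monomial]; exact (hC a).mul (hX.pow n)

lemma isIntegrallyClosed_integralClosure (R A M E : Type*) [CommRing R] [CommRing A] [IsDomain A]
    [Algebra R A] [FaithfulSMul R A] [Algebra.IsIntegral R A] [Field E] [Algebra A E]
    [IsFractionRing A E] [Field M] [Algebra R M] [Algebra M E] [Algebra R E] [IsScalarTower R A E]
    [IsScalarTower R M E] : IsIntegrallyClosed (integralClosure R M) :=
  have := (FaithfulSMul.algebraMap_injective R A).isDomain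
  have : FaithfulSMul R E := .trans R A E
  have : FaithfulSMul R M := .tower_bot R M E
  have : Algebra.IsAlgebraic A E := IsLocalization.isAlgebraic E (nonZeroDivisors A)
  have : Algebra.IsAlgebraic R E := .trans R A E
  have : Algebra.IsAlgebraic R M :=
    .of_injective (IsScalarTower.toAlgHom R M E) (algebraMap M E).injective
  have : IsFractionRing (integralClosure R M) M := integralClosure.isFractionRing_of_algebraic
    fun _ ↦ (map_eq_zero_iff _ (FaithfulSMul.algebraMap_injective R M)).1
  (isIntegrallyClosed_iff_isIntegrallyClosedIn M).2 inferInstance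

lemma exists_transcendental_forall_isIntegral_iff {F R M E : Type*} [Field F] [CommRing R]
    [Algebra R F[X]] [FaithfulSMul R F[X]] [Algebra.IsIntegral R F[X]] [Field E]
    [Algebra F[X] E] [IsFractionRing F[X] E] [Field M] [Algebra M E] [Algebra F M]
    [Algebra F E] [IsScalarTower F F[X] E] [IsScalarTower F M E] [Algebra R E] [Algebra R M]
    [IsScalarTower R F[X] E] [IsScalarTower R M E] :
    ∃ v : M, Transcendental F v ∧ ∀ x : M, IsIntegral R x ↔ ∃ p : F[X], aeval v p = x := by
  have hME : Function.Injective (algebraMap M E) := (algebraMap M E).injective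
  have hC (c : F) : IsIntegral R (algebraMap F M c) := by
    rw [← isIntegral_algebraMap_iff hME, ← IsScalarTower.algebraMap_apply F M E,
      IsScalarTower.algebraMap_apply F F[X] E]
    exact (Algebra.IsIntegral.isIntegral (R := R) (algebraMap F F[X] c)).algebraMap
  let N := integralClosure R M
  let : Algebra F N := ((algebraMap F M).codRestrict N hC).toAlgebra
  have : IsScalarTower F N M := .of_algebraMap_eq fun _ ↦ rfl
  have : IsScalarTower R N E := .of_algebraMap_eq fun r ↦ IsScalarTower.algebraMap_apply R M E r
  let ι : N →ₐ[R] F[X] := IsIntegralClosure.lift R F[X] E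
  have hι (x : N) : algebraMap F[X] E (ι x) = algebraMap M E x :=
    IsIntegralClosure.algebraMap_lift R F[X] E x
  let : Algebra N F[X] := ι.toAlgebra
  have hιinj : Function.Injective ι := fun x y h ↦
    Subtype.ext <| hME <| by rw [← hι, h, hι]
  have : IsScalarTower R N F[X] := .of_algebraMap_eq fun r ↦ (ι.commutes r).symm
  have : IsScalarTower F N F[X] := .of_algebraMap_eq fun c ↦ IsFractionRing.injective F[X] E <|
    (IsScalarTower.algebraMap_apply F F[X] E c).symm.trans <|
      (IsScalarTower.algebraMap_apply F M E c).trans (hι (algebraMap F N c)).symm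
  have : FaithfulSMul N F[X] := (faithfulSMul_iff_algebraMap_injective N F[X]).2 hιinj
  have : Algebra.IsIntegral N F[X] := .tower_top R
  have : IsIntegrallyClosed N := isIntegrallyClosed_integralClosure R F[X] M E
  obtain ⟨v, hbij⟩ := exists_bijective_aeval_of_isIntegral (F := F) (N := N)
  have hcoe (p : F[X]) : aeval (v : M) p = aeval v p := aeval_algebraMap_apply M v p
  refine ⟨v, transcendental_iff_injective.2 fun p q h ↦ hbij.1 <| Subtype.ext ?_, fun x ↦
    ⟨fun hx ↦ ?_, ?_⟩⟩
  · rwa [← hcoe, ← hcoe]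
  · obtain ⟨p, hp⟩ := hbij.2 ⟨x, hx⟩
    exact ⟨p, by rw [hcoe, hp]⟩
  · rintro ⟨p, rfl⟩
    exact hcoe p ▸ (aeval v p).2

theorem exists_isPolynomialGenerator_of_isIntegral (k F : Type*) {R : Type*} [Field k]
    [PerfectField k] [Field F] [IsAlgClosed F] [Algebra k F] [Algebra.IsAlgebraic k F]
    [CommRing R] [IsIntegrallyClosed R] [Algebra k R] [Algebra R F[X]] [IsScalarTower k R F[X]]
    [FaithfulSMul R F[X]] [Algebra.IsIntegral R F[X]] : ∃ u : R, IsPolynomialGenerator k u := by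
  have := (FaithfulSMul.algebraMap_injective R F[X]).isDomain
  let K := FractionRing R
  let E := FractionRing F[X]
  have : FaithfulSMul R E := .trans R F[X] E
  let : Algebra K E := FractionRing.liftAlgebra R E
  have : IsScalarTower k K E := .of_algebraMap_eq fun x ↦ by
    rw [IsScalarTower.algebraMap_apply k R K, ← IsScalarTower.algebraMap_apply R K E,
      IsScalarTower.algebraMap_apply R F[X] E, ← IsScalarTower.algebraMap_apply k R F[X],
      ← IsScalarTower.algebraMap_apply k F[X] E]
  have : Algebra.IsAlgebraic F[X] E := IsLocalization.isAlgebraic E (nonZeroDivisors F[X])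
  have : Algebra.IsAlgebraic R E := .trans R F[X] E
  have : Algebra.IsAlgebraic K E := .extendScalars (IsFractionRing.injective R K)
  let M := compositum F K E
  have : IsGalois K M := compositum.isGalois k F K E
  have : IsScalarTower k R M := .of_algebraMap_eq fun x ↦ by
    rw [IsScalarTower.algebraMap_apply k K M, IsScalarTower.algebraMap_apply k R K,
      ← IsScalarTower.algebraMap_apply R K M]
  have : IsScalarTower R M E := .to₁₃₄ R K M E
  have hF (σ : M ≃ₐ[K] M) := exists_ringHom_algebraMap_apply_eq (F := F) k σ
  obtain ⟨v, hv, hN⟩ := exists_transcendental_forall_isIntegral_iff (F := F) (R := R) (M := M)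
    (E := E)
  obtain ⟨u, hu, hNu⟩ := exists_generator_of_galois hF (compositum.span_range_eq_top F K E) hv hN
  exact ⟨u, isPolynomialGenerator_of_galois (K := K) hF hu fun a ↦ (hNu _).1 isIntegral_algebraMap⟩

end Structure

section Specialization

lemma exists_natDegree_aeval_C_mul_X_ne_zero {F τ : Type*} [Field F] [Infinite F]
    {g : MvPolynomial τ F} {m : τ →₀ ℕ} (hm : m ≠ 0) (hg : g.coeff m ≠ 0) :
    ∃ a : τ → F, (MvPolynomial.aeval (fun i ↦ C (a i) * X) g : F[X]).natDegree ≠ 0 := by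
  by_contra! h
  have heval (a : τ → F) (c : F) : eval c (MvPolynomial.aeval (fun i ↦ C (a i) * X) g : F[X]) =
      MvPolynomial.eval (fun i ↦ a i * c) g := by
    rw [← coe_aeval_eq_eval, ← AlgHom.comp_apply, MvPolynomial.comp_aeval,
      ← MvPolynomial.aeval_eq_eval]
    simp
  have hconst : g = MvPolynomial.C (MvPolynomial.eval 0 g) := MvPolynomial.funext fun a ↦ by
    obtain ⟨c, hc⟩ := natDegree_eq_zero.1 (h a)
    have hone := heval a 1
    have hzero := heval a 0
    rw [← hc, eval_C] at hone hzero
    simp only [mul_one, mul_zero] at hone hzero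
    rw [MvPolynomial.eval_C, ← hone, hzero]
    rfl
  classical
  rw [hconst, MvPolynomial.coeff_C, if_neg hm.symm] at hg
  exact hg rfl

variable {k F σ τ A B : Type*} [Field k] [Field F] [Algebra k F] [CommRing A] [IsDomain A]
  [Algebra k A] [CommRing B] [IsDomain B] [Algebra k B]

lemma exists_isMaximal_notMem (hunit : ∀ b : B, IsUnit b → IsAlgebraic k b) {c : B} (hc : c ≠ 0) :
    ∃ P : Ideal B, P.IsMaximal ∧ c ∉ P := by
  have hjac : c ∉ (⊥ : Ideal B).jacobson := fun h ↦ by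
    have hc1 : IsUnit (c * 1 + 1) := Ideal.mem_jacobson_bot.1 h 1
    have halg : IsAlgebraic k c := by simpa using (hunit _ hc1).sub isAlgebraic_one
    exact bot_ne_top (Ideal.jacobson_eq_top_iff.1
      (Ideal.eq_top_of_isUnit_mem _ h (isUnit_of_isAlgebraic halg hc)))
  simpa [Ideal.jacobson, Ideal.mem_sInf] using hjac

lemma isAlgebraic_quotient_of_isMaximal (hB : Algebra.trdeg k B ≤ 1)
    (hunit : ∀ b : B, IsUnit b → IsAlgebraic k b) (P : Ideal B) [P.IsMaximal] :
    Algebra.IsAlgebraic k (B ⧸ P) := by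
  refine ⟨Ideal.Quotient.mk_surjective.forall.2 fun b ↦ ?_⟩
  by_cases hP : ∃ p ∈ P, p ≠ 0
  · obtain ⟨p, hp, hp0⟩ := hP
    exact isAlgebraic_apply_of_apply_eq_zero hB (Ideal.Quotient.mkₐ k P) hp0
      (Ideal.Quotient.eq_zero_iff_mem.2 hp) b
  · push Not at hP
    obtain rfl : P = ⊥ := eq_bot_iff.2 hP
    refine IsAlgebraic.algHom (Ideal.Quotient.mkₐ k ⊥) ?_
    rcases eq_or_ne b 0 with rfl | hb
    · exact isAlgebraic_zero
    · exact hunit b (isUnit_iff_exists_inv.2 <|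
        (Ring.isField_iff_maximal_bot.2 ‹_›).mul_inv_cancel hb)

lemma exists_algHom_apply_ne_zero [IsAlgClosed F] (hB : Algebra.trdeg k B ≤ 1)
    (hunit : ∀ b : B, IsUnit b → IsAlgebraic k b) {c : B} (hc : c ≠ 0) :
    ∃ ψ : B →ₐ[k] F, ψ c ≠ 0 := by
  obtain ⟨P, hP, hcP⟩ := exists_isMaximal_notMem hunit hc
  have := isAlgebraic_quotient_of_isMaximal hB hunit P
  let := Ideal.Quotient.field P
  let ψ : B ⧸ P →ₐ[k] F := IsAlgClosed.lift
  refine ⟨ψ.comp (Ideal.Quotient.mkₐ k P), ?_⟩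
  exact (map_ne_zero ψ).2 (mt Ideal.Quotient.eq_zero_iff_mem.1 hcP)

namespace SeparatesCoefficients

variable {e : MvPolynomial σ A ≃ₐ[k] MvPolynomial τ B}

-- A nonconstant coefficient of `e (C r)` survives at some point of `Spec B`; restricting to a
-- general line through the origin of the fibre of `Spec B[τ]` over it leaves one variable.
theorem exists_injective_algHom_polynomial [IsAlgClosed F] (he : SeparatesCoefficients e)
    (hA : Algebra.trdeg k A ≤ 1) (hB : Algebra.trdeg k B ≤ 1) {r : A} (hr : Transcendental k r) :
    ∃ φ : A →ₐ[k] F[X], Function.Injective φ ∧ (φ r).natDegree ≠ 0 := by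
  obtain ⟨m, hm, hcoeff⟩ := he.exists_coeff_ne_zero hr
  obtain ⟨ψ, hψ⟩ := exists_algHom_apply_ne_zero (F := F) hB
    (fun _ ↦ he.symm.isAlgebraic_of_isUnit) hcoeff
  let g : A →ₐ[k] MvPolynomial τ F :=
    (MvPolynomial.mapAlgHom ψ).comp (e.toAlgHom.comp (IsScalarTower.toAlgHom k A _))
  have hg : (g r).coeff m ≠ 0 := (MvPolynomial.coeff_map (ψ : B →+* F) _ m).trans_ne hψ
  obtain ⟨a, ha⟩ := exists_natDegree_aeval_C_mul_X_ne_zero hm hg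
  let φ : A →ₐ[k] F[X] :=
    ((MvPolynomial.aeval fun i ↦ C (a i) * X : _ →ₐ[F] F[X]).restrictScalars k).comp g
  refine ⟨φ, (injective_iff_map_eq_zero φ).2 fun p hp ↦ ?_, ha⟩
  by_contra h0
  have hr' : IsAlgebraic F (φ r) := (isAlgebraic_apply_of_apply_eq_zero hA φ h0 hp r).tower_top F
  exact transcendental_of_natDegree_ne_zero ha hr'

theorem exists_isPolynomialGenerator [PerfectField k] [IsIntegrallyClosed A]
    (he : SeparatesCoefficients e) (hA : Algebra.trdeg k A = 1) (hB : Algebra.trdeg k B ≤ 1) :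
    ∃ u : A, IsPolynomialGenerator k u := by
  have := trdeg_ne_zero_iff.1 (hA.trans_ne one_ne_zero)
  obtain ⟨r, hr⟩ := Algebra.Transcendental.transcendental (R := k) (A := A)
  obtain ⟨φ, hφ, hdeg⟩ :=
    he.exists_injective_algHom_polynomial (F := AlgebraicClosure k) hA.le hB hr
  let := φ.toRingHom.toAlgebra
  have : IsScalarTower k A (AlgebraicClosure k)[X] := .of_algebraMap_eq fun x ↦ (φ.commutes x).symm
  have : FaithfulSMul A (AlgebraicClosure k)[X] := (faithfulSMul_iff_algebraMap_injective _ _).2 hφ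
  have hC (c : AlgebraicClosure k) : IsIntegral A (C c : (AlgebraicClosure k)[X]) :=
    ((Algebra.IsIntegral.isIntegral (R := k) c).algebraMap (B := (AlgebraicClosure k)[X])).tower_top
  have := isIntegral_of_natDegree_ne_zero hC hdeg
  exact exists_isPolynomialGenerator_of_isIntegral k (AlgebraicClosure k)

end SeparatesCoefficients

end Specialization

section Normalization

attribute [local instance] MvPolynomial.algebraMvPolynomial

lemma isIntegrallyClosed_mvPolynomial {σ A : Type*} [CommRing A] [IsDomain A]
    [IsIntegrallyClosed A] : IsIntegrallyClosed (MvPolynomial σ A) := by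
  let K := FractionRing A
  have hinj : Function.Injective (MvPolynomial.map (σ := σ) (algebraMap A K)) :=
    MvPolynomial.map_injective _ (IsFractionRing.injective A K)
  have : FaithfulSMul (MvPolynomial σ A) (MvPolynomial σ K) :=
    (faithfulSMul_iff_algebraMap_injective _ _).2 hinj
  have : IsIntegrallyClosedIn (MvPolynomial σ A) (MvPolynomial σ K) :=
    isIntegrallyClosedIn_iff.2 ⟨hinj, fun {p} hp ↦ by
      refine MvPolynomial.mem_range_map_iff_coeffs_subset.2 fun c hc ↦ ?_
      obtain ⟨m, -, rfl⟩ := MvPolynomial.mem_coeffs_iff.1 hc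
      exact IsIntegrallyClosed.isIntegral_iff.1
        (MvPolynomial.isIntegral_iff_isIntegral_coeff.1 hp m)⟩
  have : IsIntegrallyClosed (MvPolynomial σ K) := UniqueFactorizationMonoid.instIsIntegrallyClosed
  exact .of_isIntegrallyClosed_of_isIntegrallyClosedIn _ (MvPolynomial σ K)

/-- `A'` is the normalization of the domain `A`, that is, its integral closure in its field of
fractions; the last field says that `A'` consists of fractions of elements of `A`. -/
structure IsNormalization (A A' : Type*) [CommRing A] [CommRing A'] [IsDomain A']
    [Algebra A A'] : Prop where
  injective : Function.Injective (algebraMap A A')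
  isIntegral : Algebra.IsIntegral A A'
  isIntegrallyClosed : IsIntegrallyClosed A'
  exists_mul_mem_range (x : A') :
    ∃ a : A, a ≠ 0 ∧ algebraMap A A' a * x ∈ (algebraMap A A').range

lemma isNormalization_integralClosure (A : Type*) [CommRing A] [IsDomain A] :
    IsNormalization A (integralClosure A (FractionRing A)) where
  injective := FaithfulSMul.algebraMap_injective A _
  isIntegral := inferInstance
  isIntegrallyClosed := integralClosure.isIntegrallyClosedOfFiniteExtension (FractionRing A)
  exists_mul_mem_range x := by
    obtain ⟨⟨b, a⟩, h⟩ := IsLocalization.surj (nonZeroDivisors A) (x : FractionRing A)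
    exact ⟨a, nonZeroDivisors.ne_zero a.2, b, Subtype.ext (by rw [mul_comm]; exact h.symm)⟩

namespace IsNormalization

section Uniqueness

variable {A B A' B' : Type*} [CommRing A] [CommRing A'] [IsDomain A'] [Algebra A A']
  [CommRing B] [CommRing B'] [IsDomain B'] [Algebra B B']

lemma isFractionRing (h : IsNormalization A A') (Q : Type*) [Field Q] [Algebra A' Q]
    [IsFractionRing A' Q] [Algebra A Q] [IsScalarTower A A' Q] : IsFractionRing A Q :=
  have hinj : Function.Injective (algebraMap A Q) := by
    rw [IsScalarTower.algebraMap_eq A A' Q]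
    exact (IsFractionRing.injective A' Q).comp h.injective
  have : FaithfulSMul A Q := (faithfulSMul_iff_algebraMap_injective A Q).2 hinj
  have hfrac (x : A') : ∃ a b : A, algebraMap A' Q x = algebraMap A Q a / algebraMap A Q b := by
    obtain ⟨b, hb, a, ha⟩ := h.exists_mul_mem_range x
    refine ⟨a, b, (eq_div_iff ((map_ne_zero_iff _ hinj).2 hb)).2 ?_⟩
    rw [IsScalarTower.algebraMap_apply A A' Q, IsScalarTower.algebraMap_apply A A' Q, ha, map_mul,
      mul_comm]
  .of_field A Q fun z ↦ by
    obtain ⟨x, y, -, rfl⟩ := IsFractionRing.div_surjective A' z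
    obtain ⟨a, b, hx⟩ := hfrac x
    obtain ⟨c, d, hy⟩ := hfrac y
    exact ⟨a * d, b * c, by rw [hx, hy, div_div_div_eq, map_mul, map_mul]⟩

lemma nonempty_algEquiv [Algebra A B'] (h : IsNormalization A A') (h' : IsNormalization A B') :
    Nonempty (A' ≃ₐ[A] B') := by
  have := h.isFractionRing (FractionRing A')
  have := h'.isFractionRing (FractionRing B')
  have := h.isIntegral
  have := h'.isIntegral
  have := h.isIntegrallyClosed
  have := h'.isIntegrallyClosed
  let E : FractionRing A' ≃ₐ[A] FractionRing B' :=
    IsLocalization.algEquiv (nonZeroDivisors A) _ _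
  exact ⟨(IsIntegralClosure.equiv A A' (FractionRing A') (integralClosure A _)).trans
    (E.mapIntegralClosure.trans (IsIntegralClosure.equiv A _ (FractionRing B') B'))⟩

lemma exists_ringEquiv (h : IsNormalization A A') (h' : IsNormalization B B') (e : A ≃+* B) :
    ∃ e' : A' ≃+* B', ∀ a, e' (algebraMap A A' a) = algebraMap B B' (e a) := by
  let := ((algebraMap B B').comp e.toRingHom).toAlgebra
  have hB : IsNormalization A B' :=
    { injective := h'.injective.comp e.injective
      isIntegral := algebraMap_isIntegral_iff.1 <|
        (RingHom.isIntegral_of_surjective _ e.surjective).trans _ _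
          (algebraMap_isIntegral_iff.2 h'.isIntegral)
      isIntegrallyClosed := h'.isIntegrallyClosed
      exists_mul_mem_range := fun x ↦ by
        obtain ⟨b, hb, c, hc⟩ := h'.exists_mul_mem_range x
        refine ⟨e.symm b, (map_ne_zero_iff _ e.symm.injective).2 hb, e.symm c, ?_⟩
        simpa [RingHom.algebraMap_toAlgebra] using hc }
  obtain ⟨E⟩ := h.nonempty_algEquiv hB
  exact ⟨E.toRingEquiv, E.commutes⟩

end Uniqueness

section MvPolynomial

variable {R R' σ : Type*} [CommRing R] [CommRing R'] [IsDomain R'] [Algebra R R']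

lemma exists_C_mul_mem_range_map (h : IsNormalization R R') (p : MvPolynomial σ R') :
    ∃ g : R, g ≠ 0 ∧ MvPolynomial.C (algebraMap R R' g) * p ∈
      (MvPolynomial.map (σ := σ) (algebraMap R R')).range := by
  have := h.injective.isDomain
  induction p using MvPolynomial.induction_on' with
  | monomial m x =>
    obtain ⟨g, hg, a, ha⟩ := h.exists_mul_mem_range x
    exact ⟨g, hg, MvPolynomial.monomial m a, by
      rw [MvPolynomial.map_monomial, ha, MvPolynomial.C_mul_monomial]⟩
  | add p q hp hq =>
    obtain ⟨g, hg, a, ha⟩ := hp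
    obtain ⟨f, hf, b, hb⟩ := hq
    refine ⟨g * f, mul_ne_zero hg hf, MvPolynomial.C f * a + MvPolynomial.C g * b, ?_⟩
    simp only [map_add, map_mul, MvPolynomial.map_C, ha, hb]
    ring

lemma mvPolynomial (h : IsNormalization R R') (σ : Type*) :
    IsNormalization (MvPolynomial σ R) (MvPolynomial σ R') where
  injective := MvPolynomial.map_injective _ h.injective
  isIntegral := have := h.isIntegral; inferInstance
  isIntegrallyClosed := have := h.isIntegrallyClosed; isIntegrallyClosed_mvPolynomial
  exists_mul_mem_range p := by
    obtain ⟨g, hg, q, hq⟩ := h.exists_C_mul_mem_range_map p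
    exact ⟨MvPolynomial.C g, MvPolynomial.C_ne_zero.2 hg, q, by
      rw [MvPolynomial.algebraMap_def, MvPolynomial.map_C, hq]⟩

variable {k S S' τ : Type*} [Field k] [Algebra k R] [Algebra k R'] [IsScalarTower k R R']
  [CommRing S] [CommRing S'] [IsDomain S'] [Algebra S S'] [Algebra k S] [Algebra k S']
  [IsScalarTower k S S']

lemma exists_algEquiv_mvPolynomial (hR : IsNormalization R R') (hS : IsNormalization S S')
    (e : MvPolynomial σ R ≃ₐ[k] MvPolynomial τ S) :
    ∃ e' : MvPolynomial σ R' ≃ₐ[k] MvPolynomial τ S', ∀ p,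
      e' (MvPolynomial.map (algebraMap R R') p) = MvPolynomial.map (algebraMap S S') (e p) := by
  obtain ⟨e', he'⟩ := (hR.mvPolynomial σ).exists_ringEquiv (hS.mvPolynomial τ) (e : _ ≃+* _)
  refine ⟨.ofRingEquiv (f := e') fun c ↦ ?_, he'⟩
  have h : e' (MvPolynomial.map (algebraMap R R') (algebraMap k _ c)) =
      MvPolynomial.map (algebraMap S S') (e (algebraMap k _ c)) := he' _
  rw [e.commutes] at h
  simpa only [MvPolynomial.algebraMap_eq, MvPolynomial.algebraMap_apply, MvPolynomial.map_C,
    ← IsScalarTower.algebraMap_apply] using h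

end MvPolynomial

end IsNormalization

end Normalization

section Conductor

variable {k R R' S S' σ τ : Type*} [Field k] [CommRing R] [CommRing R'] [IsDomain R']
  [Algebra R R'] [Algebra k R'] [CommRing S] [CommRing S'] [IsDomain S'] [Algebra S S']
  [Algebra k S'] {e : MvPolynomial σ R ≃+* MvPolynomial τ S}
  {e' : MvPolynomial σ R' ≃ₐ[k] MvPolynomial τ S'}
  (hcompat : ∀ p, e' (MvPolynomial.map (algebraMap R R') p) =
    MvPolynomial.map (algebraMap S S') (e p))
include hcompat

-- A generator `f` of `I R'` divides `g` in `R'[σ] ≃ S'[τ]`, so it is a coefficient on both sides.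
lemma eq_top_of_symm_C_mem_map_C [IsPrincipalIdealRing R'] [Algebra.IsIntegral R R']
    (hR : Function.Injective (algebraMap R R')) (hS : Function.Injective (algebraMap S S'))
    (he' : SeparatesCoefficients e') {I : Ideal R} {g : S} (hg : g ≠ 0)
    (hgI : e.symm (MvPolynomial.C g) ∈ I.map MvPolynomial.C) : I = ⊤ := by
  obtain ⟨f, hf⟩ := IsPrincipalIdealRing.principal (I.map (algebraMap R R'))
  rw [← Ideal.span] at hf
  have hmap : MvPolynomial.map (algebraMap R R') (e.symm (MvPolynomial.C g)) ∈
      (I.map (algebraMap R R')).map (MvPolynomial.C (σ := σ)) := by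
    refine MvPolynomial.mem_map_C_iff.2 fun m ↦ ?_
    rw [MvPolynomial.coeff_map]
    exact Ideal.mem_map_of_mem _ (MvPolynomial.mem_map_C_iff.1 hgI m)
  rw [hf, Ideal.map_span, Set.image_singleton, Ideal.mem_span_singleton] at hmap
  have hdvd : e' (MvPolynomial.C f) ∣ MvPolynomial.C (algebraMap S S' g) := by
    have := map_dvd e' hmap
    rwa [hcompat, e.apply_symm_apply, MvPolynomial.map_C] at this
  have hg' : algebraMap S S' g ≠ 0 := (map_ne_zero_iff _ hS).2 hg
  obtain ⟨s, -, hfs⟩ := (MvPolynomial.dvd_C_iff_exists hg').1 hdvd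
  have hf0 : f ≠ 0 := by
    rintro rfl
    rw [map_zero, map_zero] at hdvd
    exact hg' (MvPolynomial.C_eq_zero.1 (zero_dvd_iff.1 hdvd))
  rw [← Ideal.map_eq_top_iff (algebraMap R R') hR
    (algebraMap_isIntegral_iff.2 inferInstance), hf]
  exact Ideal.span_singleton_eq_top.2 (isUnit_of_isAlgebraic (he' hfs) hf0)

lemma surjective_algebraMap_of_separatesCoefficients [IsPrincipalIdealRing R']
    (hR : IsNormalization R R') (hS : IsNormalization S S') (he' : SeparatesCoefficients e') :
    Function.Surjective (algebraMap R R') := fun z ↦ by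
  have := hR.isIntegral
  obtain ⟨g, hg, q, hq⟩ := hS.exists_C_mul_mem_range_map (e' (MvPolynomial.C z))
  have hz : MvPolynomial.C z * MvPolynomial.map (algebraMap R R') (e.symm (MvPolynomial.C g)) =
      MvPolynomial.map (algebraMap R R') (e.symm q) := e'.injective <| by
    rw [map_mul, hcompat, hcompat, e.apply_symm_apply, e.apply_symm_apply, MvPolynomial.map_C,
      mul_comm]
    exact hq.symm
  have hcolon :
      e.symm (MvPolynomial.C g) ∈ ((1 : Submodule R R').colon {z}).map MvPolynomial.C := by
    refine MvPolynomial.mem_map_C_iff.2 fun m ↦ Submodule.mem_colon_singleton.2 ?_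
    refine Submodule.mem_one.2 ⟨(e.symm q).coeff m, ?_⟩
    rw [← MvPolynomial.coeff_map, ← hz, MvPolynomial.coeff_C_mul, MvPolynomial.coeff_map,
      Algebra.smul_def, mul_comm]
  have htop := eq_top_of_symm_C_mem_map_C hcompat hR.injective hS.injective he' hg hcolon
  have hone := Submodule.mem_colon_singleton.1 ((Ideal.eq_top_iff_one _).1 htop)
  rwa [one_smul, Submodule.mem_one] at hone

end Conductor

section Conclusion

lemma IsPolynomialGenerator.isPrincipalIdealRing {k A : Type*} [Field k] [CommRing A] [IsDomain A]
    [Algebra k A] {u : A} (hu : IsPolynomialGenerator k u) : IsPrincipalIdealRing A :=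
  let := (isField_of_isIntegral_of_isField' (S := integralClosure k A) (Field.toIsField k)).toField
  .of_surjective _ hu.surjective

lemma nonempty_algEquiv_integralClosure_mvPolynomial (k σ A : Type*) [CommRing k] [CommRing A]
    [IsDomain A] [Algebra k A] :
    Nonempty (integralClosure k A ≃ₐ[k] integralClosure k (MvPolynomial σ A)) := by
  let ι : A →ₐ[k] MvPolynomial σ A := IsScalarTower.toAlgHom k A _
  have hι : Function.Injective ι := MvPolynomial.C_injective σ A
  refine ⟨.ofBijective ι.mapIntegralClosure
    ⟨fun x y h ↦ Subtype.ext (hι (congrArg Subtype.val h)), fun ⟨f, hf⟩ ↦ ?_⟩⟩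
  obtain ⟨a, rfl⟩ := mem_range_C_of_isAlgebraic (hf.tower_top (A := A)).isAlgebraic
  exact ⟨⟨a, (isIntegral_algHom_iff ι hι).1 hf⟩, rfl⟩

variable {k σ τ : Type*} [Field k]

lemma IsPolynomialGenerator.nonempty_algEquiv {A B : Type*} [CommRing A] [IsDomain A] [Algebra k A]
    [CommRing B] [IsDomain B] [Algebra k B] {u : A} {v : B} (hu : IsPolynomialGenerator k u)
    (hv : IsPolynomialGenerator k v) (e : MvPolynomial σ A ≃ₐ[k] MvPolynomial τ B) :
    Nonempty (A ≃ₐ[k] B) := by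
  obtain ⟨f⟩ := nonempty_algEquiv_integralClosure_mvPolynomial k σ A
  obtain ⟨g⟩ := nonempty_algEquiv_integralClosure_mvPolynomial k τ B
  exact ⟨((AlgEquiv.ofBijective _ hu).restrictScalars k).symm.trans <|
    (mapAlgEquiv (f.trans (e.mapIntegralClosure.trans g.symm))).trans <|
      (AlgEquiv.ofBijective _ hv).restrictScalars k⟩

namespace SeparatesCoefficients

lemma of_map_algebraMap {R R' S S' : Type*} [CommRing R] [Algebra k R] [Algebra.Transcendental k R]
    [CommRing R'] [IsDomain R'] [Algebra k R'] [Algebra R R'] [CommRing S]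
    [Algebra k S] [CommRing S'] [IsDomain S'] [Algebra S S'] [Algebra k S']
    {e : MvPolynomial σ R ≃ₐ[k] MvPolynomial τ S} (he : SeparatesCoefficients e)
    {e' : MvPolynomial σ R' ≃ₐ[k] MvPolynomial τ S'}
    (hcompat : ∀ p, e' (MvPolynomial.map (algebraMap R R') p) =
      MvPolynomial.map (algebraMap S S') (e p)) (hS : Function.Injective (algebraMap S S'))
    (hR' : Algebra.trdeg k R' ≤ 1) : SeparatesCoefficients e' := by
  intro r' s' h
  by_contra hr'
  obtain ⟨x, hx⟩ := Algebra.Transcendental.transcendental (R := k) (A := R)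
  let ι : R' →ₐ[k] MvPolynomial σ R' := IsScalarTower.toAlgHom k R' _
  have hxC := apply_mem_range_C_of_transcendental (θ := e'.toAlgHom.comp ι) hR'
    (e'.injective.comp (MvPolynomial.C_injective σ R')) hr' ⟨s', h.symm⟩ (algebraMap R R' x)
  have hcomp : e' (MvPolynomial.C (algebraMap R R' x)) =
      MvPolynomial.map (algebraMap S S') (e (MvPolynomial.C x)) := by
    rw [← hcompat, MvPolynomial.map_C]
  obtain ⟨s, hs⟩ := mem_range_C_of_map_mem_range_C hS (hcomp ▸ hxC)
  exact hx (he hs.symm)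

theorem nonempty_algEquiv [PerfectField k] {R S : Type*} [CommRing R] [IsDomain R] [Algebra k R]
    [CommRing S] [IsDomain S] [Algebra k S] {e : MvPolynomial σ R ≃ₐ[k] MvPolynomial τ S}
    (he : SeparatesCoefficients e) (hR : Algebra.trdeg k R = 1) (hS : Algebra.trdeg k S = 1) :
    Nonempty (R ≃ₐ[k] S) := by
  let R' := integralClosure R (FractionRing R)
  let S' := integralClosure S (FractionRing S)
  have hRR' : IsNormalization R R' := isNormalization_integralClosure R
  have hSS' : IsNormalization S S' := isNormalization_integralClosure S
  have hR' : Algebra.trdeg k R' = 1 := (trdeg_eq_one_iff_of_isAlgebraic k R).1 hR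
  have hS' : Algebra.trdeg k S' = 1 := (trdeg_eq_one_iff_of_isAlgebraic k S).1 hS
  have := hRR'.isIntegrallyClosed
  have := hSS'.isIntegrallyClosed
  have : Algebra.Transcendental k R := trdeg_ne_zero_iff.1 (hR.trans_ne one_ne_zero)
  obtain ⟨e', hcompat⟩ := hRR'.exists_algEquiv_mvPolynomial hSS' e
  have hcompat_symm (q : MvPolynomial τ S) : e'.symm (MvPolynomial.map (algebraMap S S') q) =
      MvPolynomial.map (algebraMap R R') (e.symm q) := by
    rw [e'.symm_apply_eq, hcompat, e.apply_symm_apply]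
  have he' : SeparatesCoefficients e' := he.of_map_algebraMap hcompat hSS'.injective hR'.le
  obtain ⟨u, hu⟩ := he'.exists_isPolynomialGenerator hR' hS'.le
  obtain ⟨v, hv⟩ := he'.symm.exists_isPolynomialGenerator hS' hR'.le
  have := hu.isPrincipalIdealRing
  have := hv.isPrincipalIdealRing
  have hsurjR : Function.Surjective (algebraMap R R') :=
    surjective_algebraMap_of_separatesCoefficients (e := (e : _ ≃+* _)) hcompat hRR' hSS' he'
  have hsurjS : Function.Surjective (algebraMap S S') :=
    surjective_algebraMap_of_separatesCoefficients (e := (e.symm : _ ≃+* _)) hcompat_symm hSS'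
      hRR' he'.symm
  obtain ⟨g⟩ := hu.nonempty_algEquiv hv e'
  exact ⟨(AlgEquiv.ofBijective (IsScalarTower.toAlgHom k R R') ⟨hRR'.injective, hsurjR⟩).trans <|
    g.trans (AlgEquiv.ofBijective (IsScalarTower.toAlgHom k S S') ⟨hSS'.injective, hsurjS⟩).symm⟩

end SeparatesCoefficients

end Conclusion

theorem cancellation_trdeg_one_general {k R S σ τ : Type*} [Field k] [PerfectField k] [CommRing R]
    [IsDomain R] [Algebra k R] [CommRing S] [IsDomain S] [Algebra k S]
    (hR : trdeg k (FractionRing R) = 1) (hS : trdeg k (FractionRing S) = 1)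
    (e : MvPolynomial σ R ≃ₐ[k] MvPolynomial τ S) : Nonempty (R ≃ₐ[k] S) := by
  have hR' : Algebra.trdeg k R = 1 := trdeg_fractionRing_eq_one_iff.1 hR
  have hS' : Algebra.trdeg k S = 1 := trdeg_fractionRing_eq_one_iff.1 hS
  rcases nonempty_algEquiv_or_separatesCoefficients hR'.le hS'.le e with h | he
  · exact h
  · exact he.nonempty_algEquiv hR' hS'

/-- (Abhyankar–Eakin–Heinzer; characteristic zero)  Let `k` be a field of characteristic
zero and let `R`, `S` be integral domains containing `k` of transcendence degree one over
`k`.  If for some `n ≥ 0` the polynomial rings `R[x_1,…,x_n]` and `S[y_1,…,y_n]` are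
isomorphic as `k`-algebras, then `R ≅ S` as `k`-algebras. -/
theorem cancellation_trdeg_one (k : Type*) [Field k] [CharZero k]
    (R : Type*) [CommRing R] [IsDomain R] [Algebra k R]
    (S : Type*) [CommRing S] [IsDomain S] [Algebra k S]
    (hR : trdeg k (FractionRing R) = 1) (hS : trdeg k (FractionRing S) = 1)
    (n : ℕ) (e : MvPolynomial (Fin n) R ≃ₐ[k] MvPolynomial (Fin n) S) :
    Nonempty (R ≃ₐ[k] S) :=
  cancellation_trdeg_one_general hR hS e
end

section
/- Let k ⊆ L be fields with k algebraically closed, L finitely generated as a field extension of k, and tr.deg_k L = 1. Suppose there exists a field E containing k and a transcendental element s over E such that L is (k-isomorphic to) an intermediate field k ⊆ L ⊆ E(s) of the rational function field E(s), with L ⊄ E. Then L is k-isomorphic to the rational function field k(t) in one variable over k. -/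
/-!
A `k`-valued place of `E`, finite on the coefficients of some `ψ a ∉ E` and on the inverse of a
minor of these coefficients witnessing `ψ a ∉ E`, extends by reduction of coefficients (Gauss) to a
`k(s)`-valued place of `E(s)` whose value at `ψ a` is transcendental over `k`. Pull this place back
along `ψ`: its valuation ring contains `k(a)`, over which `L` is algebraic, so, being integrally
closed, it is all of `L`. The place is thus a non-constant `k`-embedding `L → k(s)`, and Lüroth's
theorem over `k` applies.

Places with values in an algebraically closed `k` come from Zorn's lemma: a maximal non-unital
`k`-subalgebra not containing `1` is the maximal ideal of a valuation ring, and its residue field is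
algebraic over `k`, for otherwise the subalgebra could be enlarged by the polynomials without
constant term in a transcendental residue.
-/

open Polynomial

section Algebra

theorem liftAlgHom_mk'_eq_div {k R K : Type*} [CommRing k] [CommRing R] [Field K] [Algebra k R]
    [Algebra k K] {S : Submonoid R} {f : R →ₐ[k] K} (hf : ∀ q : S, IsUnit (f q)) (p : R) (q : S) :
    (IsLocalization.liftAlgHom (M := S) hf : Localization S →ₐ[k] K)
      (IsLocalization.mk' _ p q) = f p / f q := by
  rw [eq_div_iff (hf q).ne_zero, mul_comm]
  exact ((IsLocalization.lift_mk'_spec hf _ _ _).1 rfl).symm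

theorem exists_mapAlgHom_val_eq {k K : Type*} [CommRing k] [CommRing K] [Algebra k K]
    {O : Subalgebra k K} {p : K[X]} (h : ∀ x ∈ p.coeffs, x ∈ O) :
    ∃ p' : O[X], mapAlgHom O.val p' = p := by
  refine (mem_lifts (f := (O.val : O →+* K)) p).1 ((lifts_iff_coeff_lifts _).2 fun n ↦ ?_)
  by_cases hn : p.coeff n = 0
  · exact ⟨0, hn.symm⟩
  · exact ⟨⟨_, h _ (coeff_mem_coeffs hn)⟩, rfl⟩

theorem nonempty_algHom_of_finiteType (k A : Type*) [Field k] [IsAlgClosed k] [CommRing A]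
    [Nontrivial A] [Algebra k A] [Algebra.FiniteType k A] : Nonempty (A →ₐ[k] k) := by
  obtain ⟨M, hM⟩ := Ideal.exists_maximal A
  let := Ideal.Quotient.field M
  have := finite_of_finite_type_of_isJacobsonRing k (A ⧸ M)
  exact ⟨(IsAlgClosed.lift : A ⧸ M →ₐ[k] k).comp (Ideal.Quotient.mkₐ k M)⟩

theorem div_mem_range_C_iff {K : Type*} [Field K] {p q : K[X]} (hq : q.Monic) :
    algebraMap K[X] (RatFunc K) p / algebraMap K[X] (RatFunc K) q ∈ RatFunc.C.range ↔
      p = C (p.coeff q.natDegree) * q := by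
  have hq0 : algebraMap K[X] (RatFunc K) q ≠ 0 := RatFunc.algebraMap_ne_zero hq.ne_zero
  have eq_div_iff_eq_mul (c : K) :
      RatFunc.C c = algebraMap _ _ p / algebraMap _ _ q ↔ p = C c * q := by
    rw [eq_div_iff hq0, ← RatFunc.algebraMap_C, ← map_mul,
      (RatFunc.algebraMap_injective K).eq_iff, eq_comm]
  refine ⟨fun ⟨c, hc⟩ ↦ ?_, fun h ↦ ⟨_, (eq_div_iff_eq_mul _).2 h⟩⟩
  have hp := (eq_div_iff_eq_mul c).1 hc
  rwa [show p.coeff q.natDegree = c by rw [hp, coeff_C_mul, hq.coeff_natDegree, mul_one]]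

theorem nonempty_algEquiv_ratFunc {k L : Type*} [Field k] [Field L] [Algebra k L]
    (θ : L →ₐ[k] RatFunc k) {a : L} (ha : Transcendental k (θ a)) :
    Nonempty (L ≃ₐ[k] RatFunc k) := by
  have hθ : θ.fieldRange ≠ ⊥ := fun h ↦ by
    obtain ⟨c, hc⟩ := IntermediateField.mem_bot.1 (h ▸ θ.mem_fieldRange.2 ⟨a, rfl⟩)
    exact ha (hc ▸ isAlgebraic_algebraMap c)
  exact ⟨(AlgEquiv.ofInjectiveField θ).trans (RatFunc.Luroth.algEquiv hθ).symm⟩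

end Algebra

section NonUnitalSubalgebra

variable {k K F : Type*} [CommRing k] [CommRing K] [CommRing F] [Algebra k K] [Algebra k F]

theorem exists_le_maximal_one_notMem {n : NonUnitalSubalgebra k K} (hn : 1 ∉ n) :
    ∃ m, n ≤ m ∧ Maximal (1 ∉ ·) m := by
  refine zorn_le_nonempty₀ {n : NonUnitalSubalgebra k K | 1 ∉ n} (fun c hc hchain y hy ↦ ?_) n hn
  have : Nonempty c := ⟨⟨y, hy⟩⟩
  refine ⟨⨆ i : c, i.1, ?_, fun z hz ↦ le_iSup (fun i : c ↦ i.1) ⟨z, hz⟩⟩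
  rw [Set.mem_ofPred_eq, ← SetLike.mem_coe,
    NonUnitalSubalgebra.coe_iSup_of_directed hchain.directed, Set.mem_iUnion]
  rintro ⟨i, hi⟩
  exact hc i.2 hi

theorem exists_nonUnitalSubalgebra_mem_one_notMem [Nontrivial k] {t : F}
    (ht : Transcendental k t) : ∃ n : NonUnitalSubalgebra k F, t ∈ n ∧ 1 ∉ n := by
  refine ⟨((⊥ : NonUnitalSubalgebra k k).comap (aeval (0 : k))).map (aeval t), ?_, fun h ↦ ?_⟩
  · exact NonUnitalSubalgebra.mem_map.2 ⟨X, by simp [NonUnitalSubalgebra.mem_comap], by simp⟩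
  · obtain ⟨p, hp, hpt⟩ := NonUnitalSubalgebra.mem_map.1 h
    have hp1 : p = 1 := transcendental_iff_injective.1 ht (by rw [hpt, map_one])
    rw [NonUnitalSubalgebra.mem_comap, hp1, map_one] at hp
    exact one_ne_zero (NonUnitalAlgebra.mem_bot.1 hp)

/-- The preimage of `n` under a homomorphism `ρ` defined only on the subalgebra `O`. With `n = ⊥`
it is the kernel of `ρ`, as a subset of `K`. -/
def nonUnitalComap {O : Subalgebra k K} (ρ : O →ₐ[k] F) (n : NonUnitalSubalgebra k F) :
    NonUnitalSubalgebra k K :=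
  (n.comap ρ).map O.val

variable {O : Subalgebra k K} {ρ : O →ₐ[k] F} {n n' : NonUnitalSubalgebra k F}

theorem mem_nonUnitalComap {x : K} : x ∈ nonUnitalComap ρ n ↔ ∃ h : x ∈ O, ρ ⟨x, h⟩ ∈ n := by
  simp [nonUnitalComap, NonUnitalSubalgebra.mem_map, NonUnitalSubalgebra.mem_comap]

theorem mem_nonUnitalComap_bot {x : K} :
    x ∈ nonUnitalComap ρ ⊥ ↔ ∃ h : x ∈ O, ρ ⟨x, h⟩ = 0 := by
  simp only [mem_nonUnitalComap, NonUnitalAlgebra.mem_bot]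

theorem one_mem_nonUnitalComap : 1 ∈ nonUnitalComap ρ n ↔ 1 ∈ n := by
  rw [mem_nonUnitalComap]
  exact ⟨fun ⟨_, h⟩ ↦ map_one ρ ▸ h, fun h ↦ ⟨one_mem O, (map_one ρ).symm ▸ h⟩⟩

theorem one_notMem_nonUnitalComap_bot [Nontrivial F] : 1 ∉ nonUnitalComap ρ ⊥ := by
  rw [one_mem_nonUnitalComap, NonUnitalAlgebra.mem_bot]
  exact one_ne_zero

theorem nonUnitalComap_mono (h : n ≤ n') : nonUnitalComap ρ n ≤ nonUnitalComap ρ n' := fun _ hx ↦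
  have ⟨hO, hn⟩ := mem_nonUnitalComap.1 hx
  mem_nonUnitalComap.2 ⟨hO, h hn⟩

end NonUnitalSubalgebra

/-- An `F`-valued place of `K` over `k`: a `k`-algebra homomorphism to `F` from a subring of `K`
that sends to `0` the inverse of every element of `K` outside the subring. The subring is then a
valuation ring of `K`. -/
structure Place (k K F : Type*) [CommRing k] [Field K] [Field F] [Algebra k K] [Algebra k F] where
  /-- The elements at which the place is finite. -/
  domain : Subalgebra k K
  /-- The value of the place at the elements of its domain. -/
  toAlgHom : domain →ₐ[k] F
  map_inv_of_notMem : ∀ x ∉ domain, ∃ h : x⁻¹ ∈ domain, toAlgHom ⟨x⁻¹, h⟩ = 0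

namespace Place

section Constructions

variable {k K L R F F' : Type*} [CommRing k] [Field K] [Field L] [CommRing R] [Field F] [Field F']
  [Algebra k K] [Algebra k L] [Algebra k R] [Algebra k F] [Algebra k F']

/-- The restriction of a place along a field embedding. -/
def comap (P : Place k K F) (ψ : L →ₐ[k] K) : Place k L F where
  domain := P.domain.comap ψ
  toAlgHom := P.toAlgHom.comp ((ψ.comp (P.domain.comap ψ).val).codRestrict _ Subtype.prop)
  map_inv_of_notMem x hx := by
    have h := P.map_inv_of_notMem (ψ x) hx
    rw [← map_inv₀ ψ] at h
    exact h

/-- The place obtained by extending the field of values. -/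
def map (P : Place k K F) (σ : F →ₐ[k] F') : Place k K F' where
  domain := P.domain
  toAlgHom := σ.comp P.toAlgHom
  map_inv_of_notMem x hx := by
    obtain ⟨h, h0⟩ := P.map_inv_of_notMem x hx
    exact ⟨h, by rw [AlgHom.comp_apply, h0, map_zero]⟩

/-- The place of a valuation ring `O` of `K` with values in its residue field. -/
noncomputable def residue (O : Subalgebra k K) [IsLocalRing O] (h : ∀ x ∉ O, x⁻¹ ∈ O) :
    Place k K (IsLocalRing.ResidueField O) where
  domain := O
  toAlgHom := IsScalarTower.toAlgHom k O (IsLocalRing.ResidueField O)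
  map_inv_of_notMem x hx := by
    refine ⟨h x hx, (IsLocalRing.residue_eq_zero_iff _).2 fun hu ↦ hx ?_⟩
    obtain ⟨y, hy⟩ := hu.exists_right_inv
    have hxy : x⁻¹ * y = 1 := congrArg Subtype.val hy
    rw [← inv_inv x, ← eq_inv_of_mul_eq_one_right hxy]
    exact y.2

/-- The place given by `π`, with domain the isomorphic copy `ι.range` of `R` in `K`. -/
noncomputable def ofInjective (ι : R →ₐ[k] K) (π : R →ₐ[k] F) (hι : Function.Injective ι)
    (h : ∀ x ∉ ι.range, ∃ z, ι z = x⁻¹ ∧ π z = 0) : Place k K F where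
  domain := ι.range
  toAlgHom := π.comp (AlgEquiv.ofInjective ι hι).symm
  map_inv_of_notMem x hx := by
    obtain ⟨z, hz, h0⟩ := h x hx
    have hsymm : (AlgEquiv.ofInjective ι hι).symm ⟨x⁻¹, z, hz⟩ = z :=
      (AlgEquiv.symm_apply_eq _).2 (Subtype.ext hz.symm)
    exact ⟨⟨z, hz⟩, (congrArg π hsymm).trans h0⟩

theorem toAlgHom_ofInjective (ι : R →ₐ[k] K) (π : R →ₐ[k] F) (hι : Function.Injective ι)
    (h : ∀ x ∉ ι.range, ∃ z, ι z = x⁻¹ ∧ π z = 0) (z : R) :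
    (ofInjective ι π hι h).toAlgHom ⟨ι z, z, rfl⟩ = π z :=
  congrArg π ((AlgEquiv.ofInjective ι hι).symm_apply_apply z)

-- The domain is the localization of `f.range ≃ R` at the complement of `ker g`.
theorem exists_map_eq (f : R →ₐ[k] K) (g : R →ₐ[k] F) (hf : Function.Injective f)
    (h : ∀ x, ∃ p q, x = f p / f q ∧ (g p ≠ 0 ∨ g q ≠ 0)) :
    ∃ P : Place k K F, ∀ r, ∃ hr : f r ∈ P.domain, P.toAlgHom ⟨f r, hr⟩ = g r := by
  let S : Submonoid R := (nonZeroDivisors F).comap g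
  have hgS (q : S) : IsUnit (g q) := (nonZeroDivisors.ne_zero q.2).isUnit
  have hfS (q : S) : IsUnit (f q) :=
    ((map_ne_zero_iff f hf).2 fun h0 ↦ (hgS q).ne_zero (by rw [h0, map_zero])).isUnit
  let ι : Localization S →ₐ[k] K := IsLocalization.liftAlgHom (M := S) hfS
  let π : Localization S →ₐ[k] F := IsLocalization.liftAlgHom (M := S) hgS
  have hι_algebraMap (r : R) : ι (algebraMap R _ r) = f r := IsLocalization.lift_eq hfS r
  have hπ_algebraMap (r : R) : π (algebraMap R _ r) = g r := IsLocalization.lift_eq hgS r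
  have hι : Function.Injective ι := (IsLocalization.lift_injective_iff hfS).2 fun p q ↦
    ⟨fun hpq ↦ (hι_algebraMap p).symm.trans ((congrArg ι hpq).trans (hι_algebraMap q)),
      fun hpq ↦ congrArg _ (hf hpq)⟩
  have hinv (x : K) (hx : x ∉ ι.range) : ∃ z, ι z = x⁻¹ ∧ π z = 0 := by
    obtain ⟨p, q, rfl, hpq⟩ := h x
    have hq : g q = 0 := of_not_not fun hq ↦
      hx ⟨_, liftAlgHom_mk'_eq_div hfS p ⟨q, mem_nonZeroDivisors_of_ne_zero hq⟩⟩
    have hp : p ∈ S := mem_nonZeroDivisors_of_ne_zero (hpq.resolve_right (not_not.2 hq))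
    refine ⟨IsLocalization.mk' _ q ⟨p, hp⟩, ?_, ?_⟩
    · rw [liftAlgHom_mk'_eq_div, inv_div]
    · rw [liftAlgHom_mk'_eq_div, hq, zero_div]
  refine ⟨ofInjective ι π hι hinv, fun r ↦ ?_⟩
  rw [← hι_algebraMap, ← hπ_algebraMap]
  exact ⟨⟨_, rfl⟩, toAlgHom_ofInjective ι π hι hinv _⟩

end Constructions

section Domain

variable {k K F : Type*} [CommRing k] [Field K] [Field F] [Algebra k K] [Algebra k F]
  (P : Place k K F)

/-- The domain of a place as a valuation ring. -/
def valuationSubring : ValuationSubring K :=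
  .ofSubring P.domain.toSubring fun x ↦
    or_iff_not_imp_left.2 fun hx ↦ (P.map_inv_of_notMem x hx).1

theorem mem_valuationSubring {x : K} : x ∈ P.valuationSubring ↔ x ∈ P.domain := Iff.rfl

theorem exists_forall_inv_mul_mem {s : Finset K} (hs : s.Nonempty) :
    ∃ c ∈ s, ∀ x ∈ s, c⁻¹ * x ∈ P.domain := by
  obtain ⟨c, hc, hmax⟩ := s.exists_max_image P.valuationSubring.valuation hs
  refine ⟨c, hc, fun x hx ↦ P.mem_valuationSubring.1 ?_⟩
  rw [← ValuationSubring.valuation_le_one_iff, map_mul, map_inv₀]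
  exact inv_mul_le_one_of_le₀ (hmax x hx) zero_le

theorem mem_of_isIntegral {x : K} (hx : IsIntegral P.domain x) : x ∈ P.domain := by
  have hx' : IsIntegral P.valuationSubring x := hx
  obtain ⟨y, rfl⟩ := IsIntegrallyClosed.isIntegral_iff.1 hx'
  exact y.2

theorem inv_mem_of_map_ne_zero {x : P.domain} (hx : P.toAlgHom x ≠ 0) : (x : K)⁻¹ ∈ P.domain := by
  by_contra h
  obtain ⟨_, h0⟩ := P.map_inv_of_notMem _ h
  exact hx (by simpa only [inv_inv] using h0)

theorem div_mem_of_map_ne_zero (x : P.domain) {y : P.domain} (hy : P.toAlgHom y ≠ 0) :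
    (x / y : K) ∈ P.domain :=
  div_eq_mul_inv (x : K) y ▸ mul_mem x.2 (P.inv_mem_of_map_ne_zero hy)

theorem map_div (x : P.domain) {y : P.domain} (hy : P.toAlgHom y ≠ 0) :
    P.toAlgHom ⟨x / y, P.div_mem_of_map_ne_zero x hy⟩ = P.toAlgHom x / P.toAlgHom y := by
  have hy0 : (y : K) ≠ 0 := fun h0 ↦ hy (by rw [Subtype.ext (a1 := y) (a2 := 0) h0, map_zero])
  rw [eq_div_iff hy, ← map_mul]
  exact congrArg _ (Subtype.ext (div_mul_cancel₀ _ hy0))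

end Domain

section TranscendenceDegree

variable {k K F : Type*} [Field k] [Field K] [Field F] [Algebra k K] [Algebra k F]
  (P : Place k K F) {a : P.domain}

theorem adjoin_le_domain (ha : Transcendental k (P.toAlgHom a)) :
    (IntermediateField.adjoin k {(a : K)}).toSubalgebra ≤ P.domain := by
  intro x hx
  obtain ⟨r, s, rfl⟩ := (IntermediateField.mem_adjoin_simple_iff k x).1 hx
  obtain rfl | hs := eq_or_ne s 0
  · simp
  · have hmap : P.toAlgHom (aeval a s) ≠ 0 := by
      rw [← aeval_algHom_apply]
      exact (transcendental_iff.1 ha s).mt hs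
    simpa only [aeval_subalgebra_coe] using P.div_mem_of_map_ne_zero (aeval a r) hmap

theorem domain_eq_top_of_trdeg_le_one (htr : Algebra.trdeg k K ≤ 1)
    (ha : Transcendental k (P.toAlgHom a)) : P.domain = ⊤ := by
  have haK : Transcendental k (a : K) :=
    (transcendental_algebraMap_iff Subtype.val_injective).2 fun h ↦ ha (h.algHom P.toAlgHom)
  have hbasis : IsTranscendenceBasis k fun _ : Unit ↦ (a : K) :=
    (algebraicIndependent_unique_type_iff.2 haK).isTranscendenceBasis_of_lift_trdeg_le_of_finite
      (by simpa using htr)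
  have halg : Algebra.IsAlgebraic (IntermediateField.adjoin k {(a : K)}) K := by
    have := hbasis.isAlgebraic_field
    rwa [Set.range_const] at this
  refine eq_top_iff.2 fun x _ ↦ P.mem_of_isIntegral ?_
  obtain ⟨p, hp, hpx⟩ := (halg.isAlgebraic x).isIntegral
  refine ⟨p.map (Subalgebra.inclusion (P.adjoin_le_domain ha)).toRingHom, hp.map _, ?_⟩
  rw [eval₂_map]
  exact hpx

end TranscendenceDegree

section GaussExtension

variable {k K F : Type*} [CommRing k] [Field K] [Field F] [Algebra k K] [Algebra k F]
  (P : Place k K F)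

theorem exists_mapAlgHom_eq_C_inv_mul {p : K[X]} {c : K}
    (h : ∀ x ∈ p.coeffs, c⁻¹ * x ∈ P.domain) :
    ∃ p' : P.domain[X], mapAlgHom P.domain.val p' = C c⁻¹ * p ∧
      (c ∈ p.coeffs → mapAlgHom P.toAlgHom p' ≠ 0) := by
  obtain ⟨p', hp'⟩ : ∃ p' : P.domain[X], mapAlgHom P.domain.val p' = C c⁻¹ * p := by
    refine exists_mapAlgHom_val_eq fun x hx ↦ ?_
    obtain ⟨n, hn, rfl⟩ := mem_coeffs_iff.1 hx
    rw [mem_support_iff, coeff_C_mul] at hn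
    rw [coeff_C_mul]
    exact h _ (coeff_mem_coeffs (right_ne_zero_of_mul hn))
  refine ⟨p', hp', fun hc h0 ↦ ?_⟩
  obtain ⟨n, hn, rfl⟩ := mem_coeffs_iff.1 hc
  have hone : p'.coeff n = 1 := Subtype.ext <| by
    simpa [mem_support_iff.1 hn] using congrArg (coeff · n) hp'
  simpa [hone] using congrArg (coeff · n) h0

theorem exists_primitive_pair (p : K[X]) {q : K[X]} (hq : q ≠ 0) :
    ∃ c : K, c ≠ 0 ∧ ∃ p' q' : P.domain[X],
      mapAlgHom P.domain.val p' = C c⁻¹ * p ∧ mapAlgHom P.domain.val q' = C c⁻¹ * q ∧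
        (mapAlgHom P.toAlgHom p' ≠ 0 ∨ mapAlgHom P.toAlgHom q' ≠ 0) := by
  classical
  obtain ⟨c, hc, hmul⟩ :=
    P.exists_forall_inv_mul_mem (s := p.coeffs ∪ q.coeffs) (coeffs_nonempty_iff.2 hq).inr
  rw [Finset.forall_mem_union] at hmul
  have hc0 : c ≠ 0 := by
    rintro rfl
    simp [mem_coeffs_iff, eq_comm] at hc
  obtain ⟨p', hp', hp0⟩ := P.exists_mapAlgHom_eq_C_inv_mul hmul.1
  obtain ⟨q', hq', hq0⟩ := P.exists_mapAlgHom_eq_C_inv_mul hmul.2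
  exact ⟨c, hc0, p', q', hp', hq', (Finset.mem_union.1 hc).imp hp0 hq0⟩

theorem exists_gaussExtension : ∃ Q : Place k (RatFunc K) (RatFunc F), ∀ p : P.domain[X],
    ∃ hp : algebraMap K[X] (RatFunc K) (mapAlgHom P.domain.val p) ∈ Q.domain,
      Q.toAlgHom ⟨_, hp⟩ = algebraMap F[X] (RatFunc F) (mapAlgHom P.toAlgHom p) := by
  refine exists_map_eq
    ((IsScalarTower.toAlgHom k K[X] (RatFunc K)).comp (mapAlgHom P.domain.val))
    ((IsScalarTower.toAlgHom k F[X] (RatFunc F)).comp (mapAlgHom P.toAlgHom))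
    ((RatFunc.algebraMap_injective K).comp (map_injective _ Subtype.val_injective)) fun x ↦ ?_
  obtain ⟨c, hc, p, q, hp, hq, hpq⟩ := P.exists_primitive_pair x.num x.denom_ne_zero
  refine ⟨p, q, ?_, hpq.imp RatFunc.algebraMap_ne_zero RatFunc.algebraMap_ne_zero⟩
  have hC : algebraMap K[X] (RatFunc K) (C c⁻¹) ≠ 0 :=
    RatFunc.algebraMap_ne_zero (C_ne_zero.2 (inv_ne_zero hc))
  change x = algebraMap _ _ (mapAlgHom P.domain.val p) / algebraMap _ _ (mapAlgHom P.domain.val q)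
  rw [hp, hq, map_mul, map_mul, mul_div_mul_left _ _ hC, RatFunc.num_div_denom]

end GaussExtension

section Existence

universe u

variable {k : Type*} {K : Type u} [Field k] [Field K] [Algebra k K]

theorem exists_valuationSubring_of_one_notMem {m : NonUnitalSubalgebra k K} (hm : 1 ∉ m) :
    ∃ B : ValuationSubring K, (∀ c, algebraMap k K c ∈ B) ∧ ∀ x ∈ m, x ∈ B.nonunits := by
  let A : Subring K :=
    { carrier := {x | ∀ y ∈ m, x * y ∈ m}
      mul_mem' := fun ha hb y hy ↦ by simpa only [mul_assoc] using ha _ (hb y hy)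
      one_mem' := fun y hy ↦ by simpa only [one_mul] using hy
      add_mem' := fun ha hb y hy ↦ by simpa only [add_mul] using add_mem (ha y hy) (hb y hy)
      zero_mem' := fun y _ ↦ by simp only [zero_mul, zero_mem]
      neg_mem' := fun ha y hy ↦ by simpa only [neg_mul] using neg_mem (ha y hy) }
  let I : Ideal A :=
    { carrier := {x | (x : K) ∈ m}
      add_mem' := add_mem (S := NonUnitalSubalgebra k K)
      zero_mem' := zero_mem m
      smul_mem' := fun a x hx ↦ a.2 _ hx }
  obtain ⟨B, hAB, hIB⟩ := Ideal.image_subset_nonunits_valuationSubring I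
    ((Ideal.ne_top_iff_one I).2 hm)
  refine ⟨B, fun c ↦ hAB fun y hy ↦ ?_, fun x hx ↦ hIB ⟨⟨x, fun y hy ↦ mul_mem hx hy⟩, hx, rfl⟩⟩
  rw [← Algebra.smul_def]
  exact SMulMemClass.smul_mem c hy

theorem exists_surjective_ker_eq {m : NonUnitalSubalgebra k K} (hm : Maximal (1 ∉ ·) m) :
    ∃ (F : Type u) (_ : Field F) (_ : Algebra k F) (P : Place k K F),
      Function.Surjective P.toAlgHom ∧ nonUnitalComap P.toAlgHom ⊥ = m := by
  obtain ⟨B, hkB, hmB⟩ := exists_valuationSubring_of_one_notMem hm.prop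
  let O : Subalgebra k K := { B.toSubring with algebraMap_mem' := hkB }
  have : IsLocalRing O := inferInstanceAs (IsLocalRing B)
  have hsurj : Function.Surjective (IsLocalRing.residue O) := IsLocalRing.residue_surjective
  refine ⟨_, _, _, residue O fun x hx ↦ (B.mem_or_inv_mem x).resolve_left hx, hsurj,
    (hm.eq_of_le one_notMem_nonUnitalComap_bot fun x hx ↦ mem_nonUnitalComap_bot.2 ?_).symm⟩
  obtain ⟨hxB, hx⟩ := ValuationSubring.mem_nonunits_iff_exists_mem_maximalIdeal.1 (hmB x hx)
  exact ⟨hxB, (IsLocalRing.residue_eq_zero_iff (R := O) _).2 hx⟩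

theorem isAlgebraic_of_maximal_ker {F : Type*} [Field F] [Algebra k F] {P : Place k K F}
    (hP : Function.Surjective P.toAlgHom) (hmax : Maximal (1 ∉ ·) (nonUnitalComap P.toAlgHom ⊥)) :
    Algebra.IsAlgebraic k F := by
  refine ⟨fun t ↦ of_not_not fun ht ↦ ?_⟩
  obtain ⟨n, htn, hn⟩ := exists_nonUnitalSubalgebra_mem_one_notMem ht
  obtain ⟨x, rfl⟩ := hP t
  have hle : nonUnitalComap P.toAlgHom n ≤ nonUnitalComap P.toAlgHom ⊥ :=
    hmax.le_of_ge (one_mem_nonUnitalComap.not.2 hn) (nonUnitalComap_mono bot_le)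
  obtain ⟨_, hx⟩ := mem_nonUnitalComap_bot.1 (hle (mem_nonUnitalComap.2 ⟨x.2, htn⟩))
  exact ht (hx ▸ isAlgebraic_zero)

variable [IsAlgClosed k]

theorem exists_ker_eq {m : NonUnitalSubalgebra k K} (hm : Maximal (1 ∉ ·) m) :
    ∃ P : Place k K k, nonUnitalComap P.toAlgHom ⊥ = m := by
  obtain ⟨F, _, _, P, hP, rfl⟩ := exists_surjective_ker_eq hm
  have := isAlgebraic_of_maximal_ker hP hm
  let σ : F →ₐ[k] k := IsAlgClosed.lift
  refine ⟨P.map σ, NonUnitalSubalgebra.ext fun x ↦ ?_⟩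
  rw [mem_nonUnitalComap_bot, mem_nonUnitalComap_bot]
  exact exists_congr fun _ ↦ map_eq_zero_iff σ σ.injective

theorem exists_forall_mem_domain (s : Finset K) : ∃ P : Place k K k, ∀ x ∈ s, x ∈ P.domain := by
  let A : Subalgebra k K := Algebra.adjoin k s
  have : Algebra.FiniteType k A :=
    (Subalgebra.fg_iff_finiteType _).1 (Subalgebra.fg_adjoin_finset s)
  obtain ⟨σ⟩ := nonempty_algHom_of_finiteType k A
  obtain ⟨m, hσm, hm⟩ := exists_le_maximal_one_notMem (one_notMem_nonUnitalComap_bot (ρ := σ))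
  obtain ⟨P, rfl⟩ := exists_ker_eq hm
  refine ⟨P, fun x hx ↦ ?_⟩
  let y : A := ⟨x, Algebra.subset_adjoin hx⟩
  have hσy : σ (y - algebraMap k A (σ y)) = 0 := by
    rw [map_sub, AlgHom.commutes, Algebra.algebraMap_self_apply, sub_self]
  have hsub : x - algebraMap k K (σ y) ∈ P.domain :=
    (mem_nonUnitalComap_bot.1 (hσm (mem_nonUnitalComap_bot.2 ⟨_, hσy⟩))).1
  simpa only [sub_add_cancel] using add_mem hsub (P.domain.algebraMap_mem (σ y))

end Existence

section Nonconstant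

variable {k E : Type*} [Field k] [IsAlgClosed k] [Field E] [Algebra k E]

theorem exists_map_ne_C_mul {p q : E[X]} (n : ℕ) (h : p ≠ C (p.coeff n) * q) :
    ∃ (P : Place k E k) (p' q' : P.domain[X]),
      mapAlgHom P.domain.val p' = p ∧ mapAlgHom P.domain.val q' = q ∧
        mapAlgHom P.toAlgHom p' ≠
          C ((mapAlgHom P.toAlgHom p').coeff n) * mapAlgHom P.toAlgHom q' := by
  classical
  obtain ⟨i, hi⟩ : ∃ i, p.coeff i - p.coeff n * q.coeff i ≠ 0 := by
    contrapose! h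
    exact Polynomial.ext fun i ↦ by rw [coeff_C_mul, sub_eq_zero.1 (h i)]
  obtain ⟨P, hP⟩ := exists_forall_mem_domain (k := k)
    (insert (p.coeff i - p.coeff n * q.coeff i)⁻¹ (p.coeffs ∪ q.coeffs))
  simp only [Finset.forall_mem_insert, Finset.forall_mem_union] at hP
  obtain ⟨hinv, hpP, hqP⟩ := hP
  obtain ⟨p', rfl⟩ := exists_mapAlgHom_val_eq hpP
  obtain ⟨q', rfl⟩ := exists_mapAlgHom_val_eq hqP
  refine ⟨P, p', q', rfl, rfl, fun heq ↦ ?_⟩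
  have hzero : P.toAlgHom (p'.coeff i - p'.coeff n * q'.coeff i) = 0 := by
    simpa [sub_eq_zero] using congrArg (coeff · i) heq
  have hone : (p'.coeff i - p'.coeff n * q'.coeff i) * ⟨_, hinv⟩ = 1 := by
    refine Subtype.ext ((congrArg (· * _) ?_).trans (mul_inv_cancel₀ hi))
    simp
  simpa [hzero] using congrArg P.toAlgHom hone

theorem exists_transcendental_map {a : RatFunc E} (ha : a ∉ RatFunc.C.range) :
    ∃ (Q : Place k (RatFunc E) (RatFunc k)) (h : a ∈ Q.domain),
      Transcendental k (Q.toAlgHom ⟨a, h⟩) := by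
  have hnum : a.num ≠ C (a.num.coeff a.denom.natDegree) * a.denom :=
    (div_mem_range_C_iff a.monic_denom).not.1 (a.num_div_denom.symm ▸ ha)
  obtain ⟨P, p, q, hp, hq, hpq⟩ := exists_map_ne_C_mul (k := k) _ hnum
  have hqE : (mapAlgHom P.domain.val q).Monic := hq ▸ a.monic_denom
  have hqP : q.Monic := monic_of_injective (f := (P.domain.val : P.domain →+* E))
    Subtype.val_injective hqE
  have hqk : (mapAlgHom P.toAlgHom q).Monic := hqP.map _
  have hdeg : a.denom.natDegree = (mapAlgHom P.toAlgHom q).natDegree := by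
    rw [← hq]
    exact (hqP.natDegree_map _).trans (hqP.natDegree_map _).symm
  obtain ⟨Q, hQ⟩ := P.exists_gaussExtension
  obtain ⟨hpQ, hQp⟩ := hQ p
  obtain ⟨hqQ, hQq⟩ := hQ q
  have hQq0 : Q.toAlgHom ⟨_, hqQ⟩ ≠ 0 := hQq ▸ RatFunc.algebraMap_ne_zero hqk.ne_zero
  obtain rfl : algebraMap _ _ (mapAlgHom P.domain.val p) /
      algebraMap _ _ (mapAlgHom P.domain.val q) = a := by rw [hp, hq, a.num_div_denom]
  refine ⟨Q, Q.div_mem_of_map_ne_zero ⟨_, hpQ⟩ hQq0,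
    RatFunc.transcendental_of_ne_C _ fun ⟨c, hc⟩ ↦ hpq ?_⟩
  rw [hdeg, ← div_mem_range_C_iff hqk, ← hQp, ← hQq, ← Q.map_div ⟨_, hpQ⟩ hQq0, hc]
  exact ⟨c, rfl⟩

end Nonconstant

end Place

theorem luroth_nagata_general (k L : Type*) [Field k] [IsAlgClosed k] [Field L] [Algebra k L]
    (htr : Algebra.trdeg k L ≤ 1) (E : Type*) [Field E] [Algebra k E] (ψ : L →ₐ[k] RatFunc E)
    (hnc : ∃ a : L, ψ a ∉ (RatFunc.C : E →+* RatFunc E).range) :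
    Nonempty (L ≃ₐ[k] RatFunc k) := by
  obtain ⟨a, ha⟩ := hnc
  obtain ⟨Q, haQ, hQ⟩ := Place.exists_transcendental_map (k := k) ha
  let P : Place k L (RatFunc k) := Q.comap ψ
  have haP : Transcendental k (P.toAlgHom ⟨a, haQ⟩) := hQ
  have htop : P.domain = ⊤ := P.domain_eq_top_of_trdeg_le_one htr haP
  let θ : L →ₐ[k] RatFunc k :=
    P.toAlgHom.comp ((AlgHom.id k L).codRestrict P.domain fun x ↦ htop ▸ Algebra.mem_top)
  exact nonempty_algEquiv_ratFunc θ (a := a) haP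

/-- Let `k ⊆ L` be fields with `k` algebraically closed, `L` finitely generated over `k`
and `tr.deg_k L = 1`.  If there are a field `E ⊇ k` and a `k`-embedding of `L` into the
rational function field `E(s)` with image not contained in `E`, then `L ≅ k(t)`, the
rational function field in one variable over `k`. -/
theorem luroth_nagata (k L : Type*) [Field k] [IsAlgClosed k] [Field L] [Algebra k L]
    (hfg : ∃ s : Finset L, IntermediateField.adjoin k (s : Set L) = ⊤)
    (htr : trdeg k L = 1)
    (E : Type*) [Field E] [Algebra k E]
    (ψ : L →ₐ[k] RatFunc E)
    (hnc : ∃ a : L, ψ a ∉ (RatFunc.C : E →+* RatFunc E).range) :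
    Nonempty (L ≃ₐ[k] RatFunc k) :=
  luroth_nagata_general k L htr.le E ψ hnc
end
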